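/- arXiv:1202.4539 — 2 statements merged into one kernel-verified Lean document; each statement's English description precedes it below -/
import Mathlib

section
/- The set { (θ_1, θ_2) ∈ ℝ² : inf_{x ∈ ℤ, x ≥ 3} x · (log x) · (log log x) · ‖θ_1 x‖ · ‖θ_2 x‖ > 0 } has Hausdorff dimension equal to 2. Moreover, if θ_1 is a real number with inf_{q ∈ ℤ_{>0}} q‖qθ_1‖ > 0, then the set { θ_2 ∈ ℝ : inf_{x ∈ ℤ, x ≥ 3} x · (log x) · (log log x) · ‖θ_1 x‖ · ‖θ_2 x‖ > 0 } has Hausdorff dimension equal to 1. -/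
open Filter

/-- Distance from a real number to the nearest integer. -/
noncomputable def nint (x : ℝ) : ℝ := |x - round x|

/-!
Let `θ` be badly approximable with constant `c`. The slice over `θ` is approached by a Cantor
construction: at step `n` one removes from an `n`-th subdivision of `[0, 1]` the cells close to
those fractions `p / x` whose height `x ^ 2 * nint (x * θ) / c` is comparable with the number of
cells.

The removed cells are sparse below every surviving ancestor `J`, for the following reason. The
fractions near `J` with `x` and the height in fixed dyadic ranges are points `(x, y, p)` of `ℤ³` in
a box. If they span space, a volume bound makes them few. Otherwise, if they are many, two of them
are close by the pigeonhole principle, and their difference is a denominator `d` of much smaller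
height with `d * nint (d * θ) * nint (d * β)` tiny at a point `β` of `J`. But then `J` would have
been removed earlier. The pairs of dyadic ranges handled at step `n`, about `n * log n * log n` in
number, together cost the factor `log x * log (log x)`.

A tree whose removed nodes are sparse contains a regular subtree keeping an eighth of the children
of each node, so the surviving set has a Cantor parametrisation by `[0, 1)` whose inverse is Hölder
of every exponent below `1`. The same construction in one dimension parametrises the badly
approximable numbers, and integrating over this parameter, as in Marstrand's slicing theorem, adds
the dimension of the slices to that of the base.
-/

section CantorTree

/-- The numbers with quotient `a` by `N`. Nodes of each level of a tree are numbered so that the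
descendants of a node, at any lower level, form such a block. -/
def block (N a : ℕ) : Finset ℕ := Finset.Ico (a * N) ((a + 1) * N)

lemma mem_block {N a b : ℕ} (hN : 0 < N) : b ∈ block N a ↔ b / N = a := by
  rw [block, Finset.mem_Ico, Nat.div_eq_iff hN, add_one_mul]
  omega

lemma card_block (N a : ℕ) : (block N a).card = N := by
  rw [block, Nat.card_Ico, add_one_mul, Nat.add_sub_cancel_left]

/-- The number of descendants at level `n` of a node of level `m`, in a tree where each node of
level `i` has `R i` children. Thus `branching R 0 n` is the number of nodes of level `n`. -/
def branching (R : ℕ → ℕ) (m n : ℕ) : ℕ := ∏ i ∈ Finset.Ico m n, R i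

/-- A node survives if neither it nor any of its ancestors has been removed, where `Bad n` is the
set of nodes removed at level `n + 1`. The children of the node `a` of level `n` are
`block (R n) a`. -/
def IsAlive (R : ℕ → ℕ) (Bad : ℕ → Set ℕ) : ℕ → ℕ → Prop
  | 0, a => a = 0
  | n + 1, a => IsAlive R Bad n (a / R n) ∧ a ∉ Bad n

open scoped Classical in
/-- A node is rich to depth `k` if it is the root of a subtree of depth `k` of alive nodes in which
every node keeps at least a quarter of its children. -/
def IsRich (R : ℕ → ℕ) (Bad : ℕ → Set ℕ) : ℕ → ℕ → ℕ → Prop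
  | 0, n, a => IsAlive R Bad n a
  | k + 1, n, a => IsAlive R Bad n a ∧
      R n ≤ 4 * ((block (R n) a).filter fun b => IsRich R Bad k (n + 1) b).card

open scoped Classical in
/-- The removed sets are sparse if every level has an earlier one, below each alive node of which
the removed nodes have density at most `1 / (4 * 2 ^ (n - m))`. -/
def IsSparse (R : ℕ → ℕ) (Bad : ℕ → Set ℕ) : Prop :=
  ∀ n, ∃ m ≤ n, ∀ c, IsAlive R Bad m c →
    4 * 2 ^ (n - m) * ((block (branching R m (n + 1)) c).filter (· ∈ Bad n)).card
      ≤ branching R m (n + 1)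

variable {R : ℕ → ℕ} {Bad : ℕ → Set ℕ} {k m n a : ℕ}

lemma branching_self (R : ℕ → ℕ) (n : ℕ) : branching R n n = 1 := by simp [branching]

lemma branching_succ (R : ℕ → ℕ) (h : m ≤ n) :
    branching R m (n + 1) = branching R m n * R n :=
  Finset.prod_Ico_succ_top h R

lemma branching_mul_branching (R : ℕ → ℕ) {l : ℕ} (hlm : l ≤ m) (hmn : m ≤ n) :
    branching R l m * branching R m n = branching R l n :=
  Finset.prod_Ico_consecutive R hlm hmn

lemma branching_pos (hR : ∀ n, 0 < R n) (m n : ℕ) : 0 < branching R m n :=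
  Finset.prod_pos fun i _ => hR i

lemma IsRich.isAlive (h : IsRich R Bad k n a) : IsAlive R Bad n a := by
  cases k with
  | zero => exact h
  | succ k => exact h.1

open scoped Classical in
lemma IsRich.of_succ : ∀ {k n a}, IsRich R Bad (k + 1) n a → IsRich R Bad k n a
  | 0, _, _, h => h.1
  | _ + 1, _, _, h => ⟨h.1, h.2.trans <| Nat.mul_le_mul_left 4 <| Finset.card_le_card <|
      Finset.monotone_filter_right _ fun _ _ hb => hb.of_succ⟩

lemma IsRich.mono {l : ℕ} (hkl : k ≤ l) (h : IsRich R Bad l n a) : IsRich R Bad k n a := by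
  induction l, hkl using Nat.le_induction with
  | base => exact h
  | succ l _ ih => exact ih h.of_succ

open scoped Classical in
lemma card_filter_not_isRich_of_not_isRich (halive : IsAlive R Bad n a)
    (hpoor : ¬ IsRich R Bad (k + 1) n a) :
    3 * R n ≤ 4 * ((block (R n) a).filter fun b => ¬ IsRich R Bad k (n + 1) b).card := by
  have hfew : 4 * ((block (R n) a).filter fun b => IsRich R Bad k (n + 1) b).card < R n := by
    simpa only [IsRich, halive, true_and, not_le] using hpoor
  have hsplit := Finset.card_filter_add_card_filter_not (s := block (R n) a)
    (fun b => IsRich R Bad k (n + 1) b)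
  rw [card_block] at hsplit
  omega

open scoped Classical in
/-- The alive nodes of level `n` such that neither they nor their ancestors, at any level `i`, are
rich to depth `k - i`; the root is included unconditionally. -/
noncomputable def poorNodes (R : ℕ → ℕ) (Bad : ℕ → Set ℕ) (k : ℕ) : ℕ → Finset ℕ
  | 0 => {0}
  | n + 1 => ((poorNodes R Bad k n).biUnion (block (R n))).filter fun b =>
      IsAlive R Bad (n + 1) b ∧ ¬ IsRich R Bad (k - (n + 1)) (n + 1) b

open scoped Classical in
lemma isAlive_of_mem_poorNodes (ha : a ∈ poorNodes R Bad k n) : IsAlive R Bad n a := by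
  cases n with
  | zero => exact Finset.mem_singleton.1 ha
  | succ n => exact (Finset.mem_filter.1 ha).2.1

open scoped Classical in
lemma not_isRich_of_mem_poorNodes (hroot : ¬ IsRich R Bad k 0 0) (ha : a ∈ poorNodes R Bad k n) :
    ¬ IsRich R Bad (k - n) n a := by
  cases n with
  | zero => rwa [Finset.mem_singleton.1 ha]
  | succ n => exact (Finset.mem_filter.1 ha).2.2

open scoped Classical in
lemma div_branching_mem_poorNodes (hR : ∀ n, 0 < R n) (hmn : m ≤ n)
    (ha : a ∈ poorNodes R Bad k n) : a / branching R m n ∈ poorNodes R Bad k m := by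
  induction n, hmn using Nat.le_induction generalizing a with
  | base => rwa [branching_self, Nat.div_one]
  | succ n hmn ih =>
    obtain ⟨b, hb, hab⟩ := Finset.mem_biUnion.1 (Finset.mem_filter.1 ha).1
    rw [mem_block (hR n)] at hab
    rw [branching_succ R hmn, mul_comm, ← Nat.div_div_eq_div_mul, hab]
    exact ih hb

open scoped Classical in
lemma card_filter_biUnion_poorNodes (hR : ∀ n, 0 < R n) (hroot : ¬ IsRich R Bad k 0 0)
    (hn : n < k) :
    3 * (R n * (poorNodes R Bad k n).card) ≤
      4 * (((poorNodes R Bad k n).biUnion (block (R n))).filter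
        fun b => ¬ IsRich R Bad (k - (n + 1)) (n + 1) b).card := by
  have hdisj : Set.PairwiseDisjoint (poorNodes R Bad k n : Set ℕ) fun a =>
      (block (R n) a).filter fun b => ¬ IsRich R Bad (k - (n + 1)) (n + 1) b := by
    intro a _ b _ hab
    refine Finset.disjoint_left.2 fun x hx hy => hab ?_
    rw [Finset.mem_filter, mem_block (hR n)] at hx hy
    exact hx.1.symm.trans hy.1
  rw [Finset.filter_biUnion, Finset.card_biUnion hdisj, Finset.mul_sum, mul_comm (R n),
    ← smul_eq_mul (_ : ℕ) (R n), ← Finset.sum_const, Finset.mul_sum]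
  refine Finset.sum_le_sum fun a ha => ?_
  refine card_filter_not_isRich_of_not_isRich (isAlive_of_mem_poorNodes ha) ?_
  rw [show k - (n + 1) + 1 = k - n by omega]
  exact not_isRich_of_mem_poorNodes hroot ha

open scoped Classical in
lemma filter_biUnion_poorNodes_subset (hR : ∀ n, 0 < R n) (hmn : m ≤ n) :
    ((poorNodes R Bad k n).biUnion (block (R n))).filter
        (fun b => ¬ IsRich R Bad (k - (n + 1)) (n + 1) b) ⊆
      poorNodes R Bad k (n + 1) ∪ (poorNodes R Bad k m).biUnion
        fun c => (block (branching R m (n + 1)) c).filter (· ∈ Bad n) := by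
  intro b hb
  obtain ⟨hchild, hpoor⟩ := Finset.mem_filter.1 hb
  obtain ⟨a, ha, hab⟩ := Finset.mem_biUnion.1 hchild
  rw [mem_block (hR n)] at hab
  by_cases hbad : b ∈ Bad n
  · refine Finset.mem_union_right _ (Finset.mem_biUnion.2
      ⟨_, div_branching_mem_poorNodes hR hmn ha, Finset.mem_filter.2 ⟨?_, hbad⟩⟩)
    rw [mem_block (branching_pos hR _ _), branching_succ R hmn, mul_comm,
      ← Nat.div_div_eq_div_mul, hab]
  · refine Finset.mem_union_left _ (Finset.mem_filter.2 ⟨hchild, ⟨?_, hbad⟩, hpoor⟩)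
    rw [hab]
    exact isAlive_of_mem_poorNodes ha

open scoped Classical in
lemma card_biUnion_bad_le (hmn : m ≤ n)
    (hsparse : ∀ c, IsAlive R Bad m c →
      4 * 2 ^ (n - m) * ((block (branching R m (n + 1)) c).filter (· ∈ Bad n)).card
        ≤ branching R m (n + 1))
    (hgrow : branching R m n * (poorNodes R Bad k m).card
      ≤ 2 ^ (n - m) * (poorNodes R Bad k n).card) :
    4 * ((poorNodes R Bad k m).biUnion
        fun c => (block (branching R m (n + 1)) c).filter (· ∈ Bad n)).card
      ≤ R n * (poorNodes R Bad k n).card := by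
  set bad := fun c => (block (branching R m (n + 1)) c).filter (· ∈ Bad n)
  refine Nat.le_of_mul_le_mul_left ?_ (Nat.two_pow_pos (n - m))
  calc 2 ^ (n - m) * (4 * ((poorNodes R Bad k m).biUnion bad).card)
      ≤ 2 ^ (n - m) * (4 * ∑ c ∈ poorNodes R Bad k m, (bad c).card) := by
        gcongr; exact Finset.card_biUnion_le
    _ = ∑ c ∈ poorNodes R Bad k m, 4 * 2 ^ (n - m) * (bad c).card := by
        rw [← mul_assoc, mul_comm _ 4, Finset.mul_sum]
    _ ≤ ∑ c ∈ poorNodes R Bad k m, branching R m (n + 1) :=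
        Finset.sum_le_sum fun c hc => hsparse c (isAlive_of_mem_poorNodes hc)
    _ = R n * (branching R m n * (poorNodes R Bad k m).card) := by
        rw [Finset.sum_const, smul_eq_mul, branching_succ R hmn]; ring
    _ ≤ R n * (2 ^ (n - m) * (poorNodes R Bad k n).card) := by gcongr
    _ = 2 ^ (n - m) * (R n * (poorNodes R Bad k n).card) := by ring

lemma branching_mul_card_poorNodes_le (hR : ∀ n, 0 < R n) (hB : IsSparse R Bad)
    (hroot : ¬ IsRich R Bad k 0 0) (hn : n ≤ k) (hmn : m ≤ n) :
    branching R m n * (poorNodes R Bad k m).card ≤ 2 ^ (n - m) * (poorNodes R Bad k n).card := by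
  classical
  induction n generalizing m with
  | zero => obtain rfl : m = 0 := by omega
            simp [branching_self]
  | succ n ih =>
    have hdouble : R n * (poorNodes R Bad k n).card ≤ 2 * (poorNodes R Bad k (n + 1)).card := by
      obtain ⟨l, hl, hsparse⟩ := hB n
      have hchildren := card_filter_biUnion_poorNodes hR hroot (show n < k by omega)
      have hsplit := (Finset.card_le_card (filter_biUnion_poorNodes_subset (Bad := Bad) (k := k)
        hR hl)).trans (Finset.card_union_le _ _)
      have hbad := card_biUnion_bad_le hl hsparse (ih (by omega) hl)
      omega
    rcases hmn.eq_or_lt with rfl | hlt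
    · simp [branching_self]
    have hmn' : m ≤ n := by omega
    calc branching R m (n + 1) * (poorNodes R Bad k m).card
        = R n * (branching R m n * (poorNodes R Bad k m).card) := by
          rw [branching_succ R hmn']; ring
      _ ≤ R n * (2 ^ (n - m) * (poorNodes R Bad k n).card) := by
          gcongr R n * ?_; exact ih (by omega) hmn'
      _ = 2 ^ (n - m) * (R n * (poorNodes R Bad k n).card) := by ring
      _ ≤ 2 ^ (n - m) * (2 * (poorNodes R Bad k (n + 1)).card) := by gcongr
      _ = 2 ^ (n + 1 - m) * (poorNodes R Bad k (n + 1)).card := by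
          rw [Nat.succ_sub hmn', pow_succ]; ring

/- If the root were not rich, poor nodes would survive down to level `k`, where being alive and
being rich to depth `0` are the same. -/
lemma IsSparse.isRich_root (hB : IsSparse R Bad) (hR : ∀ n, 0 < R n) (k : ℕ) :
    IsRich R Bad k 0 0 := by
  by_contra hroot
  have hgrow := branching_mul_card_poorNodes_le hR hB hroot le_rfl (Nat.zero_le k)
  rw [poorNodes, Finset.card_singleton, mul_one] at hgrow
  obtain ⟨a, ha⟩ : (poorNodes R Bad k k).Nonempty :=
    Finset.card_pos.1 (Nat.pos_of_mul_pos_left ((branching_pos hR 0 k).trans_le hgrow))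
  refine not_isRich_of_mem_poorNodes hroot ha ?_
  rw [Nat.sub_self]
  exact isAlive_of_mem_poorNodes ha

open scoped Classical in
lemma card_filter_forall_isRich (h : ∀ k, IsRich R Bad k n a) :
    R n ≤ 4 * ((block (R n) a).filter fun b => ∀ k, IsRich R Bad k (n + 1) b).card := by
  have hdepth : ∀ b, ∃ k, IsRich R Bad k (n + 1) b → ∀ l, IsRich R Bad l (n + 1) b := fun b => by
    by_cases hb : ∀ l, IsRich R Bad l (n + 1) b
    · exact ⟨0, fun _ => hb⟩
    · obtain ⟨k, hk⟩ := not_forall.1 hb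
      exact ⟨k, fun h => absurd h hk⟩
  choose depth hdepth using hdepth
  refine (h ((block (R n) a).sup depth + 1)).2.trans ?_
  gcongr 4 * Finset.card ?_
  intro b hb
  rw [Finset.mem_filter] at hb ⊢
  exact ⟨hb.1, hdepth b (hb.2.mono (Finset.le_sup hb.1))⟩

lemma exists_spaced_of_two_mul_le_card {s : Finset ℕ} {M : ℕ} (h : 2 * M ≤ s.card) :
    ∃ f : ℕ → ℕ, (∀ t < M, f t ∈ s) ∧ ∀ t t', t < t' → t' < M → f t + 2 ≤ f t' := by
  refine ⟨fun t => if ht : 2 * t < s.card then s.orderEmbOfFin rfl ⟨2 * t, ht⟩ else 0,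
    fun t ht => ?_, fun t t' htt' ht' => ?_⟩
  · beta_reduce
    rw [dif_pos (by omega)]
    exact Finset.orderEmbOfFin_mem _ _ _
  · beta_reduce
    rw [dif_pos (by omega), dif_pos (by omega)]
    have hmono := (s.orderEmbOfFin rfl).strictMono
    have hlt₁ := hmono (show (⟨2 * t, by omega⟩ : Fin s.card) < ⟨2 * t + 1, by omega⟩ by
      simp [Fin.lt_def])
    have hlt₂ := hmono (show (⟨2 * t + 1, by omega⟩ : Fin s.card) < ⟨2 * t', by omega⟩ by
      rw [Fin.lt_def]; dsimp only; omega)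
    omega

lemma exists_spaced_rich_children (hR : ∀ n, 0 < R n) (h : ∀ k, IsRich R Bad k n a) :
    ∃ f : ℕ → ℕ, (∀ t < R n / 8, f t / R n = a ∧ ∀ k, IsRich R Bad k (n + 1) (f t)) ∧
      ∀ t t', t < t' → t' < R n / 8 → f t + 2 ≤ f t' := by
  classical
  have hcard := card_filter_forall_isRich h
  obtain ⟨f, hf, hspaced⟩ := exists_spaced_of_two_mul_le_card (M := R n / 8)
    (s := (block (R n) a).filter fun b => ∀ k, IsRich R Bad k (n + 1) b) (by omega)
  refine ⟨f, fun t ht => ?_, hspaced⟩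
  simpa only [Finset.mem_filter, mem_block (hR n)] using hf t ht

/-- The complete tree with branching numbers `R n / 8` embeds into the tree of alive nodes, in such
a way that siblings are sent to non-adjacent nodes. -/
lemma IsSparse.exists_regular_subtree (hB : IsSparse R Bad) (hR : ∀ n, 16 ≤ R n) :
    ∃ e : ℕ → ℕ → ℕ, (∀ n a, IsAlive R Bad n (e n a)) ∧
      (∀ n a, e (n + 1) a / R n = e n (a / (R n / 8))) ∧
      ∀ n a b, a / (R n / 8) = b / (R n / 8) → a < b → e (n + 1) a + 2 ≤ e (n + 1) b := by
  have hR0 : ∀ n, 0 < R n := fun n => by have := hR n; omega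
  choose! f hf hspaced using fun n p (h : ∀ k, IsRich R Bad k n p) =>
    exists_spaced_rich_children hR0 h
  let e : ℕ → ℕ → ℕ := fun n => Nat.rec (fun _ => 0)
    (fun n en a => f n (en (a / (R n / 8))) (a % (R n / 8))) n
  have he : ∀ n a, e (n + 1) a = f n (e n (a / (R n / 8))) (a % (R n / 8)) := fun _ _ => rfl
  have hmod : ∀ n a, a % (R n / 8) < R n / 8 := fun n a =>
    Nat.mod_lt _ (by have := hR n; omega)
  have hrich : ∀ n a k, IsRich R Bad k n (e n a) := by
    intro n
    induction n with
    | zero => exact fun _ => hB.isRich_root hR0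
    | succ n ih => exact fun a => he n a ▸ (hf n _ (ih _) _ (hmod n a)).2
  refine ⟨e, fun n a => (hrich n a 0).isAlive, fun n a => ?_, fun n a b hab hlt => ?_⟩
  · rw [he]
    exact (hf n _ (hrich n _) _ (hmod n a)).1
  · rw [he, he, hab]
    refine hspaced n _ (hrich n _) _ _ ?_ (hmod n b)
    have ha := Nat.div_add_mod a (R n / 8)
    have hb := Nat.div_add_mod b (R n / 8)
    rw [hab] at ha
    omega

end CantorTree

section CantorEmbedding

open scoped NNReal

/-- The `a`-th interval of the subdivision of the line into intervals of length `1 / N`; the node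
`a` of level `n` of a tree is realised as `gridCell (branching R 0 n) a`. -/
def gridCell (N a : ℕ) : Set ℝ := Set.Icc (a / N) ((a + 1) / N)

lemma gridCell_subset {N Q : ℕ} (hN : 0 < N) (hQ : 0 < Q) (a : ℕ) :
    gridCell (N * Q) a ⊆ gridCell N (a / Q) := by
  have hN' : (0 : ℝ) < N := mod_cast hN
  have hQ' : (0 : ℝ) < Q := mod_cast hQ
  have hlow : ((a / Q : ℕ) : ℝ) * Q ≤ a := mod_cast Nat.div_mul_le_self a Q
  have hupp : (a : ℝ) + 1 ≤ ((a / Q : ℕ) + 1) * Q :=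
    mod_cast Nat.lt_mul_of_div_lt (Nat.lt_succ_self _) hQ
  rw [gridCell, gridCell, Nat.cast_mul]
  refine Set.Icc_subset_Icc ?_ ?_
  · rw [le_div_iff₀ (mul_pos hN' hQ'), mul_comm (N : ℝ), ← mul_assoc, mul_right_comm,
      div_mul_cancel₀ _ hN'.ne']
    exact hlow
  · rw [div_le_iff₀ (mul_pos hN' hQ'), ← mul_assoc, div_mul_cancel₀ _ hN'.ne']
    exact hupp

lemma nonempty_iInter_gridCell {R : ℕ → ℕ} (hR : ∀ n, 0 < R n) {x : ℕ → ℕ}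
    (hx : ∀ n, x (n + 1) / R n = x n) : (⋂ n, gridCell (branching R 0 n) (x n)).Nonempty := by
  refine IsCompact.nonempty_iInter_of_sequence_nonempty_isCompact_isClosed _ (fun n => ?_)
    (fun n => ?_) isCompact_Icc fun n => isClosed_Icc
  · rw [branching_succ R (Nat.zero_le n), ← hx n]
    exact gridCell_subset (branching_pos hR 0 n) (hR n) _
  · rw [gridCell, Set.nonempty_Icc]
    gcongr
    exact le_add_of_nonneg_right zero_le_one

lemma abs_sub_le_of_floor_mul_eq {T a b : ℝ} (hT : 0 < T) (h : ⌊a * T⌋ = ⌊b * T⌋) :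
    |a - b| ≤ 1 / T := by
  rw [le_div_iff₀ hT]
  calc |a - b| * T = |a * T - b * T| := by rw [← sub_mul, abs_mul, abs_of_pos hT]
    _ ≤ 1 := (Int.abs_sub_lt_one_of_floor_eq_floor h).le

lemma floor_mul_branching_succ_div {M : ℕ → ℕ} {n : ℕ} (hM : 0 < M n) (u : ℝ) :
    ⌊u * branching M 0 (n + 1)⌋₊ / M n = ⌊u * branching M 0 n⌋₊ := by
  rw [← Nat.floor_div_natCast, branching_succ M (Nat.zero_le n), Nat.cast_mul, ← mul_assoc,
    mul_div_cancel_right₀ _ (mod_cast hM.ne')]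

lemma two_pow_le_branching {M : ℕ → ℕ} (hM : ∀ n, 2 ≤ M n) (n : ℕ) : 2 ^ n ≤ branching M 0 n := by
  simpa only [branching, Nat.card_Ico, Nat.sub_zero] using
    Finset.pow_card_le_prod (s := Finset.Ico 0 n) (f := M) (n := 2) fun i _ => hM i

lemma abs_sub_le_of_natFloor_mul_branching_eq {M : ℕ → ℕ} (hM : ∀ n, 0 < M n) {n : ℕ} {u v : ℝ}
    (hu : 0 ≤ u) (hv : 0 ≤ v) (h : ⌊u * branching M 0 n⌋₊ = ⌊v * branching M 0 n⌋₊) :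
    |u - v| ≤ 1 / branching M 0 n := by
  refine abs_sub_le_of_floor_mul_eq (mod_cast branching_pos hM 0 n) ?_
  rw [← Int.natCast_floor_eq_floor (by positivity), ← Int.natCast_floor_eq_floor (by positivity), h]

lemma exists_first_natFloor_mul_branching_ne {M : ℕ → ℕ} (hM : ∀ n, 2 ≤ M n) {u v : ℝ}
    (hu : u ∈ Set.Ico (0 : ℝ) 1) (hv : v ∈ Set.Ico (0 : ℝ) 1) (huv : u ≠ v) :
    ∃ n, ⌊u * branching M 0 n⌋₊ = ⌊v * branching M 0 n⌋₊ ∧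
      ⌊u * branching M 0 (n + 1)⌋₊ ≠ ⌊v * branching M 0 (n + 1)⌋₊ := by
  by_contra! hall
  have heq : ∀ n, ⌊u * branching M 0 n⌋₊ = ⌊v * branching M 0 n⌋₊ := by
    intro n
    induction n with
    | zero => simp [branching_self, Nat.floor_eq_zero.2 hu.2, Nat.floor_eq_zero.2 hv.2]
    | succ n ih => exact hall n ih
  obtain ⟨n, hn⟩ := exists_pow_lt_of_lt_one (abs_pos.2 (sub_ne_zero.2 huv)) one_half_lt_one
  have hle : (1 : ℝ) / branching M 0 n ≤ (1 / 2) ^ n := by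
    rw [one_div_pow]
    gcongr
    exact_mod_cast two_pow_le_branching hM n
  have hM0 : ∀ n, 0 < M n := fun n => zero_lt_two.trans_le (hM n)
  exact absurd (abs_sub_le_of_natFloor_mul_branching_eq hM0 hu.1 hv.1 (heq n))
    (hle.trans_lt hn).not_ge

lemma one_div_le_sub_of_mem_gridCell {N a b : ℕ} {x y : ℝ} (hab : a + 2 ≤ b)
    (hx : x ∈ gridCell N a) (hy : y ∈ gridCell N b) : 1 / N ≤ y - x := by
  have hab' : (a : ℝ) + 1 + 1 ≤ b := by exact_mod_cast hab
  calc (1 : ℝ) / N = (a + 1 + 1) / N - (a + 1) / N := by rw [← sub_div, add_sub_cancel_left]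
    _ ≤ b / N - (a + 1) / N := by gcongr
    _ ≤ y - x := sub_le_sub hy.1 hx.2

variable {R : ℕ → ℕ} {Bad : ℕ → Set ℕ}

lemma IsSparse.exists_embedding (hB : IsSparse R Bad) (hR : ∀ n, 16 ≤ R n) :
    ∃ h : ℝ → ℝ,
      (∀ u n, ∃ a, IsAlive R Bad n a ∧ h u ∈ gridCell (branching R 0 n) a) ∧
      ∀ u ∈ Set.Ico (0 : ℝ) 1, ∀ v ∈ Set.Ico (0 : ℝ) 1, u ≠ v → ∃ n,
        |u - v| ≤ 1 / branching (fun i => R i / 8) 0 n ∧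
        1 / branching R 0 (n + 1) ≤ |h u - h v| := by
  obtain ⟨e, halive, hparent, hspaced⟩ := hB.exists_regular_subtree hR
  have hR0 : ∀ n, 0 < R n := fun n => by have := hR n; omega
  have hM : ∀ n, 2 ≤ R n / 8 := fun n => by have := hR n; omega
  have hM0 : ∀ n, 0 < R n / 8 := fun n => zero_lt_two.trans_le (hM n)
  let d : ℝ → ℕ → ℕ := fun u n => ⌊u * branching (fun i => R i / 8) 0 n⌋₊
  have hd : ∀ u n, d u (n + 1) / (R n / 8) = d u n := fun u n =>
    floor_mul_branching_succ_div (M := fun i => R i / 8) (hM0 n) u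
  choose h hh using fun u => nonempty_iInter_gridCell (x := fun n => e n (d u n)) hR0
    fun n => by rw [hparent, hd]
  replace hh : ∀ u n, h u ∈ gridCell (branching R 0 n) (e n (d u n)) := fun u =>
    Set.mem_iInter.1 (hh u)
  refine ⟨h, fun u n => ⟨_, halive n (d u n), hh u n⟩, fun u hu v hv huv => ?_⟩
  obtain ⟨n, heq, hne⟩ := exists_first_natFloor_mul_branching_ne hM hu hv huv
  refine ⟨n, abs_sub_le_of_natFloor_mul_branching_eq hM0 hu.1 hv.1 heq, ?_⟩
  have hsep : ∀ w w', d w n = d w' n → d w (n + 1) < d w' (n + 1) →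
      1 / (branching R 0 (n + 1) : ℝ) ≤ h w' - h w := fun w w' hww hlt =>
    one_div_le_sub_of_mem_gridCell (hspaced n _ _ (by rw [hd, hd, hww]) hlt)
      (hh w (n + 1)) (hh w' (n + 1))
  rcases lt_or_gt_of_ne hne with hlt | hgt
  · exact (hsep u v heq hlt).trans (le_abs_self _) |>.trans_eq (abs_sub_comm _ _)
  · exact (hsep v u heq.symm hgt).trans (le_abs_self _)

/-- The set `A` contains a copy of the interval `[0, 1)` in which distances have shrunk at most
like `t ↦ t ^ (1 / s)`. This bounds its dimension from below by `s`. -/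
def IsSpread {X : Type*} [EMetricSpace X] (s : ℝ≥0) (A : Set X) : Prop :=
  ∃ (h : ℝ → X) (C : ℝ≥0), Set.MapsTo h (Set.Ico 0 1) A ∧
    ∀ u ∈ Set.Ico (0 : ℝ) 1, ∀ v ∈ Set.Ico (0 : ℝ) 1,
      edist u v ≤ C * edist (h u) (h v) ^ (s : ℝ)

lemma IsSparse.isSpread (hB : IsSparse R Bad) (hR : ∀ n, 16 ≤ R n) {s C : ℝ≥0}
    (hgrow : ∀ n, (branching R 0 (n + 1) : ℝ) ^ (s : ℝ)
      ≤ C * branching (fun i => R i / 8) 0 n) {A : Set ℝ}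
    (hA : ∀ z, (∀ n, ∃ a, IsAlive R Bad n a ∧ z ∈ gridCell (branching R 0 n) a) → z ∈ A) :
    IsSpread s A := by
  obtain ⟨h, hmem, hdist⟩ := hB.exists_embedding hR
  refine ⟨h, C, fun u _ => hA _ (hmem u), fun u hu v hv => ?_⟩
  rcases eq_or_ne u v with rfl | huv
  · simp only [edist_self, zero_le]
  obtain ⟨n, hupp, hlow⟩ := hdist u hu v hv huv
  have hN : (0 : ℝ) < branching R 0 (n + 1) :=
    mod_cast branching_pos (fun i => by have := hR i; omega) _ _
  have hP : (0 : ℝ) < branching (fun i => R i / 8) 0 n :=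
    mod_cast branching_pos (fun i => by have := hR i; omega) _ _
  have hdist : |u - v| ≤ C * |h u - h v| ^ (s : ℝ) := calc
    |u - v| ≤ 1 / branching (fun i => R i / 8) 0 n := hupp
    _ ≤ C * (1 / branching R 0 (n + 1)) ^ (s : ℝ) := by
        rw [Real.div_rpow zero_le_one hN.le, Real.one_rpow, mul_one_div,
          div_le_div_iff₀ hP (by positivity), one_mul]
        exact hgrow n
    _ ≤ C * |h u - h v| ^ (s : ℝ) := by gcongr
  rw [edist_dist, edist_dist, Real.dist_eq, Real.dist_eq,
    ENNReal.ofReal_rpow_of_nonneg (abs_nonneg _) s.coe_nonneg, ← ENNReal.ofReal_coe_nnreal,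
    ← ENNReal.ofReal_mul C.coe_nonneg]
  exact ENNReal.ofReal_le_ofReal hdist

end CantorEmbedding

section Dimension

open MeasureTheory Measure
open scoped ENNReal NNReal

variable {X Y : Type*} [EMetricSpace X] [EMetricSpace Y]

lemma IsSpread.le_dimH {s : ℝ≥0} {A : Set X} (hA : IsSpread s A) : (s : ℝ≥0∞) ≤ dimH A := by
  rcases eq_zero_or_pos s with rfl | hs
  · exact zero_le
  obtain ⟨h, C, hmem, hdist⟩ := hA
  have hinj : Set.InjOn h (Set.Ico 0 1) := fun u hu v hv huv => by
    have hle := hdist u hu v hv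
    rw [huv, edist_self, ENNReal.zero_rpow_of_pos (mod_cast hs), mul_zero] at hle
    exact edist_le_zero.1 hle
  have hleft := hinj.leftInvOn_invFunOn
  have hholder : HolderOnWith C s (Function.invFunOn h (Set.Ico 0 1)) (h '' Set.Ico 0 1) := by
    rintro _ ⟨u, hu, rfl⟩ _ ⟨v, hv, rfl⟩
    rw [hleft hu, hleft hv]
    exact hdist u hu v hv
  have hdim : dimH (Set.Ico (0 : ℝ) 1) = 1 := by
    simpa using Real.dimH_of_nonempty_interior (s := Set.Ico (0 : ℝ) 1)
      (by rw [interior_Ico]; exact Set.nonempty_Ioo.2 zero_lt_one)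
  have hone := hholder.dimH_image_le hs
  rw [hleft.image_image, hdim, ENNReal.le_div_iff_mul_le (Or.inl (mod_cast hs.ne'))
    (Or.inl ENNReal.coe_ne_top), one_mul] at hone
  exact hone.trans (dimH_mono hmem.image_subset)

lemma exists_cover_of_hausdorffMeasure_eq_zero [MeasurableSpace X] [BorelSpace X] {d : ℝ}
    (hd : 0 < d) {A : Set X} (hA : μH[d] A = 0) {r ε : ℝ≥0∞} (hr : 0 < r) (hε : 0 < ε) :
    ∃ E : ℕ → Set X, A ⊆ ⋃ i, E i ∧ (∀ i, Metric.ediam (E i) ≤ r) ∧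
      ∑' i, Metric.ediam (E i) ^ d < ε := by
  rw [hausdorffMeasure_apply] at hA
  have hlt := ((ENNReal.iSup_eq_zero.1 (ENNReal.iSup_eq_zero.1 hA r)) hr).trans_lt hε
  simp only [iInf_lt_iff] at hlt
  obtain ⟨E, hcover, hdiam, hsum⟩ := hlt
  refine ⟨E, hcover, hdiam, (ENNReal.tsum_le_tsum fun i => ?_).trans_lt hsum⟩
  rcases (E i).eq_empty_or_nonempty with hE | hE
  · rw [hE, Metric.ediam_empty, ENNReal.zero_rpow_of_pos hd]
    exact zero_le
  · exact le_iSup (fun _ : (E i).Nonempty => Metric.ediam (E i) ^ d) hE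

lemma hausdorffMeasure_eq_zero_of_tendsto [MeasurableSpace X] [BorelSpace X] {d : ℝ} {A : Set X}
    {E : ℕ → ℕ → Set X} {r : ℕ → ℝ≥0∞} (hcover : ∀ k, A ⊆ ⋃ i, E k i)
    (hdiam : ∀ k i, Metric.ediam (E k i) ≤ r k) (hr : Tendsto r atTop (nhds 0))
    (hsum : Tendsto (fun k => ∑' i, Metric.ediam (E k i) ^ d) atTop (nhds 0)) :
    μH[d] A = 0 := by
  have hle := hausdorffMeasure_le_liminf_tsum d A r hr E (Eventually.of_forall hdiam)
    (Eventually.of_forall hcover)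
  rw [hsum.liminf_eq] at hle
  exact le_zero_iff.1 hle

lemma ae_tendsto_zero_of_tsum_lintegral_ne_top {α : Type*} [MeasurableSpace α] {μ : Measure α}
    {f : ℕ → α → ℝ≥0∞} (hf : ∀ k, Measurable (f k)) (hsum : ∑' k, ∫⁻ x, f k x ∂μ ≠ ∞) :
    ∀ᵐ x ∂μ, Tendsto (fun k => f k x) atTop (nhds 0) := by
  rw [← lintegral_tsum fun k => (hf k).aemeasurable] at hsum
  filter_upwards [ae_lt_top (Measurable.tsum hf) hsum] with x hx
  rw [← Nat.cofinite_eq_atTop]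
  exact ENNReal.tendsto_cofinite_zero_of_tsum_ne_top hx.ne

lemma ediam_preimage_prodMk_le (x : X) (E : Set (X × Y)) :
    Metric.ediam (Prod.mk x ⁻¹' E) ≤ Metric.ediam E :=
  Metric.ediam_le fun y hy z hz => (le_max_right (edist x x) (edist y z)).trans
    (Metric.edist_le_ediam_of_mem (x := (x, y)) (y := (x, z)) hy hz)

/-- The parameters in `[0, 1)` whose image under `h` is the abscissa of a point of `E`. -/
def shadow (h : ℝ → X) (E : Set (X × Y)) : Set ℝ :=
  {u ∈ Set.Ico 0 1 | (Prod.mk (h u) ⁻¹' E).Nonempty}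

/-- A measurable majorant of the sum of `s`-th powers of the diameters of the slices at `h u` of
the sets `E i`. -/
noncomputable def sliceWeight (s : ℝ) (h : ℝ → X) (E : ℕ → Set (X × Y)) (u : ℝ) : ℝ≥0∞ :=
  ∑' i, (toMeasurable volume (shadow h (E i))).indicator (fun _ => Metric.ediam (E i) ^ s) u

variable {s t C : ℝ≥0} {h : ℝ → X} {E : ℕ → Set (X × Y)}

lemma measurable_sliceWeight (s : ℝ) : Measurable (sliceWeight s h E) :=
  Measurable.tsum fun _ => measurable_const.indicator (measurableSet_toMeasurable _ _)

lemma tsum_ediam_slice_le {s : ℝ} (hs : 0 < s) {u : ℝ} (hu : u ∈ Set.Ico 0 1) :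
    ∑' i, Metric.ediam (Prod.mk (h u) ⁻¹' E i) ^ s ≤ sliceWeight s h E u := by
  refine ENNReal.tsum_le_tsum fun i => ?_
  rcases (Prod.mk (h u) ⁻¹' E i).eq_empty_or_nonempty with hE | hE
  · rw [hE, Metric.ediam_empty, ENNReal.zero_rpow_of_pos hs]
    exact zero_le
  · rw [Set.indicator_of_mem (subset_toMeasurable _ _ (show u ∈ shadow h (E i) from ⟨hu, hE⟩))]
    gcongr
    exact ediam_preimage_prodMk_le _ _

lemma volume_shadow_le (hdist : ∀ u ∈ Set.Ico (0 : ℝ) 1, ∀ v ∈ Set.Ico (0 : ℝ) 1,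
      edist u v ≤ C * edist (h u) (h v) ^ (t : ℝ)) (E : Set (X × Y)) :
    volume (shadow h E) ≤ C * Metric.ediam E ^ (t : ℝ) := by
  refine (Real.volume_le_diam _).trans (Metric.ediam_le ?_)
  rintro u ⟨hu, y, hy⟩ v ⟨hv, z, hz⟩
  refine (hdist u hu v hv).trans ?_
  gcongr
  exact (le_max_left (edist (h u) (h v)) (edist y z)).trans
    (Metric.edist_le_ediam_of_mem (x := (h u, y)) (y := (h v, z)) hy hz)

lemma lintegral_sliceWeight_le (hdist : ∀ u ∈ Set.Ico (0 : ℝ) 1, ∀ v ∈ Set.Ico (0 : ℝ) 1,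
      edist u v ≤ C * edist (h u) (h v) ^ (t : ℝ)) (E : ℕ → Set (X × Y)) :
    ∫⁻ u, sliceWeight s h E u ≤ C * ∑' i, Metric.ediam (E i) ^ ((s : ℝ) + t) := by
  unfold sliceWeight
  rw [lintegral_tsum fun i =>
    (measurable_const.indicator (measurableSet_toMeasurable _ _)).aemeasurable,
    ← ENNReal.tsum_mul_left]
  refine ENNReal.tsum_le_tsum fun i => ?_
  rw [lintegral_indicator_const (measurableSet_toMeasurable _ _), measure_toMeasurable,
    ENNReal.rpow_add_of_nonneg _ _ s.coe_nonneg t.coe_nonneg, mul_left_comm]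
  gcongr
  exact volume_shadow_le hdist (E i)

lemma ae_hausdorffMeasure_slice_eq_zero [MeasurableSpace Y] [BorelSpace Y]
    [MeasurableSpace (X × Y)] [BorelSpace (X × Y)] (hs : 0 < s)
    (hdist : ∀ u ∈ Set.Ico (0 : ℝ) 1, ∀ v ∈ Set.Ico (0 : ℝ) 1,
      edist u v ≤ C * edist (h u) (h v) ^ (t : ℝ))
    {A : Set (X × Y)} (hA : μH[(s : ℝ) + t] A = 0) :
    ∀ᵐ u : ℝ, u ∈ Set.Ico (0 : ℝ) 1 → μH[(s : ℝ)] (Prod.mk (h u) ⁻¹' A) = 0 := by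
  choose E hcover hdiam hsum using fun k : ℕ =>
    exists_cover_of_hausdorffMeasure_eq_zero (by positivity) hA
      (r := ((k + 1 : ℕ) : ℝ≥0∞)⁻¹) (ε := 2⁻¹ ^ k) (by simp) (ENNReal.pow_pos (by simp) k)
  have hfinite : ∑' k, ∫⁻ u, sliceWeight s h (E k) u ≠ ∞ := by
    refine ne_top_of_le_ne_top ?_ (ENNReal.tsum_le_tsum fun k =>
      (lintegral_sliceWeight_le hdist (E k)).trans (mul_le_mul_right (hsum k).le _))
    rw [ENNReal.tsum_mul_left, ENNReal.tsum_geometric, ENNReal.one_sub_inv_two, inv_inv]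
    exact ENNReal.mul_ne_top ENNReal.coe_ne_top ENNReal.ofNat_ne_top
  filter_upwards [ae_tendsto_zero_of_tsum_lintegral_ne_top
    (fun k => measurable_sliceWeight (E := E k) s) hfinite] with u htend hu
  refine hausdorffMeasure_eq_zero_of_tendsto (E := fun k i => Prod.mk (h u) ⁻¹' E k i)
    (fun k => ?_) (fun k i => (ediam_preimage_prodMk_le _ _).trans (hdiam k i))
    ((tendsto_add_atTop_iff_nat 1).2 ENNReal.tendsto_inv_nat_nhds_zero)
    (tendsto_of_tendsto_of_tendsto_of_le_of_le tendsto_const_nhds htend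
      (fun _ => zero_le) fun k => tsum_ediam_slice_le (mod_cast hs) hu)
  rw [← Set.preimage_iUnion]
  exact Set.preimage_mono (hcover k)

theorem IsSpread.add_le_dimH {B : Set X} (hB : IsSpread t B) (hs : 0 < s) {A : Set (X × Y)}
    (hslice : ∀ x ∈ B, (s : ℝ≥0∞) < dimH (Prod.mk x ⁻¹' A)) : (s : ℝ≥0∞) + t ≤ dimH A := by
  borelize Y (X × Y)
  by_contra! hlt
  rw [← ENNReal.coe_add] at hlt
  obtain ⟨h, C, hmem, hdist⟩ := hB
  have hnull := ae_hausdorffMeasure_slice_eq_zero (Y := Y) hs hdist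
    (by simpa only [NNReal.coe_add] using hausdorffMeasure_of_dimH_lt hlt)
  have hvol : volume (Set.Ico (0 : ℝ) 1) ≠ 0 := by
    rw [Real.volume_Ico, sub_zero, ENNReal.ofReal_one]
    exact one_ne_zero
  obtain ⟨u, hzero, hu⟩ := (hnull.and_frequently (frequently_ae_mem_iff.2 hvol)).exists
  replace hzero := hzero hu
  rw [hausdorffMeasure_of_lt_dimH (hslice _ (hmem hu))] at hzero
  exact ENNReal.top_ne_zero hzero

end Dimension

section LatticePoints

open Matrix

variable {ι : Type*} [Fintype ι]

lemma abs_apply_le_of_dotProduct_eq_zero {v x : ι → ℝ} {k : ι} {δ : ℝ} (hvk : v k ≠ 0)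
    (hmax : ∀ i, |v i| ≤ |v k|) (hperp : v ⬝ᵥ x = 0) (hx : ∀ i ≠ k, |x i| ≤ δ) :
    |x k| ≤ (Fintype.card ι - 1 : ℕ) * δ := by
  classical
  have hsum : v k * x k = -∑ i ∈ Finset.univ.erase k, v i * x i := by
    rw [eq_neg_iff_add_eq_zero, Finset.add_sum_erase _ (fun i => v i * x i) (Finset.mem_univ k)]
    exact hperp
  refine le_of_mul_le_mul_left ?_ (abs_pos.2 hvk)
  calc |v k| * |x k| = |∑ i ∈ Finset.univ.erase k, v i * x i| := by rw [← abs_mul, hsum, abs_neg]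
    _ ≤ ∑ i ∈ Finset.univ.erase k, |v i * x i| := Finset.abs_sum_le_sum_abs _ _
    _ ≤ ∑ _i ∈ Finset.univ.erase k, |v k| * δ := by
        refine Finset.sum_le_sum fun i hi => ?_
        rw [abs_mul]
        exact mul_le_mul (hmax i) (hx i (Finset.ne_of_mem_erase hi)) (abs_nonneg _) (abs_nonneg _)
    _ = |v k| * ((Fintype.card ι - 1 : ℕ) * δ) := by
        rw [Finset.sum_const, Finset.card_erase_of_mem (Finset.mem_univ k), Finset.card_univ,
          nsmul_eq_mul]
        ring

lemma floor_mul_natCast_mem_Icc {x : ℝ} (hx : |x| ≤ 1) (T : ℕ) :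
    ⌊x * T⌋ ∈ Finset.Icc (-T : ℤ) T := by
  rw [abs_le] at hx
  rw [Finset.mem_Icc, Int.le_floor, Int.floor_le_iff]
  push_cast
  constructor <;> nlinarith [T.cast_nonneg (α := ℝ)]

/- The coordinate in which the normal vector is largest is controlled by the others. -/
lemma exists_abs_sub_le_of_dotProduct_eq_zero {α : Type*} {S : Finset α} {f : α → ι → ℝ}
    {v : ι → ℝ} (hv : v ≠ 0) (hperp : ∀ P ∈ S, v ⬝ᵥ f P = 0) (hf : ∀ P ∈ S, ∀ i, |f P i| ≤ 1)
    {T : ℕ} (hT : 0 < T) (hcard : (3 * T) ^ (Fintype.card ι - 1) < S.card) :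
    ∃ P ∈ S, ∃ Q ∈ S, P ≠ Q ∧ ∀ i, |f P i - f Q i| ≤ Fintype.card ι / T := by
  classical
  obtain ⟨l, hl⟩ := Function.ne_iff.1 hv
  obtain ⟨k, -, hk⟩ := Finset.exists_max_image Finset.univ (fun i => |v i|) ⟨l, Finset.mem_univ l⟩
  have hvk : v k ≠ 0 := abs_pos.1 ((abs_pos.2 hl).trans_le (hk l (Finset.mem_univ l)))
  obtain ⟨P, hP, Q, hQ, hPQ, heq⟩ := Finset.exists_ne_map_eq_of_card_lt_of_maps_to
    (s := S) (t := Fintype.piFinset fun _ : {i // i ≠ k} => Finset.Icc (-T : ℤ) T)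
    (f := fun P i => ⌊f P i * T⌋) (by
      rw [Fintype.card_piFinset, Finset.prod_const, Finset.card_univ, Int.card_Icc,
        Fintype.card_subtype_compl, Fintype.card_subtype_eq]
      exact (Nat.pow_le_pow_left (by omega) _).trans_lt hcard)
    fun P hP => Fintype.mem_piFinset.2 fun i => floor_mul_natCast_mem_Icc (hf P hP i) T
  have hclose : ∀ i ≠ k, |f P i - f Q i| ≤ 1 / T := fun i hi =>
    abs_sub_le_of_floor_mul_eq (mod_cast hT) (congrFun heq ⟨i, hi⟩)
  refine ⟨P, hP, Q, hQ, hPQ, fun i => ?_⟩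
  rcases eq_or_ne i k with rfl | hik
  · calc |f P i - f Q i| ≤ (Fintype.card ι - 1 : ℕ) * (1 / T) :=
          abs_apply_le_of_dotProduct_eq_zero (x := f P - f Q) hvk
            (fun j => hk j (Finset.mem_univ j))
            (by rw [dotProduct_sub, hperp P hP, hperp Q hQ, sub_zero]) hclose
      _ ≤ Fintype.card ι * (1 / T) := by gcongr; exact Nat.sub_le _ _
      _ = Fintype.card ι / T := mul_one_div _ _
  · refine (hclose i hik).trans ?_
    gcongr
    exact_mod_cast Fintype.card_pos_iff.2 ⟨i⟩

variable [DecidableEq ι]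

lemma card_quotient_range_mulVecLin {A : Matrix ι ι ℤ} (hA : A.det ≠ 0) :
    Nat.card ((ι → ℤ) ⧸ LinearMap.range A.mulVecLin) = A.det.natAbs := by
  have hinj : Function.Injective A.mulVecLin := mulVec_injective_of_det_ne_zero hA
  rw [← Submodule.natAbs_det_equiv _ (LinearEquiv.ofInjective A.mulVecLin hinj),
    ← LinearMap.det_toLin' A]
  rfl

lemma ediv_mem_Icc_of_natAbs_le {a d : ℤ} (hd : d ≠ 0) (h : a.natAbs ≤ d.natAbs) :
    a / d ∈ Finset.Icc (-1 : ℤ) 1 := by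
  rw [Finset.mem_Icc]
  rcases lt_or_gt_of_ne hd with hneg | hpos
  · rw [← neg_neg d, Int.ediv_neg]
    have hlow : -1 ≤ a / -d := (Int.le_ediv_iff_mul_le (by omega)).2 (by omega)
    have hupp : a / -d ≤ 1 := Int.ediv_le_of_le_mul (by omega) (by omega)
    omega
  · exact ⟨(Int.le_ediv_iff_mul_le hpos).2 (by omega), Int.ediv_le_of_le_mul hpos (by omega)⟩

/- Two points of the same class differ by a vector `A *ᵥ k`, and Cramer's rule recovers
`A.det • k`. -/
lemma eq_of_mk_eq_of_cramer_ediv_eq {A : Matrix ι ι ℤ} (hA : A.det ≠ 0) {P Q : ι → ℤ}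
    (hmk : (Submodule.Quotient.mk P : (ι → ℤ) ⧸ LinearMap.range A.mulVecLin) =
      Submodule.Quotient.mk Q)
    (hdiv : ∀ i, A.cramer P i / A.det = A.cramer Q i / A.det) : P = Q := by
  obtain ⟨k, hk⟩ := (Submodule.Quotient.eq _).1 hmk
  rw [mulVecLin_apply] at hk
  have hcramer : A.cramer P = A.cramer Q + A.det • k := by
    rw [← sub_eq_iff_eq_add', ← map_sub, ← hk, cramer_eq_adjugate_mulVec, mulVec_mulVec,
      adjugate_mul, smul_mulVec, one_mulVec]
  have hk0 : k = 0 := by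
    ext i
    have hi := hdiv i
    rwa [hcramer, Pi.add_apply, Pi.smul_apply, smul_eq_mul, Int.add_mul_ediv_left _ _ hA,
      add_eq_left] at hi
  rw [hk0, mulVec_zero] at hk
  exact sub_eq_zero.1 hk.symm

lemma card_le_of_natAbs_det_le {S : Finset (ι → ℤ)} {D : ℕ}
    (hne : ∃ w : ι → ι → ℤ, (∀ i, w i ∈ S) ∧ (of w).det ≠ 0)
    (hD : ∀ w : ι → ι → ℤ, (∀ i, w i ∈ S) → (of w).det.natAbs ≤ D) :
    S.card ≤ 3 ^ Fintype.card ι * D := by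
  obtain ⟨v, hv, hv0⟩ := hne
  obtain ⟨w, hw, hmax⟩ := Finset.exists_max_image (Fintype.piFinset fun _ : ι => S)
    (fun w => (of w).det.natAbs) ⟨v, Fintype.mem_piFinset.2 hv⟩
  simp only [Fintype.mem_piFinset] at hw hmax
  have hw0 : ((of w)ᵀ).det ≠ 0 := by
    have := hmax v hv
    rw [det_transpose]
    omega
  have hcard := card_quotient_range_mulVecLin hw0
  have : Fintype ((ι → ℤ) ⧸ LinearMap.range ((of w)ᵀ).mulVecLin) :=
    @Fintype.ofFinite _ (Nat.finite_of_card_ne_zero (by rwa [hcard, Int.natAbs_ne_zero]))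
  have hcramer : ∀ P ∈ S, ∀ i, (((of w)ᵀ).cramer P i).natAbs ≤ ((of w)ᵀ).det.natAbs := by
    intro P hP i
    rw [cramer_transpose_apply, det_transpose]
    refine hmax (Function.update w i P) fun j => ?_
    rcases eq_or_ne j i with rfl | hji
    · rwa [Function.update_self]
    · rw [Function.update_of_ne hji]
      exact hw j
  calc S.card
      ≤ (Finset.univ ×ˢ Fintype.piFinset fun _ : ι => Finset.Icc (-1 : ℤ) 1).card :=
        Finset.card_le_card_of_injOn
          (fun P => ((Submodule.Quotient.mk P : (ι → ℤ) ⧸ LinearMap.range ((of w)ᵀ).mulVecLin),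
            fun i => ((of w)ᵀ).cramer P i / ((of w)ᵀ).det))
          (fun P hP => Finset.mem_product.2 ⟨Finset.mem_univ _, Fintype.mem_piFinset.2 fun i =>
            ediv_mem_Icc_of_natAbs_le hw0 (hcramer P hP i)⟩)
          fun P _ Q _ hPQ => eq_of_mk_eq_of_cramer_ediv_eq hw0 (congrArg Prod.fst hPQ)
            (congrFun (congrArg Prod.snd hPQ))
    _ = 3 ^ Fintype.card ι * (of w).det.natAbs := by
        rw [Finset.card_product, Finset.card_univ, ← Nat.card_eq_fintype_card, hcard,
          Fintype.card_piFinset, Finset.prod_const, Finset.card_univ, Int.card_Icc, det_transpose,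
          mul_comm]
        rfl
    _ ≤ 3 ^ Fintype.card ι * D := Nat.mul_le_mul_left _ (hD w hw)

lemma exists_det_ne_zero_of_span_eq_top {K : Type*} [Field K] {s : Set (ι → K)}
    (hs : Submodule.span K s = ⊤) : ∃ w : ι → ι → K, (∀ i, w i ∈ s) ∧ (of w).det ≠ 0 := by
  obtain ⟨b, hbs, hspan, hb⟩ := exists_linearIndependent K s
  let B := Module.Basis.mk hb (by rw [Subtype.range_coe, hspan, hs])
  let e := (Pi.basisFun K ι).indexEquiv B
  refine ⟨fun i => e i, fun i => hbs (e i).2, ?_⟩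
  rw [← isUnit_iff_ne_zero, ← isUnit_iff_isUnit_det, ← linearIndependent_rows_iff_isUnit]
  exact hb.comp e e.injective

lemma exists_dotProduct_eq_zero_of_forall_det_eq_zero {K : Type*} [Field K] {s : Set (ι → K)}
    (hdet : ∀ w : ι → ι → K, (∀ i, w i ∈ s) → (of w).det = 0) :
    ∃ v ≠ 0, ∀ x ∈ s, v ⬝ᵥ x = 0 := by
  have hlt : Submodule.span K s < ⊤ := lt_top_iff_ne_top.2 fun hs => by
    obtain ⟨w, hw, hw0⟩ := exists_det_ne_zero_of_span_eq_top hs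
    exact hw0 (hdet w hw)
  obtain ⟨f, hf, hker⟩ := Submodule.exists_le_ker_of_lt_top _ hlt
  obtain ⟨v, rfl⟩ := (dotProductEquiv K ι).surjective f
  refine ⟨v, fun hv => hf (by rw [hv, map_zero]), fun x hx => ?_⟩
  exact hker (Submodule.subset_span hx)

lemma natAbs_det_le_of_abs_mulVec_le_one {M : Matrix ι ι ℝ} (hM : M.det ≠ 0) {w : ι → ι → ℤ}
    (hw : ∀ j i, |(M *ᵥ fun k => (w j k : ℝ)) i| ≤ 1) :
    (of w).det.natAbs ≤ ⌊(Fintype.card ι).factorial / |M.det|⌋₊ := by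
  have hdet : |(M * ((of w).map (Int.cast : ℤ → ℝ))ᵀ).det| ≤ (Fintype.card ι).factorial := by
    simpa using det_le (abv := AbsoluteValue.abs) (x := (1 : ℝ))
      (A := M * ((of w).map (Int.cast : ℤ → ℝ))ᵀ) fun i j => hw j i
  rw [Nat.le_floor_iff (by positivity), le_div_iff₀ (abs_pos.2 hM), mul_comm]
  rwa [det_mul, det_transpose, abs_mul, ← Int.cast_det, ← Int.cast_abs, ← Nat.cast_natAbs] at hdet

theorem card_le_or_exists_abs_mulVec_sub_le {S : Finset (ι → ℤ)} {M : Matrix ι ι ℝ}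
    (hM : M.det ≠ 0) (hbox : ∀ P ∈ S, ∀ i, |(M *ᵥ fun j => (P j : ℝ)) i| ≤ 1) {T : ℕ} (hT : 0 < T) :
    S.card ≤ 3 ^ Fintype.card ι * ⌊(Fintype.card ι).factorial / |M.det|⌋₊ ∨
      S.card ≤ (3 * T) ^ (Fintype.card ι - 1) ∨
      ∃ P ∈ S, ∃ Q ∈ S, P ≠ Q ∧
        ∀ i, |(M *ᵥ fun j => (P j : ℝ) - Q j) i| ≤ Fintype.card ι / T := by
  by_cases hdet : ∃ w : ι → ι → ℤ, (∀ i, w i ∈ S) ∧ (of w).det ≠ 0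
  · exact Or.inl (card_le_of_natAbs_det_le hdet fun w hw =>
      natAbs_det_le_of_abs_mulVec_le_one hM fun j => hbox _ (hw j))
  push Not at hdet
  rw [or_iff_not_imp_left, or_iff_not_imp_left, not_le, not_le]
  intro _ hcard
  obtain ⟨v, hv, hperp⟩ := exists_dotProduct_eq_zero_of_forall_det_eq_zero
    (s := (fun P : ι → ℤ => M *ᵥ fun j => (P j : ℝ)) '' S) fun x hx => by
      choose w hw hwx using hx
      have hprod : of x = ((of w).map (Int.cast : ℤ → ℝ)) * Mᵀ := by
        ext i j
        rw [of_apply, ← hwx]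
        simp [mul_apply, mulVec, dotProduct, mul_comm]
      rw [hprod, det_mul, ← Int.cast_det, hdet w hw, Int.cast_zero, zero_mul]
  obtain ⟨P, hP, Q, hQ, hPQ, hclose⟩ := exists_abs_sub_le_of_dotProduct_eq_zero hv
    (fun P hP => hperp _ ⟨P, hP, rfl⟩) hbox hT hcard
  refine ⟨P, hP, Q, hQ, hPQ, fun i => ?_⟩
  have hsub : (M *ᵥ fun j => (P j : ℝ) - Q j) =
      M *ᵥ (fun j => (P j : ℝ)) - M *ᵥ fun j => (Q j : ℝ) := mulVec_sub _ _ _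
  rw [hsub]
  exact hclose i

end LatticePoints

section RemovedIntervals

/-- The cells of level `n + 1` meeting one of the intervals to be removed at step `n`, which are the
closed balls of radius `rad n i` about `cen i`, for the indices `i` with `I n i`. -/
def removed {ι : Type*} (R : ℕ → ℕ) (I : ℕ → ι → Prop) (cen : ι → ℝ) (rad : ℕ → ι → ℝ) (n : ℕ) :
    Set ℕ :=
  {a | ∃ i, I n i ∧
    (gridCell (branching R 0 (n + 1)) a ∩ Metric.closedBall (cen i) (rad n i)).Nonempty}

lemma card_le_of_separated {ι : Type*} {F : Finset ι} {x : ι → ℝ} {a b δ : ℝ} (hδ : 0 < δ)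
    (hab : a ≤ b) (hx : ∀ i ∈ F, x i ∈ Set.Icc a b)
    (hsep : ∀ i ∈ F, ∀ j ∈ F, i ≠ j → δ ≤ |x i - x j|) : (F.card : ℝ) ≤ (b - a) / δ + 1 := by
  have hmaps : ∀ i ∈ F, ⌊(x i - a) * δ⁻¹⌋₊ ∈ Finset.range (⌊(b - a) * δ⁻¹⌋₊ + 1) := by
    intro i hi
    rw [Finset.mem_range, Nat.lt_succ_iff]
    gcongr
    exact (hx i hi).2
  have hnonneg : ∀ i ∈ F, 0 ≤ (x i - a) * δ⁻¹ := fun i hi =>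
    mul_nonneg (sub_nonneg.2 (hx i hi).1) (inv_nonneg.2 hδ.le)
  have hinj : Set.InjOn (fun i => ⌊(x i - a) * δ⁻¹⌋₊) F := by
    intro i hi j hj hij
    by_contra hne
    have hfloor : ⌊(x i - a) * δ⁻¹⌋ = ⌊(x j - a) * δ⁻¹⌋ := by
      rw [← Int.natCast_floor_eq_floor (hnonneg i hi), ← Int.natCast_floor_eq_floor (hnonneg j hj)]
      exact congrArg Nat.cast hij
    have hclose := Int.abs_sub_lt_one_of_floor_eq_floor hfloor
    rw [← sub_mul, sub_sub_sub_cancel_right, abs_mul, abs_of_pos (inv_pos.2 hδ), ← div_eq_mul_inv,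
      div_lt_one hδ] at hclose
    exact hclose.not_ge (hsep i hi j hj hne)
  have hcard := Finset.card_le_card_of_injOn _ hmaps hinj
  rw [Finset.card_range] at hcard
  calc (F.card : ℝ) ≤ ⌊(b - a) * δ⁻¹⌋₊ + 1 := by exact_mod_cast hcard
    _ ≤ (b - a) / δ + 1 := by
      rw [div_eq_mul_inv]
      gcongr
      exact Nat.floor_le (mul_nonneg (sub_nonneg.2 hab) (inv_nonneg.2 hδ.le))

lemma mem_Icc_of_gridCell_inter_closedBall {N a : ℕ} {x r : ℝ}
    (h : (gridCell N a ∩ Metric.closedBall x r).Nonempty) :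
    x ∈ Set.Icc (a / N - r) ((a + 1) / N + r) := by
  obtain ⟨z, ⟨hlow, hupp⟩, hz⟩ := h
  rw [Real.closedBall_eq_Icc] at hz
  constructor <;> linarith [hz.1, hz.2]

lemma card_le_of_gridCell_inter_closedBall {N : ℕ} {x r : ℝ} (hr : 1 ≤ r * N) {B : Finset ℕ}
    (hB : ∀ a ∈ B, (gridCell N a ∩ Metric.closedBall x r).Nonempty) :
    (B.card : ℝ) ≤ 4 * (r * N) := by
  have hN : (0 : ℝ) < N := by
    refine Nat.cast_pos.2 (Nat.pos_of_ne_zero fun h => ?_)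
    rw [h, Nat.cast_zero, mul_zero] at hr
    linarith
  have hmem : ∀ a ∈ B, (a : ℝ) ∈ Set.Icc ((x - r) * N - 1) ((x + r) * N) := by
    intro a ha
    obtain ⟨hlow, hupp⟩ := mem_Icc_of_gridCell_inter_closedBall (hB a ha)
    rw [sub_le_iff_le_add, div_le_iff₀ hN] at hlow
    rw [← sub_le_iff_le_add, le_div_iff₀ hN] at hupp
    constructor <;> linarith
  have hcard := card_le_of_separated one_pos (by linarith) hmem fun a _ b _ hab => by
    exact_mod_cast Int.one_le_abs (sub_ne_zero.2 (Nat.cast_injective.ne hab : (a : ℤ) ≠ b))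
  linarith

variable {ι : Type*} {R : ℕ → ℕ} {I : ℕ → ι → Prop} {cen : ι → ℝ} {rad : ℕ → ι → ℝ} {n : ℕ}

lemma exists_card_le_sum_of_forall_mem_removed
    (hrad : ∀ n i, I n i → 1 ≤ rad n i * branching R 0 (n + 1)) {B : Finset ℕ}
    (hB : ∀ b ∈ B, b ∈ removed R I cen rad n) :
    ∃ F : Finset ι,
      (∀ i ∈ F, I n i ∧ ∃ b ∈ B,
        (gridCell (branching R 0 (n + 1)) b ∩ Metric.closedBall (cen i) (rad n i)).Nonempty) ∧
      (B.card : ℝ) ≤ 4 * (∑ i ∈ F, rad n i) * branching R 0 (n + 1) := by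
  classical
  choose f hf using fun b : B => hB b b.2
  let meeting := fun i => B.filter fun b =>
    (gridCell (branching R 0 (n + 1)) b ∩ Metric.closedBall (cen i) (rad n i)).Nonempty
  refine ⟨B.attach.image f, fun i hi => ?_, ?_⟩
  · obtain ⟨b, -, rfl⟩ := Finset.mem_image.1 hi
    exact ⟨(hf b).1, b, b.2, (hf b).2⟩
  have hcover : B ⊆ (B.attach.image f).biUnion meeting := fun b hb =>
    Finset.mem_biUnion.2 ⟨f ⟨b, hb⟩, Finset.mem_image_of_mem f (Finset.mem_attach B _),
      Finset.mem_filter.2 ⟨hb, (hf ⟨b, hb⟩).2⟩⟩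
  calc (B.card : ℝ) ≤ ∑ i ∈ B.attach.image f, ((meeting i).card : ℝ) := by
        exact_mod_cast (Finset.card_le_card hcover).trans Finset.card_biUnion_le
    _ ≤ ∑ i ∈ B.attach.image f, 4 * (rad n i * branching R 0 (n + 1)) := by
        refine Finset.sum_le_sum fun i hi => ?_
        obtain ⟨b, -, rfl⟩ := Finset.mem_image.1 hi
        exact card_le_of_gridCell_inter_closedBall (hrad n _ (hf b).1) fun a ha =>
          (Finset.mem_filter.1 ha).2
    _ = 4 * (∑ i ∈ B.attach.image f, rad n i) * branching R 0 (n + 1) := by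
        rw [← Finset.mul_sum, ← Finset.sum_mul, mul_assoc]

lemma isSparse_removed (hR : ∀ n, 0 < R n)
    (hrad : ∀ n i, I n i → 1 ≤ rad n i * branching R 0 (n + 1))
    (h : ∀ n, ∃ m ≤ n, ∀ c, IsAlive R (removed R I cen rad) m c → ∀ F : Finset ι,
      (∀ i ∈ F, I n i ∧
        (gridCell (branching R 0 m) c ∩ Metric.closedBall (cen i) (rad n i)).Nonempty) →
      16 * 2 ^ (n - m) * (∑ i ∈ F, rad n i) * branching R 0 m ≤ 1) :
    IsSparse R (removed R I cen rad) := by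
  classical
  intro n
  obtain ⟨m, hmn, hm⟩ := h n
  refine ⟨m, hmn, fun c hc => ?_⟩
  set Q := branching R m (n + 1)
  have hQ : 0 < Q := branching_pos hR m (n + 1)
  have hsplit : branching R 0 (n + 1) = branching R 0 m * Q :=
    (branching_mul_branching R (Nat.zero_le m) (by omega)).symm
  set B := (block Q c).filter (· ∈ removed R I cen rad n)
  obtain ⟨F, hF, hcard⟩ := exists_card_le_sum_of_forall_mem_removed (cen := cen) hrad (B := B)
    fun b hb => (Finset.mem_filter.1 hb).2
  have hsum := hm c hc F fun i hi => by
    obtain ⟨hIi, b, hb, hmeet⟩ := hF i hi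
    refine ⟨hIi, hmeet.mono (Set.inter_subset_inter_left _ ?_)⟩
    rw [hsplit, ← (mem_block hQ).1 (Finset.mem_filter.1 hb).1]
    exact gridCell_subset (branching_pos hR 0 m) hQ b
  have hfew : (4 * 2 ^ (n - m) * B.card : ℝ) ≤ Q := calc
    (4 * 2 ^ (n - m) * B.card : ℝ)
      ≤ 4 * 2 ^ (n - m) * (4 * (∑ i ∈ F, rad n i) * branching R 0 (n + 1)) := by gcongr
    _ = 16 * 2 ^ (n - m) * (∑ i ∈ F, rad n i) * branching R 0 m * Q := by
        rw [hsplit, Nat.cast_mul]; ring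
    _ ≤ 1 * Q := by gcongr
    _ = Q := one_mul _
  exact_mod_cast hfew

lemma lt_abs_sub_of_isAlive (hR : ∀ n, 0 < R n) {i : ι} (hi : I n i) {z : ℝ} {k a : ℕ} (hnk : n < k)
    (ha : IsAlive R (removed R I cen rad) k a) (hz : z ∈ gridCell (branching R 0 k) a) :
    rad n i < |z - cen i| := by
  induction k, (hnk : n + 1 ≤ k) using Nat.le_induction generalizing a with
  | base => exact not_le.1 fun hle => ha.2 ⟨i, hi, z, hz, hle⟩
  | succ k _ ih =>
    rw [branching_succ R (Nat.zero_le k)] at hz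
    exact ih ha.1 (gridCell_subset (branching_pos hR 0 k) (hR k) a hz)

end RemovedIntervals

section BadlyApproximable

open scoped NNReal

lemma nint_nonneg (x : ℝ) : 0 ≤ nint x := abs_nonneg _

lemma nint_le_abs_sub (x : ℝ) (z : ℤ) : nint x ≤ |x - z| := round_le x z

lemma nint_mul_eq_mul_abs_sub (x : ℝ) {q : ℝ} (hq : 0 < q) :
    nint (q * x) = q * |x - round (q * x) / q| := by
  rw [nint, ← abs_of_pos hq, ← abs_mul, abs_of_pos hq, mul_sub, mul_div_cancel₀ _ hq.ne']

/-- The number `θ` is badly approximable with constant `c`. -/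
def IsBadlyApproximableWith (c θ : ℝ) : Prop :=
  0 < c ∧ ∀ q : ℕ, 0 < q → c ≤ (q : ℝ) * nint (q * θ)

lemma one_div_den_mul_den_le_abs_sub {r s : ℚ} (h : r ≠ s) :
    1 / ((r.den : ℝ) * s.den) ≤ |(r : ℝ) - s| := by
  have hr : (0 : ℝ) < r.den := mod_cast r.den_pos
  have hs : (0 : ℝ) < s.den := mod_cast s.den_pos
  have heq : ((r : ℝ) - s) * (r.den * s.den) = (r.num * s.den - s.num * r.den : ℤ) := by
    rw [Rat.cast_def r, Rat.cast_def s]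
    push_cast
    field_simp
  have hne : r.num * s.den - s.num * r.den ≠ 0 := by
    rw [sub_ne_zero]
    exact mt Rat.eq_iff_mul_eq_mul.2 h
  rw [div_le_iff₀ (mul_pos hr hs), ← abs_of_pos (mul_pos hr hs), ← abs_mul, heq]
  exact_mod_cast Int.one_le_abs hne

lemma card_le_of_forall_den_sq_le {F : Finset ℚ} {a b D : ℝ} (hab : a ≤ b) (hD : 0 < D)
    (hF : ∀ r ∈ F, (r.den : ℝ) ^ 2 ≤ D) (hmem : ∀ r ∈ F, (r : ℝ) ∈ Set.Icc a b) :
    (F.card : ℝ) ≤ (b - a) * D + 1 := by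
  rw [← div_inv_eq_mul]
  refine card_le_of_separated (inv_pos.2 hD) hab hmem fun r hr s hs hrs => ?_
  refine le_trans ?_ (one_div_den_mul_den_le_abs_sub hrs)
  rw [← one_div]
  refine one_div_le_one_div_of_le (mod_cast Nat.mul_pos r.den_pos s.den_pos) ?_
  linarith [two_mul_le_add_sq (r.den : ℝ) s.den, hF r hr, hF s hs]

lemma exists_branching_le_lt {R : ℕ → ℕ} (hR : ∀ n, 2 ≤ R n) {N : ℕ} (hN : 0 < N) :
    ∃ n, branching R 0 n ≤ N ∧ N < branching R 0 (n + 1) := by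
  classical
  have hex : ∃ n, N < branching R 0 n :=
    ⟨N, Nat.lt_two_pow_self.trans_le (two_pow_le_branching hR N)⟩
  obtain ⟨n, hn⟩ : ∃ n, Nat.find hex = n + 1 := Nat.exists_eq_succ_of_ne_zero fun h0 => by
    have := Nat.find_spec hex
    rw [h0, branching_self] at this
    omega
  exact ⟨n, not_lt.1 (Nat.find_min hex (by omega)), hn ▸ Nat.find_spec hex⟩

/-- The rationals whose neighbourhoods are removed at step `n` in the construction of badly
approximable numbers: those whose squared denominator is comparable with the number of cells. -/
def IsRationalOfLevel (R : ℕ → ℕ) (n : ℕ) (r : ℚ) : Prop :=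
  branching R 0 n ≤ 64 * r.den ^ 2 ∧ 64 * r.den ^ 2 < branching R 0 (n + 1)

/-- The cells of level `n + 1` within one cell length of a rational of level `n`. -/
def removedNearRationals (R : ℕ → ℕ) : ℕ → Set ℕ :=
  removed R (IsRationalOfLevel R) (fun r => (r : ℝ)) fun n _ => 1 / branching R 0 (n + 1)

lemma isSparse_removedNearRationals {R : ℕ → ℕ} (hR : ∀ n, 22 ≤ R n) :
    IsSparse R (removedNearRationals R) := by
  have hR0 : ∀ n, 0 < R n := fun n => by have := hR n; omega
  have hN : ∀ n, (0 : ℝ) < branching R 0 n := fun n => mod_cast branching_pos hR0 0 n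
  refine isSparse_removed hR0 (fun n r _ => (one_div_mul_cancel (hN _).ne').ge) fun n =>
    ⟨n, le_rfl, fun c _ F hF => ?_⟩
  have hsucc : (branching R 0 (n + 1) : ℝ) = branching R 0 n * R n := by
    rw [branching_succ R (Nat.zero_le n), Nat.cast_mul]
  have hRn : (22 : ℝ) ≤ R n := mod_cast hR n
  have hN0 := hN n
  have hab : (c / branching R 0 n - 1 / branching R 0 (n + 1) : ℝ) ≤
      (c + 1) / branching R 0 n + 1 / branching R 0 (n + 1) := by
    linarith [add_div (c : ℝ) 1 (branching R 0 n), one_div_pos.2 (hN n), one_div_pos.2 (hN (n + 1))]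
  have hcard := card_le_of_forall_den_sq_le (F := F) (D := branching R 0 (n + 1) / 64)
    hab (div_pos (hN _) (by norm_num)) (fun r hr => by
      rw [le_div_iff₀' (by norm_num)]
      exact_mod_cast (hF r hr).1.2.le)
    fun r hr => mem_Icc_of_gridCell_inter_closedBall (hF r hr).2
  have hlen : ((c + 1) / branching R 0 n + 1 / branching R 0 (n + 1) -
      (c / branching R 0 n - 1 / branching R 0 (n + 1))) * (branching R 0 (n + 1) / 64) + 1
      = ((R n : ℝ) + 66) / 64 := by
    rw [hsucc]
    field_simp
    ring
  rw [hlen] at hcard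
  rw [Finset.sum_const, nsmul_eq_mul, Nat.sub_self, pow_zero, hsucc]
  field_simp
  linarith

lemma isBadlyApproximableWith_of_forall_isAlive {R : ℕ → ℕ} {K : ℕ} (hR : ∀ n, 2 ≤ R n)
    (hK : ∀ n, R n ≤ K) {z : ℝ}
    (hz : ∀ n, ∃ a, IsAlive R (removedNearRationals R) n a ∧ z ∈ gridCell (branching R 0 n) a) :
    IsBadlyApproximableWith (1 / (64 * K)) z := by
  have hR0 : ∀ n, 0 < R n := fun n => zero_lt_two.trans_le (hR n)
  have hK0 : (0 : ℝ) < K := mod_cast (hR0 0).trans_le (hK 0)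
  refine ⟨by positivity, fun q hq => ?_⟩
  have hq' : (0 : ℝ) < q := mod_cast hq
  obtain ⟨r, hr, hden⟩ : ∃ r : ℚ, (r : ℝ) = round (q * z) / q ∧ r.den ≤ q := by
    refine ⟨Rat.divInt (round (q * z)) q, by rw [Rat.divInt_eq_div]; push_cast; rfl, ?_⟩
    exact Nat.le_of_dvd hq (Int.natCast_dvd_natCast.1 (Rat.den_dvd _ _))
  obtain ⟨n, hlow, hupp⟩ := exists_branching_le_lt hR (N := 64 * r.den ^ 2)
    (Nat.mul_pos (by norm_num) (pow_pos r.den_pos 2))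
  obtain ⟨a, ha, hza⟩ := hz (n + 1)
  have hfar := lt_abs_sub_of_isAlive hR0 ⟨hlow, hupp⟩ n.lt_succ_self ha hza
  have hsize : (branching R 0 (n + 1) : ℝ) ≤ 64 * K * q ^ 2 := by
    have : branching R 0 (n + 1) ≤ 64 * K * q ^ 2 := calc
      branching R 0 (n + 1) = branching R 0 n * R n := branching_succ R n.zero_le
      _ ≤ 64 * q ^ 2 * K := by
          gcongr
          · exact hlow.trans (by gcongr)
          · exact hK n
      _ = 64 * K * q ^ 2 := by ring
    exact_mod_cast this
  rw [nint_mul_eq_mul_abs_sub z hq', ← hr]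
  calc (1 : ℝ) / (64 * K) = q * (q * (1 / (64 * K * q ^ 2))) := by field_simp
    _ ≤ q * (q * (1 / branching R 0 (n + 1))) := by
        have : (0 : ℝ) < branching R 0 (n + 1) := mod_cast branching_pos hR0 0 (n + 1)
        gcongr
    _ ≤ q * (q * |z - r|) := by gcongr

lemma isSpread_badlyApproximable {s : ℝ≥0} (hs : s < 1) :
    IsSpread s {θ : ℝ | ∃ c, IsBadlyApproximableWith c θ} := by
  have hs' : (0 : ℝ) < 1 - s := sub_pos.2 (mod_cast hs)
  obtain ⟨d, hd⟩ := exists_nat_ge (3 / (1 - s : ℝ))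
  rw [div_le_iff₀ hs'] at hd
  have h32 : 2 ^ 5 ≤ 2 ^ (d + 5) := Nat.pow_le_pow_right (by norm_num) (by omega)
  have hR : ∀ n : ℕ, 22 ≤ (fun _ => 2 ^ (d + 5)) n := fun _ => by dsimp only; omega
  refine (isSparse_removedNearRationals hR).isSpread (fun n => (hR n).trans' (by norm_num))
    (C := 2 ^ (d + 2)) (fun n => ?_) fun z hz =>
      ⟨_, isBadlyApproximableWith_of_forall_isAlive (fun n => (hR n).trans' (by norm_num))
        (fun _ => le_rfl) hz⟩
  have hdiv : 2 ^ (d + 5) / 8 = 2 ^ (d + 2) := by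
    rw [show d + 5 = d + 2 + 3 by omega, pow_add]
    exact Nat.mul_div_cancel _ (by norm_num)
  simp only [branching, Finset.prod_const, Nat.card_Ico, Nat.sub_zero, hdiv]
  push_cast
  rw [← pow_succ', ← pow_mul, ← pow_mul, ← Real.rpow_natCast, ← Real.rpow_mul zero_le_two,
    ← Real.rpow_natCast]
  refine Real.rpow_le_rpow_of_exponent_le one_le_two ?_
  push_cast
  nlinarith [mul_nonneg hs'.le (n.cast_nonneg : (0 : ℝ) ≤ n)]

end BadlyApproximable

section FractionsInBox

/-- The height of a denominator `x` of approximations to `θ`. The fractions `p / x` have to be kept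
at a distance of about `1 / height θ c x`, up to logarithms. -/
noncomputable def height (θ c : ℝ) (x : ℕ) : ℝ := (x : ℝ) ^ 2 * nint (x * θ) / c

/-- The fraction `p / q`, encoded as the pair `(p, q)`, has denominator in `[X, 2 * X)` of height in
`[A, 2 * A)`, and lies in a neighbourhood of `β` of size about `ℓ`. -/
structure IsInBox (θ c β X A ℓ : ℝ) (P : ℤ × ℕ) : Prop where
  le_den : X ≤ P.2
  den_lt : (P.2 : ℝ) < 2 * X
  le_height : A ≤ height θ c P.2
  height_lt : height θ c P.2 < 2 * A
  abs_sub_le : |P.2 * β - P.1| ≤ 2 * X * ℓ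

variable {θ c β X A ℓ : ℝ} {G : Finset (ℤ × ℕ)}

lemma IsBadlyApproximableWith.le_half (hθ : IsBadlyApproximableWith c θ) : c ≤ 1 / 2 := by
  have h := hθ.2 1 one_pos
  rw [Nat.cast_one, one_mul, one_mul] at h
  exact h.trans (abs_sub_round θ)

lemma IsBadlyApproximableWith.le_height (hθ : IsBadlyApproximableWith c θ) {x : ℕ} (hx : 0 < x) :
    (x : ℝ) ≤ height θ c x := by
  rw [height, le_div_iff₀ hθ.1, pow_two, mul_assoc]
  exact mul_le_mul_of_nonneg_left (hθ.2 x hx) x.cast_nonneg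

lemma nint_sub_le (x y : ℝ) : nint (x - y) ≤ nint x + nint y := calc
  nint (x - y) ≤ |x - y - (round x - round y : ℤ)| := nint_le_abs_sub _ _
  _ = |(x - round x) - (y - round y)| := by push_cast; ring_nf
  _ ≤ nint x + nint y := abs_sub _ _

lemma IsBadlyApproximableWith.le_abs_sub_mul (hθ : IsBadlyApproximableWith c θ) {x y : ℕ}
    (hxy : x ≠ y) : c ≤ |(x : ℝ) - y| * (nint (x * θ) + nint (y * θ)) := by
  wlog hlt : y < x generalizing x y
  · rw [abs_sub_comm, add_comm]
    exact this hxy.symm (by omega)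
  have hpos : (0 : ℝ) ≤ x - y := sub_nonneg.2 (mod_cast hlt.le)
  calc c ≤ ((x - y : ℕ) : ℝ) * nint ((x - y : ℕ) * θ) := hθ.2 _ (Nat.sub_pos_of_lt hlt)
    _ = (x - y) * nint (x * θ - y * θ) := by rw [Nat.cast_sub hlt.le, sub_mul (x : ℝ) y θ]
    _ ≤ |(x : ℝ) - y| * (nint (x * θ) + nint (y * θ)) := by
        rw [abs_of_nonneg hpos]
        gcongr
        exact nint_sub_le _ _

lemma IsInBox.nint_le (hc : 0 < c) (hX : 0 < X) {P : ℤ × ℕ} (hP : IsInBox θ c β X A ℓ P) :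
    nint (P.2 * θ) ≤ 2 * c * A / X ^ 2 := by
  have hheight := hP.height_lt
  rw [height, div_lt_iff₀ hc] at hheight
  rw [le_div_iff₀ (by positivity)]
  calc nint (P.2 * θ) * X ^ 2 ≤ nint (P.2 * θ) * P.2 ^ 2 := by
        gcongr
        · exact nint_nonneg _
        · exact hP.le_den
    _ ≤ 2 * c * A := by linarith

lemma card_image_snd_le_of_isInBox (hθ : IsBadlyApproximableWith c θ) (hX : 0 < X) (hA : 0 < A)
    (hG : ∀ P ∈ G, IsInBox θ c β X A ℓ P) :
    ((G.image Prod.snd).card : ℝ) ≤ 4 * A / X + 1 := by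
  have hsep : ∀ q ∈ G.image Prod.snd, ∀ q' ∈ G.image Prod.snd, q ≠ q' →
      X ^ 2 / (4 * A) ≤ |(q : ℝ) - q'| := by
    intro q hq q' hq' hne
    obtain ⟨P, hP, rfl⟩ := Finset.mem_image.1 hq
    obtain ⟨P', hP', rfl⟩ := Finset.mem_image.1 hq'
    have hc := hθ.1
    have hle : c ≤ |(P.2 : ℝ) - P'.2| * (4 * c * A / X ^ 2) := calc
      c ≤ |(P.2 : ℝ) - P'.2| * (nint (P.2 * θ) + nint (P'.2 * θ)) := hθ.le_abs_sub_mul hne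
      _ ≤ |(P.2 : ℝ) - P'.2| * (2 * c * A / X ^ 2 + 2 * c * A / X ^ 2) := by
          gcongr
          exacts [(hG P hP).nint_le hc hX, (hG P' hP').nint_le hc hX]
      _ = |(P.2 : ℝ) - P'.2| * (4 * c * A / X ^ 2) := by ring
    rw [← mul_div_assoc, le_div_iff₀ (by positivity)] at hle
    rw [div_le_iff₀ (by positivity)]
    refine le_of_mul_le_mul_left ?_ hc
    linarith
  have hmem : ∀ q ∈ G.image Prod.snd, (q : ℝ) ∈ Set.Icc X (2 * X) := by
    intro q hq
    obtain ⟨P, hP, rfl⟩ := Finset.mem_image.1 hq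
    exact ⟨(hG P hP).le_den, (hG P hP).den_lt.le⟩
  refine (card_le_of_separated (by positivity) (by linarith) hmem hsep).trans_eq ?_
  field_simp
  ring

lemma card_filter_snd_eq_le_of_isInBox (hXℓ : 0 ≤ X * ℓ) (hG : ∀ P ∈ G, IsInBox θ c β X A ℓ P)
    (q : ℕ) : ((G.filter (·.2 = q)).card : ℝ) ≤ 4 * (X * ℓ) + 1 := by
  have hmem : ∀ P ∈ G.filter (·.2 = q),
      (P.1 : ℝ) ∈ Set.Icc (q * β - 2 * X * ℓ) (q * β + 2 * X * ℓ) := by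
    intro P hP
    obtain ⟨hPG, rfl⟩ := Finset.mem_filter.1 hP
    have := abs_le.1 (hG P hPG).abs_sub_le
    constructor <;> linarith
  have hsep : ∀ P ∈ G.filter (·.2 = q), ∀ P' ∈ G.filter (·.2 = q), P ≠ P' →
      (1 : ℝ) ≤ |(P.1 : ℝ) - P'.1| := by
    intro P hP P' hP' hne
    have hden := (Finset.mem_filter.1 hP).2.trans (Finset.mem_filter.1 hP').2.symm
    exact_mod_cast Int.one_le_abs (sub_ne_zero.2 fun h => hne (Prod.ext h hden))
  refine (card_le_of_separated one_pos (by linarith) hmem hsep).trans_eq ?_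
  ring

lemma card_le_of_isInBox_of_one_le (hθ : IsBadlyApproximableWith c θ) (hX : 0 < X) (hXA : X ≤ A)
    (hXℓ : 1 ≤ X * ℓ) (hG : ∀ P ∈ G, IsInBox θ c β X A ℓ P) : (G.card : ℝ) ≤ 25 * (A * ℓ) := by
  have hA : 0 < A := hX.trans_le hXA
  calc (G.card : ℝ) = ∑ q ∈ G.image Prod.snd, ((G.filter (·.2 = q)).card : ℝ) := by
        exact_mod_cast Finset.card_eq_sum_card_image Prod.snd G
    _ ≤ (G.image Prod.snd).card • (4 * (X * ℓ) + 1) :=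
        Finset.sum_le_card_nsmul _ _ _ fun q _ =>
          card_filter_snd_eq_le_of_isInBox (by linarith) hG q
    _ ≤ (4 * A / X + 1) * (4 * (X * ℓ) + 1) := by
        rw [nsmul_eq_mul]
        gcongr
        exact card_image_snd_le_of_isInBox hθ hX hA hG
    _ ≤ (5 * A / X) * (5 * (X * ℓ)) := by
        gcongr
        · rw [← le_sub_iff_add_le', ← sub_div, one_le_div hX]
          linarith
        · linarith
    _ = 25 * (A * ℓ) := by field_simp; ring

end FractionsInBox

section SimultaneousApproximation

open Matrix

/-- The linear map taking the box `|x| ≤ 2 * X`, `|x * θ - y| ≤ ε`, `|x * β - p| ≤ η` of points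
`(x, y, p)` to the unit cube. -/
noncomputable def boxMatrix (θ β X ε η : ℝ) : Matrix (Fin 3) (Fin 3) ℝ :=
  !![1 / (2 * X), 0, 0; θ / ε, -1 / ε, 0; β / η, 0, -1 / η]

variable {θ c β X ε η : ℝ}

lemma det_boxMatrix (θ β X ε η : ℝ) : (boxMatrix θ β X ε η).det = 1 / (2 * X * ε * η) := by
  rw [boxMatrix, Matrix.det_fin_three]
  simp only [of_apply, cons_val', cons_val_zero, cons_val_one, cons_val]
  ring

lemma abs_boxMatrix_mulVec_le_iff (hX : 0 < X) (hε : 0 < ε) (hη : 0 < η) {v : Fin 3 → ℝ} {t : ℝ} :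
    (∀ i, |(boxMatrix θ β X ε η *ᵥ v) i| ≤ t) ↔
      |v 0| ≤ 2 * X * t ∧ |v 0 * θ - v 1| ≤ ε * t ∧ |v 0 * β - v 2| ≤ η * t := by
  have h₀ : (boxMatrix θ β X ε η *ᵥ v) 0 = v 0 / (2 * X) := by
    simp [boxMatrix, mulVec, dotProduct, Fin.sum_univ_three]; ring
  have h₁ : (boxMatrix θ β X ε η *ᵥ v) 1 = (v 0 * θ - v 1) / ε := by
    simp [boxMatrix, mulVec, dotProduct, Fin.sum_univ_three]; ring
  have h₂ : (boxMatrix θ β X ε η *ᵥ v) 2 = (v 0 * β - v 2) / η := by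
    simp [boxMatrix, mulVec, dotProduct, Fin.sum_univ_three]; ring
  have hdiv : ∀ {a b : ℝ}, 0 < b → (|a / b| ≤ t ↔ |a| ≤ b * t) := fun {a b} hb => by
    rw [abs_div, abs_of_pos hb, div_le_iff₀' hb]
  rw [Fin.forall_fin_succ, Fin.forall_fin_two]
  exact and_congr (h₀ ▸ hdiv (by positivity))
    (and_congr (h₁ ▸ hdiv hε) (h₂ ▸ hdiv hη))

lemma nint_natAbs_mul_le (x y : ℤ) (θ : ℝ) : nint (x.natAbs * θ) ≤ |x * θ - y| := by
  rw [Nat.cast_natAbs, Int.cast_abs]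
  rcases abs_cases (x : ℝ) with ⟨h, -⟩ | ⟨h, -⟩ <;> rw [h]
  · exact nint_le_abs_sub _ _
  · refine (nint_le_abs_sub _ (-y)).trans_eq ?_
    rw [← abs_neg]
    push_cast
    ring_nf

lemma exists_nint_le_of_ne_zero {v : Fin 3 → ℤ} (hv : v ≠ 0) (hε : ε < 1) (hη : η < 1)
    (hX : |(v 0 : ℝ)| ≤ X) (hθ : |v 0 * θ - v 1| ≤ ε) (hβ : |v 0 * β - v 2| ≤ η) :
    ∃ d : ℕ, 0 < d ∧ (d : ℝ) ≤ X ∧ nint (d * θ) ≤ ε ∧ nint (d * β) ≤ η := by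
  refine ⟨(v 0).natAbs, Int.natAbs_pos.2 fun h₀ => hv ?_, ?_,
    (nint_natAbs_mul_le _ _ θ).trans hθ, (nint_natAbs_mul_le _ _ β).trans hβ⟩
  · have hzero : ∀ (i : Fin 3) {α t : ℝ}, t < 1 → |v 0 * α - v i| ≤ t → v i = 0 := by
      intro i α t ht h
      rw [h₀, Int.cast_zero, zero_mul, zero_sub, abs_neg] at h
      exact Int.abs_lt_one_iff.1 (mod_cast h.trans_lt ht)
    ext i
    fin_cases i
    exacts [h₀, hzero 1 hε hθ, hzero 2 hη hβ]
  · rwa [Nat.cast_natAbs, Int.cast_abs]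

lemma card_le_or_exists_nint_le (hX : 0 < X) (hε : 0 < ε) (hη : 0 < η) {S : Finset (Fin 3 → ℤ)}
    (hS : ∀ v ∈ S, |(v 0 : ℝ)| ≤ 2 * X ∧ |v 0 * θ - v 1| ≤ ε ∧ |v 0 * β - v 2| ≤ η) {T : ℕ}
    (hεT : 3 * ε < T) (hηT : 3 * η < T) :
    (S.card : ℝ) ≤ 324 * (X * ε * η) ∨ S.card ≤ (3 * T) ^ 2 ∨ ∃ d : ℕ, 0 < d ∧
      (d : ℝ) ≤ 6 * X / T ∧ nint (d * θ) ≤ 3 * ε / T ∧ nint (d * β) ≤ 3 * η / T := by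
  have hT : (0 : ℝ) < T := by linarith
  have hdet : 0 < (boxMatrix θ β X ε η).det := by rw [det_boxMatrix]; positivity
  have hcube : ∀ v ∈ S, ∀ i, |(boxMatrix θ β X ε η *ᵥ fun j => (v j : ℝ)) i| ≤ 1 := by
    intro v hv
    rw [abs_boxMatrix_mulVec_le_iff hX hε hη]
    simpa only [mul_one] using hS v hv
  rcases card_le_or_exists_abs_mulVec_sub_le hdet.ne' hcube (T := T) (mod_cast hT) with
    hcard | hcard | ⟨v, -, w, -, hne, hclose⟩
  · left
    rw [Fintype.card_fin, abs_of_pos hdet, det_boxMatrix] at hcard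
    calc (S.card : ℝ) ≤ 3 ^ 3 * ⌊((3).factorial : ℝ) / (1 / (2 * X * ε * η))⌋₊ := mod_cast hcard
      _ ≤ 3 ^ 3 * (((3).factorial : ℝ) / (1 / (2 * X * ε * η))) := by
          gcongr
          exact Nat.floor_le (by positivity)
      _ = 324 * (X * ε * η) := by rw [Nat.factorial]; field_simp; norm_num [Nat.factorial]
  · exact Or.inr (Or.inl hcard)
  · right; right
    rw [Fintype.card_fin, abs_boxMatrix_mulVec_le_iff hX hε hη] at hclose
    obtain ⟨h₀, h₁, h₂⟩ := hclose
    refine exists_nint_le_of_ne_zero (sub_ne_zero.2 hne) ((div_lt_one hT).2 hεT)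
      ((div_lt_one hT).2 hηT) ?_ ?_ ?_ <;> simp only [Pi.sub_apply, Int.cast_sub]
    · exact h₀.trans_eq (by push_cast; ring)
    · exact h₁.trans_eq (by push_cast; ring)
    · exact h₂.trans_eq (by push_cast; ring)

/-- The lattice point `(x, y, p)` of the fraction `p / x`, where `y / x` is the best approximation
to `θ` with the denominator `x`. -/
noncomputable def latticePoint (θ : ℝ) (P : ℤ × ℕ) : Fin 3 → ℤ := ![P.2, round (P.2 * θ), P.1]

lemma latticePoint_injective (θ : ℝ) : Function.Injective (latticePoint θ) := fun _ _ h =>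
  Prod.ext (congrFun h 2) (Nat.cast_injective (congrFun h 0))

variable {A ℓ : ℝ}

lemma IsInBox.two_mul_div_le_four (hc : 0 < c) (hX : 0 < X) {P : ℤ × ℕ}
    (hP : IsInBox θ c β X A ℓ P) : 2 * c * A / X ^ 2 ≤ 4 := by
  rw [div_le_iff₀ (by positivity)]
  calc 2 * c * A ≤ 2 * c * height θ c P.2 := by gcongr; exact hP.le_height
    _ = 2 * (P.2 ^ 2 * nint (P.2 * θ)) := by rw [height]; field_simp
    _ ≤ 2 * ((2 * X) ^ 2 * (1 / 2)) := by
        gcongr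
        exacts [nint_nonneg _, hP.den_lt.le, abs_sub_round _]
    _ = 4 * X ^ 2 := by ring

lemma card_le_or_exists_of_isInBox (hθ : IsBadlyApproximableWith c θ) (hX : 0 < X) (hA : 0 < A)
    (hℓ : 0 < ℓ) (hXℓ : X * ℓ < 1) {G : Finset (ℤ × ℕ)} (hG : ∀ P ∈ G, IsInBox θ c β X A ℓ P)
    {T : ℕ} (hT : 13 ≤ T) (hTA : (T : ℝ) ^ 2 ≤ A * ℓ) :
    (G.card : ℝ) ≤ 648 * (A * ℓ) ∨ ∃ d : ℕ, 0 < d ∧ height θ c d ≤ 216 * A / T ^ 3 ∧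
      d * nint (d * θ) / c * nint (d * β) ≤ 216 * (A * ℓ) / T ^ 3 := by
  rcases G.eq_empty_or_nonempty with rfl | ⟨P₀, hP₀⟩
  · exact Or.inl (by rw [Finset.card_empty, Nat.cast_zero]; positivity)
  have hc := hθ.1
  have hT' : (13 : ℝ) ≤ T := mod_cast hT
  have hε : 0 < 2 * c * A / X ^ 2 := by positivity
  have hbox : ∀ v ∈ G.map ⟨_, latticePoint_injective θ⟩, |(v 0 : ℝ)| ≤ 2 * X ∧
      |v 0 * θ - v 1| ≤ 2 * c * A / X ^ 2 ∧ |v 0 * β - v 2| ≤ 2 * X * ℓ := by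
    intro v hv
    obtain ⟨P, hP, rfl⟩ := Finset.mem_map.1 hv
    exact ⟨(abs_of_nonneg P.2.cast_nonneg).trans_le (hG P hP).den_lt.le,
      (hG P hP).nint_le hc hX, (hG P hP).abs_sub_le⟩
  rcases card_le_or_exists_nint_le hX hε (by positivity) hbox (T := T)
    (by linarith [(hG P₀ hP₀).two_mul_div_le_four hc hX]) (by linarith) with
    hcard | hcard | ⟨d, hd, hdX, hdθ, hdβ⟩
  · left
    rw [Finset.card_map] at hcard
    calc (G.card : ℝ) ≤ 324 * (X * (2 * c * A / X ^ 2) * (2 * X * ℓ)) := hcard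
      _ = 1296 * c * (A * ℓ) := by field_simp; ring
      _ ≤ 1296 * (1 / 2) * (A * ℓ) := by gcongr; exact hθ.le_half
      _ = 648 * (A * ℓ) := by ring
  · left
    rw [Finset.card_map] at hcard
    calc (G.card : ℝ) ≤ (3 * T) ^ 2 := mod_cast hcard
      _ = 9 * (T : ℝ) ^ 2 := by ring
      _ ≤ 648 * (A * ℓ) := by nlinarith
  · refine Or.inr ⟨d, hd, ?_, ?_⟩
    · calc height θ c d ≤ (6 * X / T) ^ 2 * (3 * (2 * c * A / X ^ 2) / T) / c := by
            rw [height]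
            gcongr
            exact nint_nonneg _
        _ = 216 * A / T ^ 3 := by field_simp; ring
    · calc d * nint (d * θ) / c * nint (d * β)
          ≤ 6 * X / T * (3 * (2 * c * A / X ^ 2) / T) / c * (3 * (2 * X * ℓ) / T) := by
            gcongr
            exacts [nint_nonneg _, nint_nonneg _]
        _ = 216 * (A * ℓ) / T ^ 3 := by field_simp; ring

end SimultaneousApproximation

section GridParameters

/-- The binary logarithm of the number of children of a node of level `n` in the tree of a fibre. It
is of order `log n`, which is where the factor `log (log x)` of the theorem comes from. -/
def logStep (n : ℕ) : ℕ := 100 + 4 * Nat.log 2 (n + 1)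

/-- The binary logarithm of the number of grid cells of level `n` of the tree of a fibre. -/
def logGrid (n : ℕ) : ℕ := ∑ i ∈ Finset.range n, logStep i

/-- The number of children of a node of level `n` in the tree of a fibre. -/
abbrev fibreBranching (n : ℕ) : ℕ := 2 ^ logStep n

lemma logStep_mono : Monotone logStep := fun m n h => by
  have := Nat.log_mono_right (b := 2) (Nat.succ_le_succ h)
  simp only [logStep, Nat.succ_eq_add_one] at *
  omega

lemma hundred_le_logStep (n : ℕ) : 100 ≤ logStep n := Nat.le_add_right _ _

lemma logStep_le (n : ℕ) : logStep n ≤ 100 + 4 * n := by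
  have := Nat.log_lt_self 2 (x := n + 1) (by omega)
  rw [logStep]
  omega

lemma logGrid_zero : logGrid 0 = 0 := rfl

lemma logGrid_succ (n : ℕ) : logGrid (n + 1) = logGrid n + logStep n := Finset.sum_range_succ _ _

lemma logGrid_mono : Monotone logGrid :=
  monotone_nat_of_le_succ fun n => by rw [logGrid_succ]; omega

lemma logGrid_le (n : ℕ) : logGrid n ≤ n * logStep n := calc
  logGrid n ≤ ∑ _i ∈ Finset.range n, logStep n :=
    Finset.sum_le_sum fun _ hi => logStep_mono (Finset.mem_range.1 hi).le
  _ = n * logStep n := by rw [Finset.sum_const, Finset.card_range, smul_eq_mul]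

lemma sum_logStep_sub_three_add (n : ℕ) :
    ∑ i ∈ Finset.range n, (logStep i - 3) + 3 * n = logGrid n := by
  induction n with
  | zero => rfl
  | succ n ih =>
    have := hundred_le_logStep n
    rw [Finset.sum_range_succ, logGrid_succ]
    omega

lemma three_mul_le_logGrid (n : ℕ) : 3 * n ≤ logGrid n :=
  sum_logStep_sub_three_add n ▸ Nat.le_add_left _ _

lemma branching_fibreBranching (n : ℕ) :
    branching fibreBranching 0 n = 2 ^ logGrid n := by
  rw [branching, Nat.Ico_zero_eq_range, Finset.prod_pow_eq_pow_sum, logGrid]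

lemma logGrid_sub_logGrid_pred_le (n : ℕ) : logGrid n - logGrid (n - 1) ≤ logStep n := by
  cases n with
  | zero => exact Nat.zero_le _
  | succ n =>
    rw [logGrid_succ, Nat.add_sub_cancel, Nat.add_sub_cancel_left]
    exact logStep_mono n.le_succ

lemma exists_logGrid_pred_le_lt {a m : ℕ} (h : a < logGrid m) :
    ∃ n ≤ m, logGrid (n - 1) ≤ a ∧ a < logGrid n := by
  induction m with
  | zero => exact absurd h a.not_lt_zero
  | succ m ih =>
    rcases lt_or_ge a (logGrid m) with hlt | hge
    · obtain ⟨n, hn, han⟩ := ih hlt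
      exact ⟨n, hn.trans m.le_succ, han⟩
    · exact ⟨m + 1, le_rfl, hge, h⟩

lemma logStep_mul_logGrid_le (n : ℕ) : logStep n * logGrid n ≤ 2 ^ logStep n := by
  set L := Nat.log 2 (n + 1) with hL
  have hn : n + 1 < 2 ^ (L + 1) := Nat.lt_pow_succ_log_self one_lt_two _
  have hstep : logStep n ≤ 2 ^ (L + 7) := by
    have hlt : L + 1 ≤ 2 ^ L := Nat.lt_two_pow_self
    rw [pow_add, logStep, ← hL]
    omega
  calc logStep n * logGrid n ≤ logStep n * (n * logStep n) := Nat.mul_le_mul_left _ (logGrid_le n)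
    _ ≤ 2 ^ (L + 7) * (2 ^ (L + 1) * 2 ^ (L + 7)) := by gcongr; omega
    _ = 2 ^ (3 * L + 15) := by ring
    _ ≤ 2 ^ logStep n := Nat.pow_le_pow_right two_pos (by rw [logStep, ← hL]; omega)

lemma mul_le_logGrid_add (K n : ℕ) : K * n ≤ logGrid n + K * 2 ^ K := by
  induction n with
  | zero => exact Nat.zero_le _
  | succ n ih =>
    rcases lt_or_ge n (2 ^ K) with hlt | hge
    · exact (Nat.mul_le_mul_left K hlt).trans (Nat.le_add_left _ _)
    · have hK : K ≤ Nat.log 2 (n + 1) := Nat.le_log_of_pow_le one_lt_two (by omega)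
      rw [logGrid_succ, mul_add, logStep]
      omega

lemma exists_mul_logGrid_succ_add_le {s : ℝ} (hs : s < 1) :
    ∃ N : ℕ, ∀ n : ℕ, s * logGrid (n + 1) + 3 * n ≤ N + logGrid n := by
  obtain ⟨K, hK⟩ := exists_nat_ge (7 / (1 - s))
  rw [div_le_iff₀ (sub_pos.2 hs)] at hK
  obtain ⟨N, hN⟩ := exists_nat_ge (100 + (1 - s) * (K * 2 ^ K))
  refine ⟨N, fun n => ?_⟩
  have hstep : s * logStep n ≤ 100 + 4 * n :=
    (mul_le_of_le_one_left (Nat.cast_nonneg _) hs.le).trans (mod_cast logStep_le n)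
  have hgrid : (1 - s) * (K * n) ≤ (1 - s) * (logGrid n + K * 2 ^ K) :=
    mul_le_mul_of_nonneg_left (mod_cast mul_le_logGrid_add K n) (sub_nonneg.2 hs.le)
  have hn : 7 * (n : ℝ) ≤ K * (1 - s) * n := mul_le_mul_of_nonneg_right hK n.cast_nonneg
  rw [logGrid_succ]
  push_cast
  linarith

open scoped NNReal in
lemma exists_branching_fibreBranching_rpow_le {s : ℝ} (hs : s < 1) :
    ∃ C : ℝ≥0, ∀ n, (branching fibreBranching 0 (n + 1) : ℝ) ^ s ≤
      C * branching (fun i => fibreBranching i / 8) 0 n := by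
  obtain ⟨N, hN⟩ := exists_mul_logGrid_succ_add_le hs
  refine ⟨2 ^ N, fun n => ?_⟩
  have hdiv : ∀ i, 2 ^ logStep i / 8 = 2 ^ (logStep i - 3) := fun i =>
    Nat.pow_div (le_trans (by norm_num : 3 ≤ 100) (hundred_le_logStep i)) two_pos
  have hsum : (∑ i ∈ Finset.range n, (logStep i - 3) : ℕ) + 3 * (n : ℝ) = logGrid n :=
    mod_cast sum_logStep_sub_three_add n
  simp only [fibreBranching, hdiv]
  rw [branching_fibreBranching, branching, Nat.Ico_zero_eq_range, Finset.prod_pow_eq_pow_sum]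
  push_cast
  rw [← pow_add, ← Real.rpow_natCast, ← Real.rpow_natCast, ← Real.rpow_mul zero_le_two]
  refine Real.rpow_le_rpow_of_exponent_le one_le_two ?_
  push_cast at hsum ⊢
  linarith [hN n]

end GridParameters

section FibreTree

/-- The binary order of magnitude of the height of the denominator `x`. -/
noncomputable def heightClass (θ c : ℝ) (x : ℕ) : ℕ := Nat.log 2 ⌊height θ c x⌋₊

/-- The intervals about the fractions with the denominator `x` are removed at step `n` of the
construction of a fibre. The shift by `18` makes the removed intervals negligible, and no
denominator has level `0`, where `n - 1 = 0`. -/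
structure IsOfLevel (θ c : ℝ) (n x : ℕ) : Prop where
  pos : 0 < x
  le : logGrid (n - 1) ≤ heightClass θ c x + 18
  lt : heightClass θ c x + 18 < logGrid n

/-- The radius of the intervals removed at step `n` about the fractions with the denominator `x`. -/
noncomputable def removedRadius (θ c : ℝ) (n x : ℕ) : ℝ :=
  1 / (2 ^ (18 + heightClass θ c x) * (logStep n * logGrid n : ℕ))

/-- The nodes removed in the tree of the fibre over `θ`: those whose cell comes too close to a
fraction, encoded as the pair of its numerator and its denominator. -/
abbrev removedInFibre (θ c : ℝ) : ℕ → Set ℕ :=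
  removed fibreBranching (fun n P => IsOfLevel θ c n P.2)
    (fun P : ℤ × ℕ => (P.1 : ℝ) / P.2) (fun n P => removedRadius θ c n P.2)

variable {θ c β : ℝ} {n m a x : ℕ}

lemma height_lt_two_mul (θ c : ℝ) (x : ℕ) : height θ c x < 2 * 2 ^ heightClass θ c x := calc
  height θ c x < ⌊height θ c x⌋₊ + 1 := Nat.lt_floor_add_one _
  _ ≤ 2 ^ (heightClass θ c x + 1) := mod_cast Nat.lt_pow_succ_log_self one_lt_two _
  _ = 2 * 2 ^ heightClass θ c x := pow_succ' _ _

lemma IsBadlyApproximableWith.two_pow_heightClass_le (hθ : IsBadlyApproximableWith c θ)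
    (hx : 0 < x) : (2 : ℝ) ^ heightClass θ c x ≤ height θ c x := by
  have hone : 1 ≤ height θ c x := le_trans (mod_cast hx) (hθ.le_height hx)
  calc (2 : ℝ) ^ heightClass θ c x ≤ ⌊height θ c x⌋₊ :=
        mod_cast Nat.pow_log_le_self 2 (Nat.floor_pos.2 hone).ne'
    _ ≤ height θ c x := Nat.floor_le (zero_le_one.trans hone)

lemma IsBadlyApproximableWith.log_le_heightClass (hθ : IsBadlyApproximableWith c θ) (hx : 0 < x) :
    Nat.log 2 x ≤ heightClass θ c x :=
  Nat.log_mono_right (Nat.le_floor (hθ.le_height hx))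

lemma IsOfLevel.two_le_logStep_mul_logGrid (h : IsOfLevel θ c n x) :
    2 ≤ logStep n * logGrid n := by
  have hgrid : 1 ≤ logGrid n := by have := h.lt; omega
  have hstep : 2 ≤ logStep n := (hundred_le_logStep n).trans' (by norm_num)
  exact Nat.mul_le_mul hstep hgrid

lemma IsOfLevel.one_le_removedRadius_mul (h : IsOfLevel θ c n x) :
    1 ≤ removedRadius θ c n x * branching fibreBranching 0 (n + 1) := by
  have hpos : 0 < logStep n * logGrid n := two_pos.trans_le h.two_le_logStep_mul_logGrid
  rw [branching_fibreBranching, logGrid_succ, removedRadius, one_div_mul_eq_div,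
    one_le_div (mul_pos (by positivity) (mod_cast hpos)), pow_add 2 (logGrid n)]
  have hle : 2 ^ (18 + heightClass θ c x) ≤ 2 ^ logGrid n :=
    Nat.pow_le_pow_right two_pos (by have := h.lt; omega)
  exact_mod_cast Nat.mul_le_mul hle (logStep_mul_logGrid_le n)

lemma IsOfLevel.removedRadius_le (h : IsOfLevel θ c n x) (hm : m ≤ n - 1) :
    removedRadius θ c n x ≤ 1 / 2 ^ logGrid m / 2 := by
  rw [removedRadius, div_div]
  have hpow : 2 ^ logGrid m ≤ 2 ^ (18 + heightClass θ c x) :=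
    Nat.pow_le_pow_right two_pos (by have := (logGrid_mono hm).trans h.le; omega)
  exact one_div_le_one_div_of_le (by positivity)
    (mod_cast Nat.mul_le_mul hpow h.two_le_logStep_mul_logGrid)

lemma one_le_of_isAlive_removedInFibre (hθ : IsBadlyApproximableWith c θ) (hx : IsOfLevel θ c n x)
    (hnm : n < m) (ha : IsAlive fibreBranching (removedInFibre θ c) m a)
    (hβ : β ∈ gridCell (branching fibreBranching 0 m) a) :
    1 ≤ 2 ^ 18 * (logStep n * logGrid n : ℕ) * (x * nint (x * θ) / c * nint (x * β)) := by
  have hx0 : (0 : ℝ) < x := mod_cast hx.pos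
  have hpos : (0 : ℝ) < (logStep n * logGrid n : ℕ) :=
    mod_cast two_pos.trans_le hx.two_le_logStep_mul_logGrid
  have hfar := lt_abs_sub_of_isAlive (fun n => by positivity) (I := fun n P => IsOfLevel θ c n P.2)
    (cen := fun P : ℤ × ℕ => (P.1 : ℝ) / P.2) (rad := fun n P => removedRadius θ c n P.2)
    (i := (round (x * β), x)) hx hnm ha hβ
  rw [removedRadius, div_lt_iff₀ (by positivity)] at hfar
  calc (1 : ℝ) ≤ |β - round (x * β) / x| * (2 ^ (18 + heightClass θ c x) *
        (logStep n * logGrid n : ℕ)) := hfar.le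
    _ ≤ |β - round (x * β) / x| * (2 ^ 18 * height θ c x * (logStep n * logGrid n : ℕ)) := by
        rw [pow_add]
        gcongr
        exact hθ.two_pow_heightClass_le hx.pos
    _ = 2 ^ 18 * (logStep n * logGrid n : ℕ) * (x * nint (x * θ) / c * nint (x * β)) := by
        rw [nint_mul_eq_mul_abs_sub β hx0, height]
        ring

lemma IsOfLevel.isInBox (hθ : IsBadlyApproximableWith c θ) {P : ℤ × ℕ} (hP : IsOfLevel θ c n P.2)
    (hm : m ≤ n - 1) (hmeet : (gridCell (branching fibreBranching 0 m) a ∩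
      Metric.closedBall ((P.1 : ℝ) / P.2) (removedRadius θ c n P.2)).Nonempty) :
    IsInBox θ c ((a + 1 / 2) * (1 / 2 ^ logGrid m)) (2 ^ Nat.log 2 P.2)
      (2 ^ heightClass θ c P.2) (1 / 2 ^ logGrid m) P where
  le_den := mod_cast Nat.pow_log_le_self 2 hP.pos.ne'
  den_lt := by
    rw [← pow_succ']
    exact_mod_cast Nat.lt_pow_succ_log_self one_lt_two P.2
  le_height := hθ.two_pow_heightClass_le hP.pos
  height_lt := height_lt_two_mul θ c P.2
  abs_sub_le := by
    have hx0 : (0 : ℝ) < P.2 := mod_cast hP.pos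
    have hxlt : (P.2 : ℝ) ≤ 2 * 2 ^ Nat.log 2 P.2 := by
      rw [← pow_succ']
      exact_mod_cast (Nat.lt_pow_succ_log_self one_lt_two P.2).le
    have hrad := hP.removedRadius_le hm
    have hmem := mem_Icc_of_gridCell_inter_closedBall hmeet
    rw [branching_fibreBranching, Nat.cast_pow, Nat.cast_ofNat, div_eq_mul_one_div,
      div_eq_mul_one_div (_ + _), Set.mem_Icc] at hmem
    have hclose : |(a + 1 / 2) * (1 / 2 ^ logGrid m) - (P.1 : ℝ) / P.2| ≤ 1 / 2 ^ logGrid m := by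
      rw [abs_le]
      constructor <;> linarith
    calc |P.2 * ((a + 1 / 2) * (1 / 2 ^ logGrid m)) - (P.1 : ℝ)|
        = P.2 * |(a + 1 / 2) * (1 / 2 ^ logGrid m) - (P.1 : ℝ) / P.2| := by
          rw [← abs_of_pos hx0, ← abs_mul, abs_of_pos hx0, mul_sub, mul_div_cancel₀ _ hx0.ne']
      _ ≤ 2 * 2 ^ Nat.log 2 P.2 * (1 / 2 ^ logGrid m) := by gcongr

lemma lt_mul_nint_of_isAlive_removedInFibre (hθ : IsBadlyApproximableWith c θ)
    (ha : IsAlive fibreBranching (removedInFibre θ c) (m + 1) a)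
    (hβ : β ∈ gridCell (branching fibreBranching 0 (m + 1)) a) {d t : ℕ} (hd : 0 < d)
    (ht : logStep (m + 1) + 28 ≤ t) (hheight : height θ c d ≤ 2 ^ 9 * 2 ^ logGrid (m + 1) / 2 ^ t) :
    2 ^ 9 / 2 ^ t < d * nint (d * θ) / c * nint (d * β) := by
  have hclass : heightClass θ c d + t ≤ 9 + logGrid (m + 1) := by
    have hle := (hθ.two_pow_heightClass_le hd).trans hheight
    rw [le_div_iff₀ (by positivity), ← pow_add, ← pow_add] at hle
    exact (pow_le_pow_iff_right₀ one_lt_two).1 hle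
  have hstep : logStep m ≤ logStep (m + 1) := logStep_mono m.le_succ
  obtain ⟨n, hnm, hn, hn'⟩ : ∃ n ≤ m, _ :=
    exists_logGrid_pred_le_lt (by rw [logGrid_succ] at hclass; omega :
      heightClass θ c d + 18 < logGrid m)
  set y := d * nint (d * θ) / c * nint (d * β)
  have hy0 : 0 ≤ y := mul_nonneg (div_nonneg (mul_nonneg d.cast_nonneg (nint_nonneg _)) hθ.1.le)
    (nint_nonneg _)
  have hone : 1 ≤ 2 ^ 18 * 2 ^ logStep (m + 1) * y := by
    refine (one_le_of_isAlive_removedInFibre hθ ⟨hd, hn, hn'⟩ (by omega) ha hβ).trans ?_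
    gcongr
    exact_mod_cast (logStep_mul_logGrid_le n).trans
      (Nat.pow_le_pow_right two_pos (logStep_mono (by omega)))
  rw [div_lt_iff₀ (by positivity)]
  calc (2 : ℝ) ^ 9 < 2 ^ 10 * 1 := by norm_num
    _ ≤ 2 ^ 10 * (2 ^ 18 * 2 ^ logStep (m + 1) * y) := by gcongr
    _ = y * 2 ^ (logStep (m + 1) + 28) := by ring
    _ ≤ y * 2 ^ t := by gcongr; exact one_le_two

variable {i j : ℕ} {G : Finset (ℤ × ℕ)}

lemma card_le_of_isAlive_removedInFibre_of_lt_one (hθ : IsBadlyApproximableWith c θ)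
    (ha : IsAlive fibreBranching (removedInFibre θ c) (m + 1) a)
    (hβ : β ∈ gridCell (branching fibreBranching 0 (m + 1)) a)
    (hj : logGrid (m + 4) ≤ j + 18) (hshort : (2 : ℝ) ^ i * (1 / 2 ^ logGrid (m + 1)) < 1)
    (hG : ∀ P ∈ G, IsInBox θ c β (2 ^ i) (2 ^ j) (1 / 2 ^ logGrid (m + 1)) P) :
    (G.card : ℝ) ≤ 648 * (2 ^ j * (1 / 2 ^ logGrid (m + 1))) := by
  rw [logGrid_succ, logGrid_succ, logGrid_succ] at hj
  have hstep := hundred_le_logStep (m + 1)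
  have hstep₂ : logStep (m + 1) ≤ logStep (m + 2) := logStep_mono (by omega)
  have hstep₃ : logStep (m + 1) ≤ logStep (m + 3) := logStep_mono (by omega)
  set t := (j - logGrid (m + 1)) / 2
  have hvol : (2 : ℝ) ^ j * (1 / 2 ^ logGrid (m + 1)) = 2 ^ (j - logGrid (m + 1)) := by
    rw [pow_sub₀ _ two_ne_zero (by omega), one_div]
  have hle_vol : ((2 ^ t : ℕ) : ℝ) ^ 2 ≤ 2 ^ j * (1 / 2 ^ logGrid (m + 1)) := by
    rw [hvol, Nat.cast_pow, ← pow_mul]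
    exact pow_le_pow_right₀ one_le_two (by omega)
  have hvol_le : (2 : ℝ) ^ j * (1 / 2 ^ logGrid (m + 1)) ≤ 2 * (2 ^ t) ^ 2 := by
    rw [hvol, ← pow_mul, ← pow_succ']
    exact pow_le_pow_right₀ one_le_two (by omega)
  have hT : 13 ≤ 2 ^ t :=
    le_trans (by norm_num : 13 ≤ 2 ^ 4) (Nat.pow_le_pow_right two_pos (by omega))
  refine (card_le_or_exists_of_isInBox hθ (by positivity) (by positivity) (by positivity) hshort hG
    hT hle_vol).resolve_right ?_
  rintro ⟨d, hd, hheight, hprod⟩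
  rw [Nat.cast_pow, Nat.cast_ofNat] at hheight hprod
  have hdiv : 216 * ((2 : ℝ) ^ j * (1 / 2 ^ logGrid (m + 1))) / (2 ^ t) ^ 3 ≤ 2 ^ 9 / 2 ^ t := calc
    _ ≤ 216 * (2 * (2 ^ t) ^ 2) / ((2 : ℝ) ^ t) ^ 3 := by gcongr
    _ = 432 / 2 ^ t := by field_simp; norm_num
    _ ≤ 2 ^ 9 / 2 ^ t := by gcongr; norm_num
  refine (lt_mul_nint_of_isAlive_removedInFibre hθ ha hβ hd (t := t) (by omega) ?_).not_ge
    (hprod.trans hdiv)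
  calc height θ c d ≤ 216 * 2 ^ j / (2 ^ t) ^ 3 := hheight
    _ = 216 * (2 ^ j * (1 / 2 ^ logGrid (m + 1))) / (2 ^ t) ^ 3 * 2 ^ logGrid (m + 1) := by
        field_simp
    _ ≤ 2 ^ 9 / 2 ^ t * 2 ^ logGrid (m + 1) := by gcongr
    _ = 2 ^ 9 * 2 ^ logGrid (m + 1) / 2 ^ t := by ring

lemma card_mul_le_of_isAlive_removedInFibre (hθ : IsBadlyApproximableWith c θ)
    (ha : IsAlive fibreBranching (removedInFibre θ c) (n - 4) a)
    (hlevel : ∀ P ∈ G, IsOfLevel θ c n P.2)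
    (hmeet : ∀ P ∈ G, (gridCell (branching fibreBranching 0 (n - 4)) a ∩
      Metric.closedBall ((P.1 : ℝ) / P.2) (removedRadius θ c n P.2)).Nonempty)
    (hi : ∀ P ∈ G, Nat.log 2 P.2 = i) (hj : ∀ P ∈ G, heightClass θ c P.2 = j) :
    (G.card : ℝ) * 2 ^ logGrid (n - 4) ≤ 648 * 2 ^ j := by
  rcases G.eq_empty_or_nonempty with rfl | ⟨P₀, hP₀⟩
  · rw [Finset.card_empty, Nat.cast_zero, zero_mul]
    positivity
  rw [← le_div_iff₀ (by positivity), mul_div_assoc, div_eq_mul_one_div (2 ^ j)]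
  have hbox : ∀ P ∈ G, IsInBox θ c ((a + 1 / 2) * (1 / 2 ^ logGrid (n - 4))) (2 ^ i) (2 ^ j)
      (1 / 2 ^ logGrid (n - 4)) P := fun P hP => by
    have h := (hlevel P hP).isInBox hθ (by omega) (hmeet P hP)
    rwa [hi P hP, hj P hP] at h
  rcases le_or_gt 1 ((2 : ℝ) ^ i * (1 / 2 ^ logGrid (n - 4))) with hlong | hshort
  · have hij : i ≤ j := hi P₀ hP₀ ▸ hj P₀ hP₀ ▸ hθ.log_le_heightClass (hlevel P₀ hP₀).pos
    have hcard := card_le_of_isInBox_of_one_le hθ (by positivity)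
      (pow_le_pow_right₀ one_le_two hij) hlong hbox
    have hpos : (0 : ℝ) < 2 ^ j * (1 / 2 ^ logGrid (n - 4)) := by positivity
    linarith
  · rcases hm : n - 4 with _ | m
    · rw [hm, logGrid_zero, pow_zero, div_one, mul_one] at hshort
      exact absurd hshort (not_lt.2 (one_le_pow₀ one_le_two))
    rw [hm] at ha hbox hshort
    have hclass := (hlevel P₀ hP₀).le
    rw [hj P₀ hP₀, show n - 1 = m + 4 by omega] at hclass
    refine card_le_of_isAlive_removedInFibre_of_lt_one hθ ha ?_ hclass hshort hbox
    rw [branching_fibreBranching, gridCell, Nat.cast_pow, Nat.cast_ofNat, div_eq_mul_one_div,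
      div_eq_mul_one_div (_ + _)]
    constructor <;> gcongr <;> linarith

lemma sum_removedRadius_mul_le_of_heightClass_eq (hθ : IsBadlyApproximableWith c θ)
    (ha : IsAlive fibreBranching (removedInFibre θ c) (n - 4) a)
    (hlevel : ∀ P ∈ G, IsOfLevel θ c n P.2)
    (hmeet : ∀ P ∈ G, (gridCell (branching fibreBranching 0 (n - 4)) a ∩
      Metric.closedBall ((P.1 : ℝ) / P.2) (removedRadius θ c n P.2)).Nonempty)
    (hi : ∀ P ∈ G, Nat.log 2 P.2 = i) (hj : ∀ P ∈ G, heightClass θ c P.2 = j) :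
    (∑ P ∈ G, removedRadius θ c n P.2) * 2 ^ logGrid (n - 4) ≤
      648 / 2 ^ 18 / (logStep n * logGrid n : ℕ) := by
  set b : ℝ := ((logStep n * logGrid n : ℕ) : ℝ)
  calc (∑ P ∈ G, removedRadius θ c n P.2) * 2 ^ logGrid (n - 4)
      = (∑ _P ∈ G, 1 / (2 ^ (18 + j) * b)) * 2 ^ logGrid (n - 4) := by
        rw [Finset.sum_congr rfl fun P hP => by rw [removedRadius, hj P hP]]
    _ = G.card * 2 ^ logGrid (n - 4) / (2 ^ (18 + j) * b) := by
        rw [Finset.sum_const, nsmul_eq_mul]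
        ring
    _ ≤ 648 * 2 ^ j / (2 ^ (18 + j) * b) :=
        div_le_div_of_nonneg_right
          (card_mul_le_of_isAlive_removedInFibre hθ ha hlevel hmeet hi hj) (by positivity)
    _ = 648 / 2 ^ 18 / b := by rw [pow_add, ← div_div]; field_simp

lemma sum_removedRadius_mul_le_of_isAlive (hθ : IsBadlyApproximableWith c θ)
    (ha : IsAlive fibreBranching (removedInFibre θ c) (n - 4) a)
    (hG : ∀ P ∈ G, IsOfLevel θ c n P.2 ∧ (gridCell (branching fibreBranching 0 (n - 4)) a ∩
      Metric.closedBall ((P.1 : ℝ) / P.2) (removedRadius θ c n P.2)).Nonempty) :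
    (∑ P ∈ G, removedRadius θ c n P.2) * branching fibreBranching 0 (n - 4) ≤ 648 / 2 ^ 18 := by
  classical
  set b : ℝ := ((logStep n * logGrid n : ℕ) : ℝ) with hb
  set I := Finset.range (logGrid n) ×ˢ Finset.Ico (logGrid (n - 1) - 18) (logGrid n - 18) with hI
  set κ : ℤ × ℕ → ℕ × ℕ := fun P => (Nat.log 2 P.2, heightClass θ c P.2) with hκ
  have hmaps : ∀ P ∈ G, κ P ∈ I := by
    intro P hP
    obtain ⟨hpos, hle, hlt⟩ := (hG P hP).1
    have hlog := hθ.log_le_heightClass hpos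
    rw [hI, Finset.mem_product, Finset.mem_range, Finset.mem_Ico]
    simp only [hκ]
    omega
  have hcardI : (I.card : ℝ) ≤ b := by
    have := logGrid_sub_logGrid_pred_le n
    rw [hI, Finset.card_product, Finset.card_range, Nat.card_Ico, hb, mul_comm (logStep n)]
    exact_mod_cast Nat.mul_le_mul_left _ (by omega)
  have hfiber : ∀ p ∈ I, ∑ P ∈ G with κ P = p, removedRadius θ c n P.2 * 2 ^ logGrid (n - 4) ≤
      648 / 2 ^ 18 / b := by
    rintro ⟨i, j⟩ -
    have hκP : ∀ P ∈ G.filter (κ · = (i, j)), Nat.log 2 P.2 = i ∧ heightClass θ c P.2 = j :=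
      fun P hP => Prod.mk.inj (Finset.mem_filter.1 hP).2
    rw [← Finset.sum_mul]
    exact sum_removedRadius_mul_le_of_heightClass_eq hθ ha
      (fun P hP => (hG P (Finset.mem_filter.1 hP).1).1)
      (fun P hP => (hG P (Finset.mem_filter.1 hP).1).2)
      (fun P hP => (hκP P hP).1) (fun P hP => (hκP P hP).2)
  calc (∑ P ∈ G, removedRadius θ c n P.2) * branching fibreBranching 0 (n - 4)
      = ∑ p ∈ I, ∑ P ∈ G with κ P = p, removedRadius θ c n P.2 * 2 ^ logGrid (n - 4) := by
        rw [Finset.sum_fiberwise_of_maps_to hmaps, Finset.sum_mul, branching_fibreBranching,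
          Nat.cast_pow, Nat.cast_ofNat]
    _ ≤ I.card • (648 / 2 ^ 18 / b) := Finset.sum_le_card_nsmul _ _ _ hfiber
    _ ≤ b * (648 / 2 ^ 18 / b) := by rw [nsmul_eq_mul]; gcongr
    _ = 648 / 2 ^ 18 * (b / b) := by ring
    _ ≤ 648 / 2 ^ 18 := mul_le_of_le_one_right (by norm_num) (div_self_le_one b)

lemma isSparse_removedInFibre (hθ : IsBadlyApproximableWith c θ) :
    IsSparse fibreBranching (removedInFibre θ c) := by
  refine isSparse_removed (fun n => by positivity) (fun n P h => h.one_le_removedRadius_mul)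
    fun n => ⟨n - 4, Nat.sub_le _ _, fun a ha F hF => ?_⟩
  calc 16 * 2 ^ (n - (n - 4)) * (∑ P ∈ F, removedRadius θ c n P.2) *
        branching fibreBranching 0 (n - 4)
      = 16 * 2 ^ (n - (n - 4)) *
        ((∑ P ∈ F, removedRadius θ c n P.2) * branching fibreBranching 0 (n - 4)) := mul_assoc _ _ _
    _ ≤ 16 * 2 ^ 4 * (648 / 2 ^ 18) := by
        gcongr
        exacts [mul_nonneg (Finset.sum_nonneg fun P _ => by rw [removedRadius]; positivity)
          (Nat.cast_nonneg _), one_le_two, by omega, sum_removedRadius_mul_le_of_isAlive hθ ha hF]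
    _ ≤ 1 := by norm_num

end FibreTree

section Fibre

open scoped NNReal ENNReal

/-- The slice over `θ` of the set of pairs in the theorem, with the infimum bounded below by an
explicit positive constant. -/
def logBadSlice (θ : ℝ) : Set ℝ :=
  {θ₂ | ∃ c : ℝ, 0 < c ∧ ∀ x : ℤ, 3 ≤ x →
    c ≤ (x : ℝ) * Real.log x * Real.log (Real.log x) * nint (θ * x) * nint (θ₂ * x)}

variable {θ c : ℝ}

lemma one_lt_log_three : 1 < Real.log 3 := by
  rw [Real.lt_log_iff_exp_lt (by norm_num)]
  exact Real.exp_one_lt_d9.trans (by norm_num)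

lemma half_lt_log_two : 1 / 2 < Real.log 2 := Real.log_two_gt_d9.trans' (by norm_num)

lemma natLog_two_le_two_mul_log (n : ℕ) : (Nat.log 2 n : ℝ) ≤ 2 * Real.log n := by
  have hlog := half_lt_log_two
  calc (Nat.log 2 n : ℝ) ≤ Real.log n / Real.log 2 := mod_cast Real.natLog_le_logb n 2
    _ ≤ Real.log n / (1 / 2) := by
        gcongr
    _ = 2 * Real.log n := by ring

lemma IsBadlyApproximableWith.exists_heightClass_add_le (hθ : IsBadlyApproximableWith c θ) :
    ∃ M : ℝ, 1 ≤ M ∧ ∀ x : ℕ, 3 ≤ x → (heightClass θ c x : ℝ) + 38 ≤ M * Real.log x := by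
  have hc := hθ.1
  set L := Real.log (1 / (2 * c)) with hL
  have hL0 : 0 ≤ L :=
    Real.log_nonneg (by rw [one_le_div (by positivity)]; linarith [hθ.le_half])
  refine ⟨42 + 2 * L, by linarith, fun x hx => ?_⟩
  have hx0 : (0 : ℝ) < x := mod_cast zero_lt_three.trans_le hx
  have hlogx : 1 ≤ Real.log x :=
    one_lt_log_three.le.trans (Real.log_le_log (by norm_num) (mod_cast hx))
  have hheight : (2 : ℝ) ^ heightClass θ c x ≤ x ^ 2 * (1 / (2 * c)) := calc
    (2 : ℝ) ^ heightClass θ c x ≤ height θ c x := hθ.two_pow_heightClass_le (mod_cast hx0)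
    _ ≤ x ^ 2 * (1 / 2) / c := by
        rw [height]
        gcongr
        exact abs_sub_round _
    _ = x ^ 2 * (1 / (2 * c)) := by field_simp
  have hlog := Real.log_le_log (by positivity) hheight
  rw [Real.log_mul (by positivity) (by positivity), Real.log_pow, Real.log_pow, ← hL] at hlog
  have hclass : (heightClass θ c x : ℝ) * (1 / 2) ≤ heightClass θ c x * Real.log 2 := by
    gcongr
    exact half_lt_log_two.le
  have hLx : L ≤ L * Real.log x := le_mul_of_one_le_right hL0 hlogx
  push_cast at hlog
  linarith

lemma IsOfLevel.logStep_mul_logGrid_le {n x : ℕ} (h : IsOfLevel θ c n x) :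
    logStep n * logGrid n ≤
      (100 + 4 * Nat.log 2 (heightClass θ c x + 38)) * (5 * (heightClass θ c x + 38)) := by
  obtain ⟨-, hle, hlt⟩ := h
  rcases n with _ | k
  · exact absurd hlt (Nat.not_lt_zero _)
  rw [Nat.add_sub_cancel] at hle
  have hthree := three_mul_le_logGrid k
  have hstep := logStep_le k
  have hlog := Nat.log_mono_right (b := 2) (by omega : k + 1 + 1 ≤ heightClass θ c x + 38)
  rw [logGrid_succ]
  refine Nat.mul_le_mul ?_ (by omega)
  rw [logStep]
  omega

lemma IsBadlyApproximableWith.exists_logStep_mul_logGrid_le (hθ : IsBadlyApproximableWith c θ) :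
    ∃ D : ℝ, 0 < D ∧ ∀ n x : ℕ, 3 ≤ x → IsOfLevel θ c n x →
      ((logStep n * logGrid n : ℕ) : ℝ) ≤ D * (Real.log x * Real.log (Real.log x)) := by
  obtain ⟨M, hM, hclass⟩ := hθ.exists_heightClass_add_le
  have hM0 : 0 < M := one_pos.trans_le hM
  set δ := Real.log (Real.log 3)
  have hδ : 0 < δ := Real.log_pos one_lt_log_three
  set B := 100 + 8 * Real.log M
  have hB0 : 0 < B := by linarith [Real.log_nonneg hM]
  refine ⟨(B / δ + 8) * (5 * M), by positivity, fun n x hx hlevel => ?_⟩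
  set N := heightClass θ c x + 38 with hN
  have hlogx : Real.log 3 ≤ Real.log x := Real.log_le_log (by norm_num) (mod_cast hx)
  have hlogx0 : 0 < Real.log x := (one_pos.trans one_lt_log_three).trans_le hlogx
  have hloglogx : δ ≤ Real.log (Real.log x) :=
    Real.log_le_log (one_pos.trans one_lt_log_three) hlogx
  have hNle : (N : ℝ) ≤ M * Real.log x := by
    rw [hN]
    exact_mod_cast hclass x hx
  have hlogN : Real.log N ≤ Real.log M + Real.log (Real.log x) := by
    rw [← Real.log_mul hM0.ne' hlogx0.ne']
    exact Real.log_le_log (by positivity) hNle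
  have hBx : B ≤ B / δ * Real.log (Real.log x) := calc
    B = B / δ * δ := (div_mul_cancel₀ B hδ.ne').symm
    _ ≤ B / δ * Real.log (Real.log x) := by gcongr
  have hfactor : 100 + 4 * (Nat.log 2 N : ℝ) ≤ (B / δ + 8) * Real.log (Real.log x) := by
    linarith [natLog_two_le_two_mul_log N]
  calc ((logStep n * logGrid n : ℕ) : ℝ) ≤ (100 + 4 * Nat.log 2 N) * (5 * N) :=
        mod_cast hlevel.logStep_mul_logGrid_le
    _ ≤ (B / δ + 8) * Real.log (Real.log x) * (5 * (M * Real.log x)) := by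
        gcongr
        exact mul_nonneg (by positivity) (hδ.le.trans hloglogx)
    _ = (B / δ + 8) * (5 * M) * (Real.log x * Real.log (Real.log x)) := by ring

lemma mem_logBadSlice_of_forall_isAlive (hθ : IsBadlyApproximableWith c θ) {z : ℝ}
    (hz : ∀ n, ∃ a, IsAlive fibreBranching (removedInFibre θ c) n a ∧
      z ∈ gridCell (branching fibreBranching 0 n) a) : z ∈ logBadSlice θ := by
  have hc := hθ.1
  obtain ⟨D, hD, hlog⟩ := hθ.exists_logStep_mul_logGrid_le
  refine ⟨c / (2 ^ 18 * D), by positivity, fun x hx => ?_⟩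
  lift x to ℕ using by omega
  have hx0 : 0 < x := by omega
  rw [Int.cast_natCast, mul_comm θ, mul_comm z, div_le_iff₀ (by positivity)]
  obtain ⟨n, -, hle, hlt⟩ := exists_logGrid_pred_le_lt (a := heightClass θ c x + 18)
    (m := heightClass θ c x + 19) (by have := three_mul_le_logGrid (heightClass θ c x + 19); omega)
  have hlevel : IsOfLevel θ c n x := ⟨hx0, hle, hlt⟩
  obtain ⟨a, ha, hza⟩ := hz (n + 1)
  have hone := one_le_of_isAlive_removedInFibre hθ hlevel n.lt_succ_self ha hza
  calc c = c * 1 := (mul_one c).symm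
    _ ≤ c * (2 ^ 18 * (D * (Real.log x * Real.log (Real.log x))) *
        (x * nint (x * θ) / c * nint (x * z))) := by
        gcongr
        refine hone.trans ?_
        gcongr
        · exact mul_nonneg (div_nonneg (mul_nonneg x.cast_nonneg (nint_nonneg _)) hc.le)
            (nint_nonneg _)
        · exact hlog n x (by omega) hlevel
    _ = x * Real.log x * Real.log (Real.log x) * nint (x * θ) * nint (x * z) * (2 ^ 18 * D) := by
        field_simp

lemma IsBadlyApproximableWith.isSpread_logBadSlice (hθ : IsBadlyApproximableWith c θ) {s : ℝ≥0}
    (hs : s < 1) : IsSpread s (logBadSlice θ) := by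
  obtain ⟨C, hC⟩ := exists_branching_fibreBranching_rpow_le (s := s) (mod_cast hs)
  refine (isSparse_removedInFibre hθ).isSpread (fun n => ?_) hC
    fun z hz => mem_logBadSlice_of_forall_isAlive hθ hz
  calc 16 ≤ 2 ^ 100 := by norm_num
    _ ≤ 2 ^ logStep n := Nat.pow_le_pow_right two_pos (hundred_le_logStep n)

lemma IsBadlyApproximableWith.one_le_dimH_logBadSlice (hθ : IsBadlyApproximableWith c θ) :
    1 ≤ dimH (logBadSlice θ) := by
  refine le_of_forall_lt fun r hr => ?_
  obtain ⟨s, hrs, hs⟩ := ENNReal.lt_iff_exists_nnreal_btwn.1 hr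
  exact hrs.trans_le (hθ.isSpread_logBadSlice (mod_cast hs)).le_dimH

end Fibre

open scoped NNReal ENNReal in
lemma IsSpread.two_le_dimH {B : Set ℝ} (hB : ∀ s : ℝ≥0, s < 1 → IsSpread s B) {A : Set (ℝ × ℝ)}
    (hslice : ∀ x ∈ B, 1 ≤ dimH (Prod.mk x ⁻¹' A)) : 2 ≤ dimH A := by
  refine le_of_forall_lt fun r hr => ?_
  have hr' : r / 2 < 1 := ENNReal.div_lt_of_lt_mul' (by simpa using hr)
  obtain ⟨s, hrs, hs⟩ := ENNReal.lt_iff_exists_nnreal_btwn.1 hr'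
  calc r = r / 2 + r / 2 := (ENNReal.add_halves r).symm
    _ < s + s := ENNReal.add_lt_add hrs hrs
    _ ≤ dimH A := (hB s (mod_cast hs)).add_le_dimH (ENNReal.coe_pos.1 (pos_of_gt hrs))
      fun x hx => hs.trans_le (hslice x hx)

/-- Badziahin's theorem on Littlewood-type badly approximable pairs. -/
theorem stmt3 :
    dimH {p : ℝ × ℝ | ∃ c : ℝ, 0 < c ∧ ∀ x : ℤ, 3 ≤ x →
        c ≤ (x : ℝ) * Real.log x * Real.log (Real.log x) * nint (p.1 * x) * nint (p.2 * x)} = 2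
      ∧
    ∀ θ₁ : ℝ, (∃ c : ℝ, 0 < c ∧ ∀ q : ℕ, 0 < q → c ≤ (q : ℝ) * nint (q * θ₁)) →
      dimH {θ₂ : ℝ | ∃ c : ℝ, 0 < c ∧ ∀ x : ℤ, 3 ≤ x →
        c ≤ (x : ℝ) * Real.log x * Real.log (Real.log x) * nint (θ₁ * x) * nint (θ₂ * x)} = 1 := by
  refine ⟨le_antisymm ?_ ?_, fun θ₁ ⟨c, hθ₁⟩ => le_antisymm ?_ ?_⟩
  · calc _ ≤ dimH (Set.univ : Set (ℝ × ℝ)) := dimH_mono (Set.subset_univ _)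
      _ = 2 := by simp [Real.dimH_univ_eq_finrank]
  · exact IsSpread.two_le_dimH (fun _ => isSpread_badlyApproximable)
      fun _ ⟨_, hθ⟩ => hθ.one_le_dimH_logBadSlice
  · exact (dimH_mono (Set.subset_univ _)).trans_eq Real.dimH_univ
  · exact IsBadlyApproximableWith.one_le_dimH_logBadSlice hθ₁
end

section
/- Let p be a prime. The set of real numbers θ satisfying liminf_{q → ∞, q ∈ ℤ_{>0}} q · (log q) · (log log q) · |q|_p · ‖qθ‖ > 0 has Hausdorff dimension equal to 1. -/
open Filter

/-!
Call a rational `r / q` an obstruction at scale `n` if `D k ∣ q` and `q ^ 2 < 2 ^ (n + 1) * D k`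
for some `k`; in the `p`-adic case `D k = p ^ k`. If `θ` stays at distance at least
`2 ^ (-n - dyadicDelay n)` from the obstructions at scale `n`, for all large `n`, then the product
in the theorem is bounded below, since `2 ^ dyadicDelay n` has the size of `log q * log (log q)`.

Distinct obstructions at scale `n` with the same `k` are at least `2 ^ -(n + 1)` apart, and `k ≤ n`
because `2 ^ k ≤ D k`, so each dyadic interval of level `n` contains at most `12 * (n + 1)`
intervals of level `n + dyadicDelay n` that are too close to an obstruction. We remove these at
level `n + dyadicDelay n`, as in Rosenfeld's counting argument: by induction the number of
surviving intervals is multiplied at each level by almost `2`, hence over the delay by much more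
than `n + 1`, and so the removals at level `n + dyadicDelay n` are a small proportion of the
survivors. The growth rate stays above `2 ^ s`, for any `s < 1`, even if we also remove the
intervals meeting a cover with small `s`-dimensional sum. A surviving point avoids that cover, so
the set of good `θ` has no such cover and its dimension is at least `s`.
-/

open Finset MeasureTheory
open scoped ENNReal NNReal Topology

/-! ### The delay and the growth rate -/

/-- The delay `log₂ n + log₂ log₂ n + 11`: a rational obstruction met at level `n` of the dyadic
tree is removed only at level `n + dyadicDelay n`. The constant `11` makes
`96 * (n + 1) * dyadicDelay (n + dyadicDelay n) ≤ 2 ^ dyadicDelay n` hold for `n ≥ 2048`. -/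
def dyadicDelay (n : ℕ) : ℕ := Nat.log 2 n + Nat.log 2 (Nat.log 2 n) + 11

lemma dyadicDelay_pos (n : ℕ) : 0 < dyadicDelay n := Nat.succ_pos _

lemma log_two_le_dyadicDelay (n : ℕ) : Nat.log 2 n ≤ dyadicDelay n := by
  unfold dyadicDelay
  omega

lemma monotone_dyadicDelay : Monotone dyadicDelay := fun _ _ h ↦
  Nat.add_le_add_right (Nat.add_le_add (Nat.log_mono_right h)
    (Nat.log_mono_right (Nat.log_mono_right h))) 11

lemma dyadicDelay_le_two_mul_log (n : ℕ) : dyadicDelay n ≤ 2 * Nat.log 2 n + 11 := by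
  have := Nat.log_le_self 2 (Nat.log 2 n)
  unfold dyadicDelay
  omega

lemma tendsto_dyadicDelay_atTop : Tendsto dyadicDelay atTop atTop :=
  tendsto_atTop.2 fun b ↦ (eventually_ge_atTop (2 ^ b)).mono fun n hn ↦
    (Nat.le_log_of_pow_le one_lt_two hn).trans (log_two_le_dyadicDelay n)

lemma injective_add_dyadicDelay : Function.Injective fun n ↦ n + dyadicDelay n :=
  (strictMono_id.add_monotone monotone_dyadicDelay).injective

lemma two_pow_dyadicDelay_le {n : ℕ} (hn : 2 ≤ n) :
    2 ^ dyadicDelay n ≤ n * Nat.log 2 n * 2048 := by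
  have hlog : Nat.log 2 n ≠ 0 := (Nat.log_pos one_lt_two hn).ne'
  rw [dyadicDelay, pow_add, pow_add]
  gcongr
  · exact Nat.pow_log_le_self 2 (by omega)
  · exact Nat.pow_log_le_self 2 hlog
  · norm_num

lemma three_mul_log_two_le {n : ℕ} (hn : 2048 ≤ n) : 3 * Nat.log 2 n ≤ n := by
  have three_mul_le_two_pow : ∀ w : ℕ, 11 ≤ w → 3 * w ≤ 2 ^ w := by
    intro w hw
    induction w, hw using Nat.le_induction with
    | base => norm_num
    | succ k _ ih => rw [pow_succ]; omega
  exact (three_mul_le_two_pow _ (Nat.le_log_of_pow_le one_lt_two hn)).trans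
    (Nat.pow_log_le_self 2 (by omega))

lemma dyadicDelay_add_dyadicDelay_le {n : ℕ} (hn : 2048 ≤ n) :
    dyadicDelay (n + dyadicDelay n) ≤ 4 * (Nat.log 2 n + 1) := by
  have hlog : 11 ≤ Nat.log 2 n := Nat.le_log_of_pow_le one_lt_two hn
  have hself : dyadicDelay n ≤ n := by
    have := dyadicDelay_le_two_mul_log n
    have := three_mul_log_two_le hn
    omega
  calc dyadicDelay (n + dyadicDelay n)
      ≤ dyadicDelay (n * 2) := monotone_dyadicDelay (by omega)
    _ ≤ 2 * Nat.log 2 (n * 2) + 11 := dyadicDelay_le_two_mul_log _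
    _ ≤ 4 * (Nat.log 2 n + 1) := by
        rw [Nat.log_mul_base one_lt_two (by omega)]
        omega

lemma mul_dyadicDelay_le_two_pow {n : ℕ} (hn : 2048 ≤ n) :
    96 * (n + 1) * dyadicDelay (n + dyadicDelay n) ≤ 2 ^ dyadicDelay n :=
  calc 96 * (n + 1) * dyadicDelay (n + dyadicDelay n)
      ≤ 96 * (n + 1) * (4 * (Nat.log 2 n + 1)) :=
        Nat.mul_le_mul_left _ (dyadicDelay_add_dyadicDelay_le hn)
    _ = (n + 1) * (Nat.log 2 n + 1) * 384 := by ring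
    _ ≤ 2 ^ (Nat.log 2 n + 1) * 2 ^ (Nat.log 2 (Nat.log 2 n) + 1) * 2 ^ 9 := by
        gcongr
        · exact Nat.lt_pow_succ_log_self one_lt_two n
        · exact Nat.lt_pow_succ_log_self one_lt_two _
        · norm_num
    _ = 2 ^ dyadicDelay n := by
        rw [dyadicDelay]
        ring

lemma two_pow_succ_le_four_mul_pow (M : ℕ) :
    (2 : ℝ) ^ (M + 1) ≤ 4 * (2 - 1 / ((M + 1 : ℕ) : ℝ)) ^ M := by
  have hM : (0 : ℝ) < (M + 1 : ℕ) := by positivity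
  have hinv : 1 / ((M + 1 : ℕ) : ℝ) ≤ 1 := (div_le_one hM).2 (by norm_cast; omega)
  have bernoulli := one_add_mul_sub_le_pow (a := 1 - 1 / ((M + 1 : ℕ) : ℝ) / 2) (by linarith) M
  have half_le : (1 : ℝ) / 2 ≤ (1 - 1 / ((M + 1 : ℕ) : ℝ) / 2) ^ M := by
    refine le_trans ?_ bernoulli
    have : (M : ℝ) * (1 / ((M + 1 : ℕ) : ℝ)) ≤ 1 := by
      rw [mul_one_div, div_le_one hM]
      norm_cast
      omega
    linarith
  calc (2 : ℝ) ^ (M + 1) = 4 * (2 ^ M * (1 / 2)) := by ring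
    _ ≤ 4 * (2 ^ M * (1 - 1 / ((M + 1 : ℕ) : ℝ) / 2) ^ M) := by gcongr
    _ = 4 * (2 - 1 / ((M + 1 : ℕ) : ℝ)) ^ M := by
        rw [← mul_pow]
        ring

/-- The factor by which the number of surviving dyadic intervals is guaranteed to grow on reaching
level `n`. -/
noncomputable def growthRate (n : ℕ) : ℝ := 2 - 1 / dyadicDelay n

lemma one_le_growthRate (n : ℕ) : 1 ≤ growthRate n := by
  have : (1 : ℝ) / dyadicDelay n ≤ 1 :=
    div_le_one_of_le₀ (by exact_mod_cast dyadicDelay_pos n) (Nat.cast_nonneg _)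
  unfold growthRate
  linarith

lemma growthRate_nonneg (n : ℕ) : 0 ≤ growthRate n := zero_le_one.trans (one_le_growthRate n)

lemma growthRate_le_two (n : ℕ) : growthRate n ≤ 2 := sub_le_self _ (by positivity)

lemma monotone_growthRate : Monotone growthRate := fun _ _ h ↦
  sub_le_sub_left (one_div_le_one_div_of_le (by exact_mod_cast dyadicDelay_pos _)
    (by exact_mod_cast monotone_dyadicDelay h)) 2

lemma tendsto_growthRate : Tendsto growthRate atTop (𝓝 2) := by
  have : Tendsto growthRate atTop (𝓝 (2 - 0)) := tendsto_const_nhds.sub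
    (tendsto_const_nhds.div_atTop (tendsto_natCast_atTop_atTop.comp tendsto_dyadicDelay_atTop))
  rwa [sub_zero] at this

lemma two_pow_dyadicDelay_le_growthRate_pow (n : ℕ) :
    (2 : ℝ) ^ dyadicDelay n ≤ 4 * growthRate n ^ (dyadicDelay n - 1) := by
  obtain ⟨M, hM⟩ := Nat.exists_eq_succ_of_ne_zero (dyadicDelay_pos n).ne'
  rw [growthRate, hM]
  exact two_pow_succ_le_four_mul_pow M

lemma eventually_dyadicDelay_mul_pow_le_pow {x l : ℝ} (hx : 0 ≤ x) (hxl : x < l) :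
    ∀ᶠ m : ℕ in atTop, 6 * dyadicDelay (m + 1) * x ^ (m + 1) ≤ l ^ m := by
  have hl : 0 < l := hx.trans_lt hxl
  have hr0 : 0 ≤ x / l := by positivity
  have hr1 : x / l < 1 := (div_lt_one hl).2 hxl
  have decay : Tendsto (fun m : ℕ ↦ 6 * x * (2 * (m * (x / l) ^ m) + 13 * (x / l) ^ m)) atTop
      (𝓝 (6 * x * (2 * 0 + 13 * 0))) :=
    (((tendsto_self_mul_const_pow_of_lt_one hr0 hr1).const_mul 2).add
      ((tendsto_pow_atTop_nhds_zero_of_lt_one hr0 hr1).const_mul 13)).const_mul _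
  filter_upwards [decay.eventually_le_const (u := 1) (by norm_num)] with m hm
  have delay_le : (dyadicDelay (m + 1) : ℝ) ≤ 2 * m + 13 := by
    have := dyadicDelay_le_two_mul_log (m + 1)
    have := Nat.log_le_self 2 (m + 1)
    exact_mod_cast (by omega : dyadicDelay (m + 1) ≤ 2 * m + 13)
  calc 6 * (dyadicDelay (m + 1) : ℝ) * x ^ (m + 1)
      ≤ 6 * (2 * m + 13) * x ^ (m + 1) := by gcongr
    _ = 6 * x * (2 * (m * (x / l) ^ m) + 13 * (x / l) ^ m) * l ^ m := by
        rw [div_pow]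
        field_simp
        ring
    _ ≤ 1 * l ^ m := by gcongr
    _ = l ^ m := one_mul _

lemma eventually_dyadicDelay_mul_pow_le_growthRate_pow {x : ℝ} (hx : 0 ≤ x) (hx2 : x < 2) :
    ∀ᶠ n in atTop, ∀ m, n ≤ m → 6 * dyadicDelay (m + 1) * x ^ (m + 1) ≤ growthRate n ^ m := by
  obtain ⟨l, hxl, hl2⟩ := exists_between hx2
  filter_upwards [eventually_forall_ge_atTop.2 (eventually_dyadicDelay_mul_pow_le_pow hx hxl),
    tendsto_growthRate.eventually_const_le hl2] with n hpow hl m hm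
  exact (hpow m hm).trans (pow_le_pow_left₀ (hx.trans hxl.le) hl m)

lemma growthRate_pow_mul_le {N : ℕ → ℝ} {n m : ℕ} (hN : ∀ k, 0 ≤ N k) (hnm : n ≤ m)
    (hgrow : ∀ k, n ≤ k → k < m → growthRate (k + 1) * N k ≤ N (k + 1)) :
    growthRate n ^ (m - n) * N n ≤ N m := by
  have := geom_le (u := fun i ↦ N (n + i)) (growthRate_nonneg n) (m - n) fun i hi ↦
    (mul_le_mul_of_nonneg_right (monotone_growthRate (by omega)) (hN _)).trans
      (hgrow (n + i) (by omega) (by omega))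
  simpa [Nat.add_sub_cancel' hnm] using this

lemma two_mul_dyadicDelay_mul_le {n : ℕ} (hn : 2048 ≤ n) {x y : ℝ} (hx : 0 ≤ x)
    (hxy : growthRate n ^ (dyadicDelay n - 1) * x ≤ y) :
    2 * dyadicDelay (n + dyadicDelay n) * (12 * (n + 1) * x) ≤ y := by
  have hdelay : (96 * (n + 1) * dyadicDelay (n + dyadicDelay n) : ℝ) ≤ 2 ^ dyadicDelay n := by
    exact_mod_cast mul_dyadicDelay_le_two_pow hn
  have := mul_le_mul_of_nonneg_right
    (hdelay.trans (two_pow_dyadicDelay_le_growthRate_pow n)) hx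
  linarith

lemma growthRate_mul_le_of_two_mul_le {m : ℕ} {x y b e : ℝ} (hstep : 2 * x ≤ y + b + e)
    (hb : 2 * dyadicDelay m * b ≤ x) (he : 2 * dyadicDelay m * e ≤ x) :
    growthRate m * x ≤ y := by
  have hpos : (0 : ℝ) < dyadicDelay m := by exact_mod_cast dyadicDelay_pos m
  have hloss : b + e ≤ 1 / dyadicDelay m * x := by
    rw [one_div_mul_eq_div, le_div_iff₀ hpos]
    linarith
  rw [growthRate, sub_mul]
  linarith

-- The delay is long enough for `N` to outgrow, between levels `n` and `n + dyadicDelay n`, the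
-- factor `12 * (n + 1)` by which a delayed loss is larger than `N n`.
lemma growthRate_mul_le_of_delayed_loss {N b e : ℕ → ℝ} {n₀ : ℕ} (hn₀ : 2048 ≤ n₀)
    (hN : ∀ m, 0 ≤ N m) (hNn₀ : 2 ^ n₀ ≤ N n₀)
    (hstep : ∀ m, n₀ ≤ m → 2 * N m ≤ N (m + 1) + b m + e m)
    (hb : ∀ m, b m = 0 ∨ ∃ n, n₀ ≤ n ∧ n + dyadicDelay n = m + 1 ∧ b m ≤ 12 * (n + 1) * N n)
    (he : ∀ m, n₀ ≤ m → 2 * dyadicDelay (m + 1) * e m ≤ growthRate n₀ ^ m)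
    (m : ℕ) (hm : n₀ ≤ m) : growthRate (m + 1) * N m ≤ N (m + 1) := by
  induction m using Nat.strong_induction_on with
  | _ m ih =>
  have hgrowth : ∀ n, n₀ ≤ n → n ≤ m → growthRate n ^ (m - n) * N n ≤ N m := fun n hn hnm ↦
    growthRate_pow_mul_le hN hnm fun k hnk hkm ↦ ih k hkm (hn.trans hnk)
  refine growthRate_mul_le_of_two_mul_le (hstep m hm) ?_ ((he m hm).trans ?_)
  · have hnonneg : (0 : ℝ) ≤ 2 * dyadicDelay (m + 1) := mul_nonneg zero_le_two (Nat.cast_nonneg _)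
    rcases hb m with hb0 | ⟨n, hn, hnm, hbn⟩
    · simpa only [hb0, mul_zero] using hN m
    · have hdelay := dyadicDelay_pos n
      have hgrow := hgrowth n hn (by omega)
      rw [show m - n = dyadicDelay n - 1 by omega] at hgrow
      refine (mul_le_mul_of_nonneg_left hbn hnonneg).trans ?_
      rw [← hnm]
      exact two_mul_dyadicDelay_mul_le (hn₀.trans hn) (hN n) hgrow
  · calc growthRate n₀ ^ m = growthRate n₀ ^ (m - n₀) * growthRate n₀ ^ n₀ := by
          rw [← pow_add, Nat.sub_add_cancel hm]
      _ ≤ growthRate n₀ ^ (m - n₀) * N n₀ :=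
          mul_le_mul_of_nonneg_left ((pow_le_pow_left₀ (growthRate_nonneg n₀)
            (growthRate_le_two n₀) n₀).trans hNn₀) (pow_nonneg (growthRate_nonneg n₀) _)
      _ ≤ N m := hgrowth n₀ le_rfl hm

/-! ### Survivors of a delayed removal -/

/-- The closed dyadic interval of level `m` and index `b`. -/
def dyadicIcc (m b : ℕ) : Set ℝ := Set.Icc ((b : ℝ) / 2 ^ m) (((b : ℝ) + 1) / 2 ^ m)

lemma mem_dyadicIcc {m b : ℕ} {y : ℝ} :
    y ∈ dyadicIcc m b ↔ (b : ℝ) ≤ y * 2 ^ m ∧ y * 2 ^ m ≤ b + 1 := by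
  rw [dyadicIcc, Set.mem_Icc, div_le_iff₀ (by positivity), le_div_iff₀ (by positivity)]

lemma isCompact_dyadicIcc (m b : ℕ) : IsCompact (dyadicIcc m b) := isCompact_Icc

lemma dyadicIcc_nonempty (m b : ℕ) : (dyadicIcc m b).Nonempty :=
  Set.nonempty_Icc.2 (by gcongr; linarith)

lemma dyadicIcc_subset_dyadicIcc_div (n L b : ℕ) :
    dyadicIcc (n + L) b ⊆ dyadicIcc n (b / 2 ^ L) := by
  intro y hy
  rw [mem_dyadicIcc, pow_add, ← mul_assoc] at hy
  have hlo : ((b / 2 ^ L : ℕ) : ℝ) * 2 ^ L ≤ b := by exact_mod_cast Nat.div_mul_le_self b (2 ^ L)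
  have hhi : (b : ℝ) + 1 ≤ ((b / 2 ^ L : ℕ) + 1) * 2 ^ L := by
    exact_mod_cast Nat.lt_mul_of_div_lt (Nat.lt_succ_self _) (by positivity)
  exact mem_dyadicIcc.2 ⟨le_of_mul_le_mul_right (hlo.trans hy.1) (by positivity),
    le_of_mul_le_mul_right (hy.2.trans hhi) (by positivity)⟩

/-- The indices of the dyadic intervals of level `m + 1` contained in one of the dyadic intervals
of level `m` with index in `s`. -/
def dyadicChildren (s : Finset ℕ) : Finset ℕ := s.biUnion fun a ↦ {2 * a, 2 * a + 1}

lemma mem_dyadicChildren {s : Finset ℕ} {b : ℕ} : b ∈ dyadicChildren s ↔ b / 2 ∈ s := by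
  simp only [dyadicChildren, mem_biUnion, mem_insert, mem_singleton]
  constructor
  · rintro ⟨a, ha, rfl | rfl⟩
    · rwa [Nat.mul_div_cancel_left _ two_pos]
    · rwa [show (2 * a + 1) / 2 = a by omega]
  · exact fun hb ↦ ⟨b / 2, hb, by omega⟩

lemma card_dyadicChildren (s : Finset ℕ) : #(dyadicChildren s) = 2 * #s := by
  rw [dyadicChildren, card_biUnion, sum_const_nat (m := 2), mul_comm]
  · exact fun a _ ↦ card_pair (by omega)
  · intro a _ a' _ hne
    simp only [Function.onFun, disjoint_left, mem_insert, mem_singleton]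
    omega

open Classical in
/-- The indices of the dyadic intervals of level `m` in `[0, 1]` that neither are `Bad` nor are
contained in a `Bad` dyadic interval of smaller level. -/
noncomputable def dyadicSurvivors (Bad : ℕ → ℕ → Prop) : ℕ → Finset ℕ
  | 0 => {b ∈ {0} | ¬ Bad 0 b}
  | m + 1 => {b ∈ dyadicChildren (dyadicSurvivors Bad m) | ¬ Bad (m + 1) b}

section Survivors

variable {A E Bad : ℕ → ℕ → Prop}

open Classical in
lemma mem_dyadicSurvivors_zero {b : ℕ} : b ∈ dyadicSurvivors Bad 0 ↔ b = 0 ∧ ¬ Bad 0 b := by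
  rw [dyadicSurvivors, mem_filter, mem_singleton]

open Classical in
lemma mem_dyadicSurvivors_succ {m b : ℕ} :
    b ∈ dyadicSurvivors Bad (m + 1) ↔ b / 2 ∈ dyadicSurvivors Bad m ∧ ¬ Bad (m + 1) b := by
  rw [dyadicSurvivors, mem_filter, mem_dyadicChildren]

lemma not_bad_of_mem_dyadicSurvivors {m b : ℕ} (hb : b ∈ dyadicSurvivors Bad m) : ¬ Bad m b := by
  cases m
  · exact (mem_dyadicSurvivors_zero.1 hb).2
  · exact (mem_dyadicSurvivors_succ.1 hb).2

lemma div_two_pow_mem_dyadicSurvivors {n k b : ℕ} (hb : b ∈ dyadicSurvivors Bad (n + k)) :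
    b / 2 ^ k ∈ dyadicSurvivors Bad n := by
  induction k generalizing b with
  | zero => simpa using hb
  | succ k ih =>
    rw [pow_succ', ← Nat.div_div_eq_div_mul]
    exact ih (mem_dyadicSurvivors_succ.1 hb).1

open Classical in
lemma two_mul_card_dyadicSurvivors (Bad : ℕ → ℕ → Prop) (m : ℕ) :
    2 * #(dyadicSurvivors Bad m) = #(dyadicSurvivors Bad (m + 1)) +
      #{b ∈ dyadicChildren (dyadicSurvivors Bad m) | Bad (m + 1) b} := by
  rw [← card_dyadicChildren, dyadicSurvivors, add_comm, card_filter_add_card_filter_not]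

open Classical in
lemma two_mul_card_dyadicSurvivors_le (hBad : ∀ m b, Bad m b → A m b ∨ E m b) (m : ℕ) :
    2 * #(dyadicSurvivors Bad m) ≤ #(dyadicSurvivors Bad (m + 1)) +
      #{b ∈ dyadicChildren (dyadicSurvivors Bad m) | A (m + 1) b} +
      #{b ∈ dyadicChildren (dyadicSurvivors Bad m) | E (m + 1) b} := by
  rw [two_mul_card_dyadicSurvivors, add_assoc]
  gcongr
  refine (card_le_card ?_).trans (card_union_le _ _)
  rw [← filter_or]
  exact monotone_filter_right _ fun b _ ↦ hBad (m + 1) b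

lemma card_dyadicSurvivors_eq_two_pow {n : ℕ} (h : ∀ m ≤ n, ∀ b, ¬ Bad m b) :
    #(dyadicSurvivors Bad n) = 2 ^ n := by
  induction n with
  | zero => simp [dyadicSurvivors, h 0 le_rfl]
  | succ n ih =>
    have hn := ih fun m hm ↦ h m (hm.trans n.le_succ)
    have hchildren : dyadicSurvivors Bad (n + 1) = dyadicChildren (dyadicSurvivors Bad n) := by
      ext b
      rw [mem_dyadicSurvivors_succ, mem_dyadicChildren]
      exact and_iff_left (h (n + 1) le_rfl b)
    rw [hchildren, card_dyadicChildren, hn, pow_succ']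

lemma exists_forall_mem_dyadicIcc_not_bad (h : ∀ m, (dyadicSurvivors Bad m).Nonempty) :
    ∃ θ : ℝ, ∀ m, ∃ b, θ ∈ dyadicIcc m b ∧ ¬ Bad m b := by
  let K : ℕ → Set ℝ := fun m ↦ ⋃ b ∈ dyadicSurvivors Bad m, dyadicIcc m b
  have hcompact : ∀ m, IsCompact (K m) := fun m ↦
    (dyadicSurvivors Bad m).isCompact_biUnion fun b _ ↦ isCompact_dyadicIcc m b
  have hanti : ∀ m, K (m + 1) ⊆ K m := fun m ↦ Set.iUnion₂_subset fun b hb ↦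
    (dyadicIcc_subset_dyadicIcc_div m 1 b).trans
      (Set.subset_biUnion_of_mem (u := dyadicIcc m) (div_two_pow_mem_dyadicSurvivors hb))
  have hnonempty : ∀ m, (K m).Nonempty := fun m ↦
    let ⟨b, hb⟩ := h m
    (dyadicIcc_nonempty m b).mono (Set.subset_biUnion_of_mem (u := dyadicIcc m) hb)
  obtain ⟨θ, hθ⟩ := IsCompact.nonempty_iInter_of_sequence_nonempty_isCompact_isClosed K hanti
    hnonempty (hcompact 0) fun m ↦ (hcompact m).isClosed
  refine ⟨θ, fun m ↦ ?_⟩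
  obtain ⟨b, hb, hθb⟩ := Set.mem_iUnion₂.1 (Set.mem_iInter.1 hθ m)
  exact ⟨b, hθb, not_bad_of_mem_dyadicSurvivors hb⟩

end Survivors

/-- A family `B n` of dyadic intervals of level `n + dyadicDelay n`, for each `n`, is delay-sparse
if every dyadic interval of level `n` contains at most `12 * (n + 1)` members of `B n`. -/
def IsDelaySparse (B : ℕ → ℕ → Prop) : Prop :=
  ∀ (n a : ℕ) (T : Finset ℕ), (∀ b ∈ T, B n b ∧ b / 2 ^ dyadicDelay n = a) → #T ≤ 12 * (n + 1)

/-- The delayed family `B`, from index `n₀` on, as a family of dyadic intervals indexed by their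
level: its members of level `m` are those of `B n`, where `n + dyadicDelay n = m`. -/
def Delayed (B : ℕ → ℕ → Prop) (n₀ m b : ℕ) : Prop :=
  ∃ n, n₀ ≤ n ∧ n + dyadicDelay n = m ∧ B n b

section Avoidance

variable {B E : ℕ → ℕ → Prop} {n₀ : ℕ}

lemma lt_of_delayed {m b : ℕ} (h : Delayed B n₀ m b) : n₀ < m := by
  obtain ⟨n, hn, hnm, -⟩ := h
  have := dyadicDelay_pos n
  omega

lemma delayed_add_dyadicDelay_iff {n b : ℕ} (hn : n₀ ≤ n) :
    Delayed B n₀ (n + dyadicDelay n) b ↔ B n b := by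
  refine ⟨?_, fun h ↦ ⟨n, hn, rfl, h⟩⟩
  rintro ⟨n', -, hnm, hb⟩
  rwa [← injective_add_dyadicDelay hnm]

open Classical in
lemma card_filter_dyadicChildren_le_of_isDelaySparse (hB : IsDelaySparse B) {Bad : ℕ → ℕ → Prop}
    {n m : ℕ} (hnm : n + dyadicDelay n = m + 1) :
    #{b ∈ dyadicChildren (dyadicSurvivors Bad m) | B n b} ≤
      12 * (n + 1) * #(dyadicSurvivors Bad n) := by
  refine card_le_mul_card_image_of_maps_to (f := fun b ↦ b / 2 ^ dyadicDelay n) ?_ _ ?_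
  · intro b hb
    have hL : 1 + (dyadicDelay n - 1) = dyadicDelay n := by
      have := dyadicDelay_pos n
      omega
    have hmem := mem_dyadicChildren.1 (mem_filter.1 hb).1
    rw [show m = n + (dyadicDelay n - 1) by omega] at hmem
    simpa only [Nat.div_div_eq_div_mul, ← pow_succ', add_comm _ 1, hL] using
      div_two_pow_mem_dyadicSurvivors hmem
  · exact fun a _ ↦ hB n a _ fun b hb ↦
      ⟨(mem_filter.1 (mem_filter.1 hb).1).2, (mem_filter.1 hb).2⟩

open Classical in
lemma card_filter_delayed_eq_zero_or_le (hB : IsDelaySparse B) {Bad : ℕ → ℕ → Prop} (m : ℕ) :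
    #{b ∈ dyadicChildren (dyadicSurvivors Bad m) | Delayed B n₀ (m + 1) b} = 0 ∨
      ∃ n, n₀ ≤ n ∧ n + dyadicDelay n = m + 1 ∧
        #{b ∈ dyadicChildren (dyadicSurvivors Bad m) | Delayed B n₀ (m + 1) b} ≤
          12 * (n + 1) * #(dyadicSurvivors Bad n) := by
  by_cases hex : ∃ n, n₀ ≤ n ∧ n + dyadicDelay n = m + 1
  · obtain ⟨n, hn, hnm⟩ := hex
    refine Or.inr ⟨n, hn, hnm, ?_⟩
    simp only [← hnm, delayed_add_dyadicDelay_iff hn]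
    exact card_filter_dyadicChildren_le_of_isDelaySparse hB hnm
  · refine Or.inl (card_eq_zero.2 (filter_eq_empty_iff.2 fun b _ ↦ ?_))
    rintro ⟨n, hn, hnm, -⟩
    exact hex ⟨n, hn, hnm⟩

open Classical in
lemma dyadicSurvivors_nonempty (hn₀ : 2048 ≤ n₀) (hB : IsDelaySparse B) {x : ℝ}
    (hE : ∀ m (T : Finset ℕ), (∀ b ∈ T, E m b) → (#T : ℝ) ≤ 3 * x ^ m)
    (hE₀ : ∀ m ≤ n₀, ∀ b, ¬ E m b)
    (hx : ∀ m, n₀ ≤ m → 6 * dyadicDelay (m + 1) * x ^ (m + 1) ≤ growthRate n₀ ^ m) (m : ℕ) :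
    (dyadicSurvivors (fun m b ↦ Delayed B n₀ m b ∨ E m b) m).Nonempty := by
  set S := dyadicSurvivors fun m b ↦ Delayed B n₀ m b ∨ E m b
  have hfull : ∀ m ≤ n₀, #(S m) = 2 ^ m := fun m hm ↦
    card_dyadicSurvivors_eq_two_pow fun k hk b hb ↦ hb.elim
      (fun h ↦ ((hk.trans hm).trans_lt (lt_of_delayed h)).false) (hE₀ k (hk.trans hm) b)
  have hloss : ∀ m, n₀ ≤ m → 2 * dyadicDelay (m + 1) *
      (#{b ∈ dyadicChildren (S m) | E (m + 1) b} : ℝ) ≤ growthRate n₀ ^ m := by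
    intro m hm
    have hcard := mul_le_mul_of_nonneg_left (hE (m + 1) {b ∈ dyadicChildren (S m) | E (m + 1) b}
      fun b hb ↦ (mem_filter.1 hb).2) (Nat.cast_nonneg (dyadicDelay (m + 1)))
    linarith [hx m hm]
  have hgrow := growthRate_mul_le_of_delayed_loss (N := fun m ↦ #(S m))
    (b := fun m ↦ #{b ∈ dyadicChildren (S m) | Delayed B n₀ (m + 1) b})
    (e := fun m ↦ #{b ∈ dyadicChildren (S m) | E (m + 1) b}) hn₀
    (fun _ ↦ Nat.cast_nonneg _) (by simp [hfull n₀ le_rfl])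
    (fun m _ ↦ by exact_mod_cast two_mul_card_dyadicSurvivors_le (fun _ _ ↦ id) m)
    (fun m ↦ by exact_mod_cast card_filter_delayed_eq_zero_or_le hB m) hloss
  refine card_pos.1 ?_
  rcases le_total m n₀ with hm | hm
  · rw [hfull m hm]
    positivity
  · have hpos : (0 : ℝ) < growthRate n₀ ^ (m - n₀) * #(S n₀) := by
      have := one_le_growthRate n₀
      rw [hfull n₀ le_rfl]
      positivity
    exact_mod_cast hpos.trans_le (growthRate_pow_mul_le (N := fun m ↦ #(S m))
      (fun _ ↦ Nat.cast_nonneg _) hm fun k hk _ ↦ hgrow k hk)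

lemma exists_forall_mem_dyadicIcc_not_delayed_not_bad (hn₀ : 2048 ≤ n₀) (hB : IsDelaySparse B)
    {x : ℝ} (hE : ∀ m (T : Finset ℕ), (∀ b ∈ T, E m b) → (#T : ℝ) ≤ 3 * x ^ m)
    (hE₀ : ∀ m ≤ n₀, ∀ b, ¬ E m b)
    (hx : ∀ m, n₀ ≤ m → 6 * dyadicDelay (m + 1) * x ^ (m + 1) ≤ growthRate n₀ ^ m) :
    ∃ θ : ℝ, ∀ m, ∃ b, θ ∈ dyadicIcc m b ∧ ¬ Delayed B n₀ m b ∧ ¬ E m b := by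
  simpa only [not_or] using
    exists_forall_mem_dyadicIcc_not_bad (dyadicSurvivors_nonempty hn₀ hB hE hE₀ hx)

end Avoidance

/-! ### Covers by sets of dyadic diameter -/

section HausdorffDimension

lemma exists_le_inv_two_pow_rpow_le {d ε : ℝ≥0∞} {s : ℝ} (hs : 0 < s) (hd : d ≤ 1) (hε : 0 < ε) :
    ∃ n : ℕ, d ≤ 2⁻¹ ^ n ∧ ((2⁻¹ : ℝ≥0∞) ^ n) ^ s ≤ 2 ^ s * d ^ s + ε := by
  have tendsto_rpow : Tendsto (fun n : ℕ ↦ ((2⁻¹ : ℝ≥0∞) ^ n) ^ s) atTop (𝓝 0) := by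
    have := (ENNReal.continuous_rpow_const (y := s)).continuousAt.tendsto.comp
      (ENNReal.tendsto_pow_atTop_nhds_zero_of_lt_one ENNReal.one_half_lt_one)
    rwa [ENNReal.zero_rpow_of_pos hs] at this
  have hex : ∃ n : ℕ, ((2⁻¹ : ℝ≥0∞) ^ n) ^ s ≤ 2 ^ s * d ^ s + ε :=
    ((tendsto_rpow.eventually_le_const hε).mono fun _ h ↦ h.trans le_add_self).exists
  classical
  refine ⟨Nat.find hex, ?_, Nat.find_spec hex⟩
  cases hn : Nat.find hex with
  | zero => simpa using hd
  | succ n =>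
    have hlt : 2 * d < 2⁻¹ ^ n := by
      by_contra! hle
      refine Nat.find_min hex (by omega : n < Nat.find hex) ?_
      rw [← ENNReal.mul_rpow_of_nonneg _ _ hs.le]
      exact (ENNReal.rpow_le_rpow hle hs.le).trans le_self_add
    rw [pow_succ, ← div_eq_mul_inv, ENNReal.le_div_iff_mul_le (by simp) (by simp), mul_comm]
    exact hlt.le

variable {X : Type*} [EMetricSpace X]

lemma exists_ediam_le_one_tsum_lt_of_hausdorffMeasure_eq_zero [MeasurableSpace X] [BorelSpace X]
    {s : ℝ} (hs : 0 < s) {K : Set X} (hK : μH[s] K = 0) {δ : ℝ≥0∞} (hδ : 0 < δ) :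
    ∃ U : ℕ → Set X, K ⊆ ⋃ i, U i ∧ (∀ i, Metric.ediam (U i) ≤ 1) ∧
      ∑' i, Metric.ediam (U i) ^ s < δ := by
  have hle := le_iSup₂ (f := fun (r : ℝ≥0∞) (_ : 0 < r) ↦ ⨅ (t : ℕ → Set X) (_ : K ⊆ ⋃ n, t n)
    (_ : ∀ n, Metric.ediam (t n) ≤ r), ∑' n, ⨆ _ : (t n).Nonempty, Metric.ediam (t n) ^ s) 1 one_pos
  rw [← Measure.hausdorffMeasure_apply, hK] at hle
  obtain ⟨U, hU⟩ := iInf_lt_iff.1 (hle.trans_lt hδ)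
  obtain ⟨hKU, hU⟩ := iInf_lt_iff.1 hU
  obtain ⟨hdiam, hsum⟩ := iInf_lt_iff.1 hU
  refine ⟨U, hKU, hdiam, (ENNReal.tsum_le_tsum fun i ↦ ?_).trans_lt hsum⟩
  rcases (U i).eq_empty_or_nonempty with hempty | hne
  · simp [hempty, ENNReal.zero_rpow_of_pos hs]
  · exact le_iSup (fun _ : (U i).Nonempty ↦ Metric.ediam (U i) ^ s) hne

lemma exists_ediam_le_inv_two_pow_tsum_lt_of_hausdorffMeasure_eq_zero [MeasurableSpace X]
    [BorelSpace X] {s : ℝ} (hs : 0 < s) {K : Set X} (hK : μH[s] K = 0) {δ : ℝ≥0∞} (hδ : 0 < δ) :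
    ∃ (U : ℕ → Set X) (ν : ℕ → ℕ), K ⊆ ⋃ i, U i ∧ (∀ i, Metric.ediam (U i) ≤ 2⁻¹ ^ ν i) ∧
      ∑' i, ((2⁻¹ : ℝ≥0∞) ^ ν i) ^ s < δ := by
  have hδ2 : 0 < δ / 2 := ENNReal.half_pos hδ.ne'
  have htop : (2 : ℝ≥0∞) ^ s ≠ ∞ := ENNReal.rpow_ne_top_of_nonneg hs.le (by simp)
  obtain ⟨U, hKU, hdiam, hsum⟩ := exists_ediam_le_one_tsum_lt_of_hausdorffMeasure_eq_zero hs hK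
    (ENNReal.div_pos hδ2.ne' htop)
  obtain ⟨ε, hε, hεsum⟩ := ENNReal.exists_pos_sum_of_countable' hδ2.ne' ℕ
  choose ν hν hνs using fun i ↦ exists_le_inv_two_pow_rpow_le hs (hdiam i) (hε i)
  refine ⟨U, ν, hKU, hν, ?_⟩
  calc ∑' i, ((2⁻¹ : ℝ≥0∞) ^ ν i) ^ s
      ≤ ∑' i, (2 ^ s * Metric.ediam (U i) ^ s + ε i) := ENNReal.tsum_le_tsum hνs
    _ = 2 ^ s * ∑' i, Metric.ediam (U i) ^ s + ∑' i, ε i := by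
        rw [ENNReal.tsum_add, ENNReal.tsum_mul_left]
    _ < δ / 2 + δ / 2 := by
        refine ENNReal.add_lt_add ?_ hεsum
        rw [mul_comm]
        exact ENNReal.mul_lt_of_lt_div hsum
    _ = δ := ENNReal.add_halves δ

lemma card_le_of_tsum_inv_two_pow_rpow_le_one {ι : Type*} {ν : ι → ℕ} {s : ℝ}
    (h : ∑' i, ((2⁻¹ : ℝ≥0∞) ^ ν i) ^ s ≤ 1) {m : ℕ} {F : Finset ι} (hF : ∀ i ∈ F, ν i = m) :
    (#F : ℝ) ≤ ((2 : ℝ) ^ s) ^ m := by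
  have hsum : #F * ((2⁻¹ : ℝ≥0∞) ^ m) ^ s ≤ 1 := by
    refine le_trans (le_of_eq ?_) ((ENNReal.sum_le_tsum F).trans h)
    rw [sum_congr rfl fun i hi ↦ by rw [hF i hi], sum_const, nsmul_eq_mul]
  have hreal := ENNReal.toReal_mono ENNReal.one_ne_top hsum
  rw [ENNReal.toReal_mul, ← ENNReal.toReal_rpow] at hreal
  simp only [ENNReal.toReal_natCast, ENNReal.toReal_pow, ENNReal.toReal_inv, ENNReal.toReal_ofNat,
    ENNReal.toReal_one] at hreal
  rw [← Real.rpow_natCast, ← Real.rpow_mul (by norm_num), mul_comm _ s, Real.rpow_mul (by norm_num),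
    Real.rpow_natCast, Real.inv_rpow (by norm_num), inv_pow, ← div_eq_mul_inv,
    div_le_one (by positivity)] at hreal
  exact hreal

-- A cover by sets of diameter at most `2⁻¹ ^ ν i` whose `s`-dimensional sum is below
-- `(2⁻¹ ^ n₀) ^ s ≤ 1` has only indices `ν i > n₀`, and at most `(2 ^ s) ^ m` of them equal `m`.
lemma le_dimH_of_forall_not_subset_iUnion {K : Set X} {s : ℝ≥0} (n₀ : ℕ)
    (hK : ∀ (U : ℕ → Set X) (ν : ℕ → ℕ), (∀ i, Metric.ediam (U i) ≤ 2⁻¹ ^ ν i) → (∀ i, n₀ < ν i) →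
      (∀ m (F : Finset ℕ), (∀ i ∈ F, ν i = m) → (#F : ℝ) ≤ ((2 : ℝ) ^ (s : ℝ)) ^ m) →
      ¬ K ⊆ ⋃ i, U i) : s ≤ dimH K := by
  by_contra! hlt
  have hs : (0 : ℝ) < s := by exact_mod_cast zero_le.trans_lt hlt
  borelize X
  obtain ⟨U, ν, hKU, hdiam, hsum⟩ :=
    exists_ediam_le_inv_two_pow_tsum_lt_of_hausdorffMeasure_eq_zero hs
      (hausdorffMeasure_of_dimH_lt hlt)
      (δ := ((2⁻¹ : ℝ≥0∞) ^ n₀) ^ (s : ℝ))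
      (ENNReal.rpow_pos (ENNReal.pow_pos (by simp) n₀) (ENNReal.pow_ne_top (by simp)))
  have hδ : ((2⁻¹ : ℝ≥0∞) ^ n₀) ^ (s : ℝ) ≤ 1 :=
    ENNReal.rpow_le_one (pow_le_one' ENNReal.one_half_lt_one.le n₀) hs.le
  refine hK U ν hdiam (fun i ↦ ?_)
    (fun m F ↦ card_le_of_tsum_inv_two_pow_rpow_le_one (hsum.le.trans hδ)) hKU
  by_contra! hi
  have hpow : ((2⁻¹ : ℝ≥0∞) ^ n₀) ^ (s : ℝ) ≤ (2⁻¹ ^ ν i) ^ (s : ℝ) :=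
    ENNReal.rpow_le_rpow (pow_le_pow_right_of_le_one' ENNReal.one_half_lt_one.le hi) hs.le
  exact ((hpow.trans (ENNReal.le_tsum i)).trans_lt hsum).false

end HausdorffDimension

lemma card_le_succ_of_forall_le_add {T : Finset ℕ} {d : ℕ} (h : ∀ a ∈ T, ∀ b ∈ T, b ≤ a + d) :
    #T ≤ d + 1 := by
  rcases T.eq_empty_or_nonempty with rfl | hT
  · simp
  · have hsub : T ⊆ Icc (T.min' hT) (T.min' hT + d) := fun b hb ↦
      mem_Icc.2 ⟨T.min'_le b hb, h _ (T.min'_mem hT) b hb⟩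
    have := card_le_card hsub
    rw [Nat.card_Icc] at this
    omega

lemma le_add_of_mem_dyadicIcc {m b b' d : ℕ} {y y' : ℝ} (hy : y ∈ dyadicIcc m b)
    (hy' : y' ∈ dyadicIcc m b') (h : |y' - y| < d / 2 ^ m) : b' ≤ b + d := by
  have hdist : (y' - y) * 2 ^ m < d := (lt_div_iff₀ (by positivity)).1 ((le_abs_self _).trans_lt h)
  have : (b' : ℝ) < b + d + 1 := by
    linarith [(mem_dyadicIcc.1 hy).2, (mem_dyadicIcc.1 hy').1]
  exact Nat.lt_succ_iff.1 (by exact_mod_cast this)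

lemma card_le_three_of_ediam_le {m : ℕ} {V : Set ℝ} (hV : Metric.ediam V ≤ 2⁻¹ ^ m)
    {T : Finset ℕ} (hT : ∀ b ∈ T, (V ∩ dyadicIcc m b).Nonempty) : #T ≤ 3 := by
  refine card_le_succ_of_forall_le_add fun b hb b' hb' ↦ ?_
  obtain ⟨y, hyV, hy⟩ := hT b hb
  obtain ⟨y', hyV', hy'⟩ := hT b' hb'
  have hdist : |y' - y| ≤ 1 / 2 ^ m := by
    have := ENNReal.toReal_mono (by simp) (Metric.edist_le_of_ediam_le hyV' hyV hV)
    simpa [edist_dist, Real.dist_eq] using this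
  refine le_add_of_mem_dyadicIcc hy hy' (hdist.trans_lt ?_)
  gcongr
  norm_num

lemma card_le_three_mul_of_forall_ediam_le {U : ℕ → Set ℝ} {ν : ℕ → ℕ} {x : ℝ} {m : ℕ}
    (hU : ∀ i, Metric.ediam (U i) ≤ 2⁻¹ ^ ν i)
    (hF : ∀ F : Finset ℕ, (∀ i ∈ F, ν i = m) → (#F : ℝ) ≤ x) {T : Finset ℕ}
    (hT : ∀ b ∈ T, ∃ i, ν i = m ∧ (U i ∩ dyadicIcc m b).Nonempty) : (#T : ℝ) ≤ 3 * x := by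
  choose! i hν hi using hT
  have hfiber : #T ≤ 3 * #(T.image i) := card_le_mul_card_image T 3 fun j hj ↦ by
    obtain ⟨b, hb, rfl⟩ := mem_image.1 hj
    refine card_le_three_of_ediam_le (hν b hb ▸ hU (i b)) fun b' hb' ↦ ?_
    rw [← (mem_filter.1 hb').2]
    exact hi b' (mem_filter.1 hb').1
  have himage : (#(T.image i) : ℝ) ≤ x := hF _ (forall_mem_image.2 hν)
  calc (#T : ℝ) ≤ 3 * #(T.image i) := by exact_mod_cast hfiber
    _ ≤ 3 * x := by gcongr

theorem one_le_dimH_setOf_eventually_not {B : ℕ → ℕ → Prop} (hB : IsDelaySparse B) :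
    1 ≤ dimH {θ : ℝ | ∀ᶠ n in atTop, ∃ b, θ ∈ dyadicIcc (n + dyadicDelay n) b ∧ ¬ B n b} := by
  refine ENNReal.le_of_forall_nnreal_lt fun s hs ↦ ?_
  have hx : (2 : ℝ) ^ (s : ℝ) < 2 := by
    have : (s : ℝ) < 1 := by exact_mod_cast hs
    simpa using Real.rpow_lt_rpow_of_exponent_lt one_lt_two this
  obtain ⟨n₀, hgrow, hn₀⟩ :=
    ((eventually_dyadicDelay_mul_pow_le_growthRate_pow (by positivity) hx).and
      (eventually_ge_atTop 2048)).exists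
  refine le_dimH_of_forall_not_subset_iUnion n₀ fun U ν hU hν hF hcover ↦ ?_
  obtain ⟨θ, hθ⟩ := exists_forall_mem_dyadicIcc_not_delayed_not_bad hn₀ hB
    (E := fun m b ↦ ∃ i, ν i = m ∧ (U i ∩ dyadicIcc m b).Nonempty)
    (fun m _ ↦ card_le_three_mul_of_forall_ediam_le hU (hF m))
    (fun m hm b ⟨i, hi, _⟩ ↦ (hν i).not_ge (hi ▸ hm)) hgrow
  have hθ_avoids : ∀ᶠ n in atTop, ∃ b, θ ∈ dyadicIcc (n + dyadicDelay n) b ∧ ¬ B n b := by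
    filter_upwards [eventually_ge_atTop n₀] with n hn
    obtain ⟨b, hb, hBb, -⟩ := hθ (n + dyadicDelay n)
    exact ⟨b, hb, fun h ↦ hBb ((delayed_add_dyadicDelay_iff hn).2 h)⟩
  obtain ⟨i, hi⟩ := Set.mem_iUnion.1 (hcover hθ_avoids)
  obtain ⟨b, hb, -, hEb⟩ := hθ (ν i)
  exact hEb ⟨i, rfl, θ, hi, hb⟩

/-! ### Obstructing rationals -/

lemma div_eq_div_of_abs_sub_lt_of_dvd {M P q q' : ℕ} {r r' : ℤ} (hq : 0 < q) (hq' : 0 < q')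
    (hPq : P ∣ q) (hPq' : P ∣ q') (hqM : q ^ 2 < M * P) (hqM' : q' ^ 2 < M * P)
    (h : |(r / q : ℝ) - r' / q'| < 1 / M) : (r / q : ℝ) = r' / q' := by
  have hM : 0 < M := Nat.pos_of_mul_pos_right ((Nat.zero_le _).trans_lt hqM)
  have hqq' : q * q' < M * P := lt_of_pow_lt_pow_left₀ 2 (Nat.zero_le _) <| by
    rw [mul_pow, sq (M * P)]
    exact Nat.mul_lt_mul'' hqM hqM'
  have hqR : (0 : ℝ) < q := by exact_mod_cast hq
  have hqR' : (0 : ℝ) < q' := by exact_mod_cast hq'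
  have numerator_lt : |r * q' - r' * q| < P := by
    have hsub : (r / q : ℝ) - r' / q' = (r * q' - r' * q) / (q * q') := by
      field_simp
    rw [hsub, abs_div, abs_of_pos (mul_pos hqR hqR'), div_lt_div_iff₀ (by positivity)
      (by positivity), one_mul] at h
    have : |(r * q' - r' * q : ℝ)| * M < P * M :=
      h.trans (by rw [mul_comm (P : ℝ)]; exact_mod_cast hqq')
    exact_mod_cast lt_of_mul_lt_mul_right this (Nat.cast_nonneg M)
  have numerator_dvd : (P : ℤ) ∣ r * q' - r' * q :=
    dvd_sub ((Int.natCast_dvd_natCast.2 hPq').mul_left r)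
      ((Int.natCast_dvd_natCast.2 hPq).mul_left r')
  have numerator_eq := Int.eq_zero_of_abs_lt_dvd numerator_dvd numerator_lt
  rw [div_eq_div_iff hqR.ne' hqR'.ne']
  exact_mod_cast sub_eq_zero.1 numerator_eq

/-- The dyadic interval of level `m` and index `b` comes within `2⁻ᵐ` of a rational number `r / q`
obstructing at scale `n`, that is, with `D k ∣ q` and `q ^ 2 < 2 ^ (n + 1) * D k` for some `k`. For
the `p`-adic problem, `D k = p ^ k`. -/
def NearRational (D : ℕ → ℕ) (n m b : ℕ) : Prop :=
  ∃ (k q : ℕ) (r : ℤ), 0 < q ∧ D k ∣ q ∧ q ^ 2 < 2 ^ (n + 1) * D k ∧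
    ∃ y ∈ dyadicIcc m b, |y - r / q| < 1 / 2 ^ m

section NearRational

variable {D : ℕ → ℕ}

lemma le_of_dvd_of_sq_lt (hD : ∀ k, 2 ^ k ≤ D k) {n k q : ℕ} (hq : 0 < q) (hk : D k ∣ q)
    (hqn : q ^ 2 < 2 ^ (n + 1) * D k) : k ≤ n := by
  have hDq : D k ≤ q := Nat.le_of_dvd hq hk
  have hDn : D k < 2 ^ (n + 1) := by
    refine lt_of_mul_lt_mul_right (lt_of_le_of_lt ?_ hqn) (Nat.zero_le (D k))
    rw [← sq]
    exact Nat.pow_le_pow_left hDq 2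
  exact Nat.lt_succ_iff.1 ((Nat.pow_lt_pow_iff_right one_lt_two).1 ((hD k).trans_lt hDn))

lemma abs_sub_lt_of_floor_mul_eq {x x' : ℝ} {M : ℕ} (hM : 0 < M) (h : ⌊x * M⌋ = ⌊x' * M⌋) :
    |x - x'| < 1 / M := by
  have hMR : (0 : ℝ) < M := by exact_mod_cast hM
  have := Int.abs_sub_lt_one_of_floor_eq_floor h
  rwa [← sub_mul, abs_mul, abs_of_pos hMR, ← lt_div_iff₀ hMR] at this

lemma floor_mem_Icc_of_mem_dyadicIcc {n m a : ℕ} (hnm : n < m) {x y : ℝ} (hy : y ∈ dyadicIcc n a)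
    (hxy : |y - x| < 1 / 2 ^ m) :
    ⌊x * (2 ^ (n + 1) : ℕ)⌋ ∈ Finset.Icc (2 * a - 1 : ℤ) (2 * a + 2) := by
  have hscale : |y - x| * 2 ^ (n + 1) < 1 := by
    rw [← lt_div_iff₀ (by positivity)]
    refine hxy.trans_le (one_div_le_one_div_of_le (by positivity) ?_)
    exact pow_le_pow_right₀ one_le_two hnm
  have hpow : (0 : ℝ) ≤ 2 ^ (n + 1) := by positivity
  have hleft := mul_le_mul_of_nonneg_right (le_abs_self (y - x)) hpow
  have hright := mul_le_mul_of_nonneg_right (neg_le_abs (y - x)) hpow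
  have ⟨hlo, hhi⟩ := mem_dyadicIcc.1 hy
  rw [pow_succ] at hscale hleft hright
  rw [Finset.mem_Icc, Int.le_floor, ← Int.lt_add_one_iff, Int.floor_lt]
  push_cast
  rw [pow_succ]
  constructor <;> linarith

lemma le_add_two_of_abs_sub_lt {m b b' : ℕ} {x y y' : ℝ} (hy : y ∈ dyadicIcc m b)
    (hy' : y' ∈ dyadicIcc m b') (hyx : |y - x| < 1 / 2 ^ m) (hyx' : |y' - x| < 1 / 2 ^ m) :
    b' ≤ b + 2 := by
  refine le_add_of_mem_dyadicIcc hy hy' ?_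
  calc |y' - y| ≤ |y' - x| + |x - y| := abs_sub_le y' x y
    _ < 1 / 2 ^ m + 1 / 2 ^ m := add_lt_add hyx' (abs_sub_comm x y ▸ hyx)
    _ = (2 : ℕ) / 2 ^ m := by
        push_cast
        ring

lemma card_le_of_forall_nearRational (hD : ∀ k, 2 ^ k ≤ D k) {n L a : ℕ} (hL : 0 < L)
    {T : Finset ℕ} (hT : ∀ b ∈ T, NearRational D n (n + L) b ∧ b / 2 ^ L = a) :
    #T ≤ 12 * (n + 1) := by
  have hnear : ∀ b ∈ T, NearRational D n (n + L) b := fun b hb ↦ (hT b hb).1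
  choose! k q r hq hk hqn y hy hyr using hnear
  let key : ℕ → ℕ × ℤ := fun b ↦ (k b, ⌊(r b / q b : ℝ) * (2 ^ (n + 1) : ℕ)⌋)
  have key_mem : ∀ b ∈ T, key b ∈ range (n + 1) ×ˢ Finset.Icc (2 * a - 1 : ℤ) (2 * a + 2) := by
    intro b hb
    have hya : y b ∈ dyadicIcc n a := (hT b hb).2 ▸ dyadicIcc_subset_dyadicIcc_div n L b (hy b hb)
    have hkn : k b ≤ n := le_of_dvd_of_sq_lt hD (hq b hb) (hk b hb) (hqn b hb)
    exact mem_product.2 ⟨mem_range_succ_iff.2 hkn,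
      floor_mem_Icc_of_mem_dyadicIcc (by omega) hya (hyr b hb)⟩
  have eq_of_key_eq : ∀ b ∈ T, ∀ b' ∈ T, key b' = key b → (r b' / q b' : ℝ) = r b / q b := by
    intro b hb b' hb' hkey
    obtain ⟨hkk, hfloor⟩ := Prod.mk.inj hkey
    exact div_eq_div_of_abs_sub_lt_of_dvd (hq b' hb') (hq b hb) (hkk ▸ hk b' hb') (hk b hb)
      (hkk ▸ hqn b' hb') (hqn b hb) (abs_sub_lt_of_floor_mul_eq (by positivity) hfloor)
  have card_fiber : ∀ c, #{b ∈ T | key b = c} ≤ 3 := by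
    refine fun c ↦ card_le_succ_of_forall_le_add fun b hb b' hb' ↦ ?_
    obtain ⟨⟨hb, hbc⟩, hb', hbc'⟩ := mem_filter.1 hb, mem_filter.1 hb'
    exact le_add_two_of_abs_sub_lt (hy b hb) (hy b' hb') (hyr b hb)
      (eq_of_key_eq b hb b' hb' (hbc'.trans hbc.symm) ▸ hyr b' hb')
  calc #T ≤ 3 * #(range (n + 1) ×ˢ Finset.Icc (2 * a - 1 : ℤ) (2 * a + 2)) :=
        card_le_mul_card_image_of_maps_to key_mem 3 fun c _ ↦ card_fiber c
    _ = 12 * (n + 1) := by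
        rw [card_product, card_range, Int.card_Icc,
          show (2 * a + 2 + 1 - (2 * a - 1) : ℤ).toNat = 4 by omega]
        ring

lemma isDelaySparse_nearRational (hD : ∀ k, 2 ^ k ≤ D k) :
    IsDelaySparse fun n ↦ NearRational D n (n + dyadicDelay n) := fun n _ _ ↦
  card_le_of_forall_nearRational hD (dyadicDelay_pos n)

lemma one_div_two_pow_le_abs_sub_of_not_nearRational {n m b k q : ℕ} {r : ℤ} {θ : ℝ}
    (hθ : θ ∈ dyadicIcc m b) (hb : ¬ NearRational D n m b) (hq : 0 < q) (hk : D k ∣ q)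
    (hqn : q ^ 2 < 2 ^ (n + 1) * D k) : 1 / 2 ^ m ≤ |θ - r / q| := by
  by_contra! hlt
  exact hb ⟨k, q, r, hq, hk, hqn, θ, hθ, hlt⟩

end NearRational

lemma div_three_le_log_of_two_pow_le_sq {n q : ℕ} (h : 2 ^ n ≤ q ^ 2) :
    (n : ℝ) / 3 ≤ Real.log q := by
  have hlog : Real.log (2 ^ n) ≤ Real.log (q ^ 2) :=
    Real.log_le_log (by positivity) (by exact_mod_cast h)
  rw [Real.log_pow, Real.log_pow] at hlog
  push_cast at hlog
  nlinarith [Real.log_two_gt_d9, (Nat.cast_nonneg n : (0 : ℝ) ≤ n)]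

lemma natLog_div_four_le_log_div_three {n : ℕ} (hn : 9 ≤ n) :
    (Nat.log 2 n : ℝ) / 4 ≤ Real.log (n / 3) := by
  have hnR : (9 : ℝ) ≤ n := by exact_mod_cast hn
  have hpow : Real.log (2 ^ Nat.log 2 n) ≤ Real.log n :=
    Real.log_le_log (by positivity) (by exact_mod_cast Nat.pow_log_le_self 2 (by omega))
  have hsq : Real.log n ≤ Real.log ((n / 3) ^ 2) :=
    Real.log_le_log (by positivity) (by nlinarith)
  rw [Real.log_pow] at hpow hsq
  push_cast at hsq
  nlinarith [Real.log_two_gt_d9, (Nat.cast_nonneg (Nat.log 2 n) : (0 : ℝ) ≤ Nat.log 2 n)]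

lemma natCast_mul_natLog_le_log_mul_log_log {n q : ℕ} (hn : 9 ≤ n) (h : 2 ^ n ≤ q ^ 2) :
    (n : ℝ) * Nat.log 2 n ≤ 12 * (Real.log q * Real.log (Real.log q)) := by
  have hlog := div_three_le_log_of_two_pow_le_sq h
  have hn0 : (0 : ℝ) < n / 3 := by positivity
  have hloglog : (Nat.log 2 n : ℝ) / 4 ≤ Real.log (Real.log q) :=
    (natLog_div_four_le_log_div_three hn).trans (Real.log_le_log hn0 hlog)
  have := mul_le_mul hlog hloglog (by positivity) (hn0.le.trans hlog)
  linarith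

lemma two_pow_add_dyadicDelay_le {n d q : ℕ} (hn : 9 ≤ n) (hd : 0 < d) (h : 2 ^ n * d ≤ q ^ 2) :
    (2 : ℝ) ^ (n + dyadicDelay n) ≤
      24576 * (q * Real.log q * Real.log (Real.log q) * (d : ℝ)⁻¹ * q) := by
  have hlog := natCast_mul_natLog_le_log_mul_log_log hn ((Nat.le_mul_of_pos_right _ hd).trans h)
  have hdelay : (2 : ℝ) ^ dyadicDelay n ≤ n * Nat.log 2 n * 2048 := by
    exact_mod_cast two_pow_dyadicDelay_le (by omega)
  have hpow : (2 : ℝ) ^ n ≤ q ^ 2 * (d : ℝ)⁻¹ := by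
    rw [← div_eq_mul_inv, le_div_iff₀ (by exact_mod_cast hd)]
    exact_mod_cast h
  calc (2 : ℝ) ^ (n + dyadicDelay n) = 2 ^ n * 2 ^ dyadicDelay n := pow_add _ _ _
    _ ≤ q ^ 2 * (d : ℝ)⁻¹ * (12 * (Real.log q * Real.log (Real.log q)) * 2048) := by
        gcongr
        linarith
    _ = _ := by ring

lemma nint_mul_of_pos {x : ℝ} (hx : 0 < x) (θ : ℝ) :
    nint (x * θ) = x * |θ - round (x * θ) / x| := by
  rw [nint, ← abs_of_pos hx, ← abs_mul, abs_of_pos hx, mul_sub, mul_div_cancel₀ _ hx.ne']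

lemma le_sq_div {d q : ℕ} (hd : 0 < d) (hdq : d ≤ q) : q ≤ q ^ 2 / d := by
  rw [Nat.le_div_iff_mul_le hd, sq]
  exact Nat.mul_le_mul_left q hdq

lemma two_pow_log_sq_div_mul_le {d q : ℕ} (hd : 0 < d) (hdq : d ≤ q) :
    2 ^ Nat.log 2 (q ^ 2 / d) * d ≤ q ^ 2 :=
  (Nat.le_div_iff_mul_le hd).1
    (Nat.pow_log_le_self 2 ((hd.trans_le hdq).trans_le (le_sq_div hd hdq)).ne')

lemma sq_lt_two_pow_log_sq_div_mul {d : ℕ} (hd : 0 < d) (q : ℕ) :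
    q ^ 2 < 2 ^ (Nat.log 2 (q ^ 2 / d) + 1) * d :=
  (Nat.div_lt_iff_lt_mul hd).1 (Nat.lt_pow_succ_log_self one_lt_two _)

lemma eventually_le_mul_nint {D v : ℕ → ℕ} (hD : ∀ k, 2 ^ k ≤ D k) (hv : ∀ q, D (v q) ∣ q) {θ : ℝ}
    (hθ : ∀ᶠ n in atTop, ∃ b, θ ∈ dyadicIcc (n + dyadicDelay n) b ∧
      ¬ NearRational D n (n + dyadicDelay n) b) :
    ∀ᶠ q : ℕ in atTop, 1 / 24576 ≤ (q : ℝ) * Real.log q * Real.log (Real.log q) *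
      (D (v q) : ℝ)⁻¹ * nint (q * θ) := by
  have hDpos : ∀ q, 0 < D (v q) := fun q ↦ (Nat.two_pow_pos _).trans_le (hD _)
  have tendsto_scale : Tendsto (fun q ↦ Nat.log 2 (q ^ 2 / D (v q))) atTop atTop :=
    tendsto_atTop.2 fun N ↦ (eventually_ge_atTop (2 ^ N)).mono fun q hq ↦
      Nat.le_log_of_pow_le one_lt_two <| hq.trans <| le_sq_div (hDpos q) <|
        Nat.le_of_dvd ((Nat.two_pow_pos N).trans_le hq) (hv q)
  filter_upwards [tendsto_scale.eventually (hθ.and (eventually_ge_atTop 9)),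
    eventually_gt_atTop 0] with q ⟨⟨b, hb, hfar⟩, hn⟩ hq
  set n := Nat.log 2 (q ^ 2 / D (v q))
  have hdist : 1 / 2 ^ (n + dyadicDelay n) ≤ |θ - round (q * θ) / q| :=
    one_div_two_pow_le_abs_sub_of_not_nearRational hb hfar hq (hv q)
      (sq_lt_two_pow_log_sq_div_mul (hDpos q) q)
  have hpow := two_pow_add_dyadicDelay_le hn (hDpos q)
    (two_pow_log_sq_div_mul_le (hDpos q) (Nat.le_of_dvd hq (hv q)))
  have hweight : 0 ≤ (q : ℝ) * Real.log q * Real.log (Real.log q) * (D (v q) : ℝ)⁻¹ * q := by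
    have : (0 : ℝ) < 2 ^ (n + dyadicDelay n) := by positivity
    linarith
  rw [nint_mul_of_pos (by exact_mod_cast hq), ← mul_assoc]
  refine le_trans ?_ (mul_le_mul_of_nonneg_left hdist hweight)
  rw [mul_one_div, le_div_iff₀ (by positivity)]
  linarith

theorem stmt4_general (D v : ℕ → ℕ) (hD : ∀ k, 2 ^ k ≤ D k) (hv : ∀ q, D (v q) ∣ q) :
    dimH {θ : ℝ | ∃ c : ℝ, 0 < c ∧ ∀ᶠ q : ℕ in atTop,
      c ≤ (q : ℝ) * Real.log q * Real.log (Real.log q) *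
            (D (v q) : ℝ)⁻¹ * nint (q * θ)} = 1 := by
  refine le_antisymm ((dimH_mono (Set.subset_univ _)).trans_eq Real.dimH_univ) ?_
  refine (one_le_dimH_setOf_eventually_not (isDelaySparse_nearRational hD)).trans (dimH_mono ?_)
  exact fun θ hθ ↦ ⟨1 / 24576, by norm_num, eventually_le_mul_nint hD hv hθ⟩

/-- Badziahin–Velani theorem for the mixed (p-adic) Littlewood conjecture. -/
theorem stmt4 (p : ℕ) (hp : p.Prime) :
    dimH {θ : ℝ | ∃ c : ℝ, 0 < c ∧ ∀ᶠ q : ℕ in atTop,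
      c ≤ (q : ℝ) * Real.log q * Real.log (Real.log q) *
            (p : ℝ) ^ (-(padicValNat p q : ℤ)) * nint (q * θ)} = 1 := by
  simpa [zpow_neg] using stmt4_general (p ^ ·) (padicValNat p) (Nat.pow_le_pow_left hp.two_le)
    fun _ ↦ pow_padicValNat_dvd
end
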